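/- There exists a constant C > 0, depending only on Ω, μ, δ₀, κ⁺ and κ⁻ (in particular independent of δ ∈ (0, δ₀) and of ε ∈ (0, δ/2)), such that sup_{x ∈ Ω^μ} |∇u_ε(x)| ≤ C ‖φ‖_{L∞(∂Ω)}. -/

import Mathlib

open Set MeasureTheory

/-- Partial derivative in direction `i` of a function on `ℝ²`. -/
noncomputable def pd (i : Fin 2) (f : EuclideanSpace ℝ (Fin 2) → ℝ)
    (x : EuclideanSpace ℝ (Fin 2)) : ℝ :=
  fderiv ℝ f x (EuclideanSpace.single i 1)

/-- The center `(0, -2-2δ)` of the lower disk `B⁻`. -/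
noncomputable def ctr (δ : ℝ) : EuclideanSpace ℝ (Fin 2) :=
  (WithLp.equiv 2 (Fin 2 → ℝ)).symm ![0, -2 - 2 * δ]

/-- The upper unit disk `B⁺`, centered at the origin. -/
noncomputable def Bp : Set (EuclideanSpace ℝ (Fin 2)) := Metric.ball 0 1

/-- The lower unit disk `B⁻`, centered at `(0, -2-2δ)`. -/
noncomputable def Bm (δ : ℝ) : Set (EuclideanSpace ℝ (Fin 2)) := Metric.ball (ctr δ) 1

open Classical in
/-- The conductivity: `κ⁺` on `B⁺`, `κ⁻` on `B⁻`, and `1` elsewhere. -/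
noncomputable def aFun (δ κp κm : ℝ) (x : EuclideanSpace ℝ (Fin 2)) : ℝ :=
  if x ∈ Bp then κp else if x ∈ Bm δ then κm else 1

/-- `Ω^σ = {x ∈ Ω : dist(x, ∂Ω) ≥ σ}`. -/
noncomputable def innerReg (Ω : Set (EuclideanSpace ℝ (Fin 2))) (σ : ℝ) :
    Set (EuclideanSpace ℝ (Fin 2)) :=
  {x ∈ Ω | σ ≤ Metric.infDist x (frontier Ω)}

/-- `Ω` has smooth boundary: it is the sublevel set of a smooth function with
nonvanishing gradient on the boundary. -/
def SmoothBoundary (Ω : Set (EuclideanSpace ℝ (Fin 2))) : Prop :=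
  ∃ f : EuclideanSpace ℝ (Fin 2) → ℝ, ContDiff ℝ (⊤ : ℕ∞) f ∧ Ω = {x | f x < 0} ∧
    ∀ x ∈ frontier Ω, fderiv ℝ f x ≠ 0

/-- `‖φ‖_{L^∞(∂Ω)}`. -/
noncomputable def bdryNorm (Ω : Set (EuclideanSpace ℝ (Fin 2))) (φ : EuclideanSpace ℝ (Fin 2) → ℝ) : ℝ :=
  sSup ((fun y => |φ y|) '' frontier Ω)

/-!
Let `T` be a vector field with `T · ∇a = 0` which is nearly conformal Killing. The derivative
`q = T · ∇u` and the conjugate flux `v = a (T^⊥ · ∇u)` then satisfy a Beltrami-type inequality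
`|∇q|² + |∇v|² ≤ K Jac(q, v) + K₁ H`, where `H` is `|∇u|²` times the squared conformal Killing
defect of `T`. Green's formula and Wirtinger's inequality on circles turn it into a differential
inequality for the energy on disks, whose decay bounds `q` and `v`, and hence `∇u`, at the center.

Near one disk the rotation field of that disk has no defect. In the gap, `T` interpolates between
the two rotation fields: it is the rotation about `0` minus `2w` times the rotation about the
midpoint. Its defect is integrable uniformly in the width of the gap, at the price of a term
`C R^(2/3) sup |∇u|²` on balls of radius `R`. This term is absorbed at a maximum of
`(s - dist z x)² |∇u(z)|²`. Finally `|u|` is bounded by its boundary values through the maximum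
principle.
-/

open scoped Real Topology ContDiff

local notation "ℝ²" => EuclideanSpace ℝ (Fin 2)

/-! ### One-dimensional inequalities -/

lemma norm_fourierCoeffOn_le_of_hasDerivAt {a b : ℝ} (hab : a < b) {f f' : ℝ → ℂ} {n : ℤ}
    (hn : n ≠ 0) (hf : ∀ x ∈ uIcc a b, HasDerivAt f (f' x) x)
    (hf' : IntervalIntegrable f' volume a b) (hfab : f a = f b) :
    ‖fourierCoeffOn hab f n‖ ≤ (b - a) / (2 * π) * ‖fourierCoeffOn hab f' n‖ := by
  have hab' : 0 < b - a := sub_pos.2 hab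
  have hn1 : (1 : ℝ) ≤ |(n : ℝ)| := by exact_mod_cast Int.one_le_abs hn
  have hnorm : ‖(b : ℂ) - a‖ = b - a := by
    rw [← Complex.ofReal_sub, Complex.norm_real, Real.norm_of_nonneg hab'.le]
  rw [fourierCoeffOn_of_hasDerivAt hab hn hf hf', hfab, sub_self, mul_zero, zero_sub]
  simp only [norm_mul, norm_div, norm_neg, norm_one, Complex.norm_ofNat, Complex.norm_real,
    Complex.norm_I, Complex.norm_intCast, Real.norm_of_nonneg Real.pi_pos.le, mul_one, hnorm]
  calc 1 / (2 * π * |(n : ℝ)|) * ((b - a) * ‖fourierCoeffOn hab f' n‖)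
      = (b - a) / (2 * π) * ‖fourierCoeffOn hab f' n‖ / |(n : ℝ)| := by
        field_simp
    _ ≤ (b - a) / (2 * π) * ‖fourierCoeffOn hab f' n‖ := div_le_self (by positivity) hn1

lemma memLp_two_restrict_Ioc_of_continuousOn {a b : ℝ} {f : ℝ → ℂ}
    (hf : ContinuousOn f (Icc a b)) : MemLp f 2 (volume.restrict (Ioc a b)) :=
  (memLp_two_iff_integrable_sq_norm
    ((hf.mono Ioc_subset_Icc_self).aestronglyMeasurable measurableSet_Ioc)).2
    ((hf.norm.pow 2).integrableOn_Icc.mono_set Ioc_subset_Icc_self)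

theorem wirtinger_inequality {a b : ℝ} (hab : a < b) {f f' : ℝ → ℂ}
    (hf : ∀ x ∈ uIcc a b, HasDerivAt f (f' x) x) (hf' : ContinuousOn f' (Icc a b))
    (hfab : f a = f b) (hmean : ∫ x in a..b, f x = 0) :
    ∫ x in a..b, ‖f x‖ ^ 2 ≤ ((b - a) / (2 * π)) ^ 2 * ∫ x in a..b, ‖f' x‖ ^ 2 := by
  have hfc : ContinuousOn f (Icc a b) := fun x hx =>
    (hf x (by rwa [uIcc_of_le hab.le])).continuousAt.continuousWithinAt
  have parseval {g : ℝ → ℂ} (hg : ContinuousOn g (Icc a b)) :=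
    hasSum_sq_fourierCoeffOn hab (memLp_two_restrict_Ioc_of_continuousOn hg)
  have hcoeff (n : ℤ) : ‖fourierCoeffOn hab f n‖ ^ 2
      ≤ ((b - a) / (2 * π)) ^ 2 * ‖fourierCoeffOn hab f' n‖ ^ 2 := by
    rcases eq_or_ne n 0 with rfl | hn
    · rw [fourierCoeffOn_eq_integral]
      simp only [neg_zero, fourier_zero, one_smul, hmean, smul_zero, norm_zero,
        zero_pow two_ne_zero]
      positivity
    · rw [← mul_pow]
      gcongr
      exact norm_fourierCoeffOn_le_of_hasDerivAt hab hn hf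
        (hf'.intervalIntegrable_of_Icc hab.le) hfab
  have key := hasSum_le hcoeff (parseval hfc) ((parseval hf').mul_left _)
  rw [smul_eq_mul, smul_eq_mul, mul_left_comm] at key
  exact le_of_mul_le_mul_left key (inv_pos.2 (sub_pos.2 hab))

lemma exists_integral_sub_sq_le_integral_deriv_sq {q q' : ℝ → ℝ}
    (hd : ∀ x, HasDerivAt q (q' x) x) (hc : Continuous q') (hq : q (-π) = q π) :
    ∃ c, ∫ x in (-π)..π, (q x - c) ^ 2 ≤ ∫ x in (-π)..π, q' x ^ 2 := by
  have hcont : Continuous q := continuous_iff_continuousAt.2 fun x => (hd x).continuousAt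
  set c := (2 * π)⁻¹ * ∫ x in (-π)..π, q x with hc_def
  have hmean : ∫ x in (-π)..π, ((q x - c : ℝ) : ℂ) = 0 := by
    rw [intervalIntegral.integral_ofReal,
      intervalIntegral.integral_sub (hcont.intervalIntegrable _ _) intervalIntegrable_const,
      intervalIntegral.integral_const, hc_def, smul_eq_mul]
    have := Real.pi_ne_zero
    norm_cast
    field_simp
    ring
  have key := wirtinger_inequality (by linarith [Real.pi_pos])
    (fun x _ => ((hd x).sub_const c).ofReal_comp)
    (Complex.continuous_ofReal.comp hc).continuousOn (by rw [hq]) hmean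
  refine ⟨c, ?_⟩
  simpa only [Complex.norm_real, Real.norm_eq_abs, sq_abs, sub_neg_eq_add, ← two_mul,
    div_self Real.two_pi_pos.ne', one_pow, one_mul] using key

lemma sq_integral_le_mul_integral_sq {a b : ℝ} (hab : a < b) {f : ℝ → ℝ}
    (hf : ContinuousOn f (Icc a b)) :
    (∫ x in a..b, f x) ^ 2 ≤ (b - a) * ∫ x in a..b, f x ^ 2 := by
  have hba : 0 < b - a := sub_pos.2 hab
  have jensen := (even_two.convexOn_pow (𝕜 := ℝ)).map_set_average_le
    (continuous_pow 2).continuousOn isClosed_univ (μ := volume) (t := Ioc a b) (f := f)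
    (by simp [hab]) (by simp) (by simp) (hf.integrableOn_Icc.mono_set Ioc_subset_Icc_self)
    ((hf.pow 2).integrableOn_Icc.mono_set Ioc_subset_Icc_self)
  rw [setAverage_eq, setAverage_eq, Real.volume_real_Ioc_of_le hab.le, smul_eq_mul, smul_eq_mul,
    mul_pow, ← intervalIntegral.integral_of_le hab.le,
    ← intervalIntegral.integral_of_le hab.le] at jensen
  calc (∫ x in a..b, f x) ^ 2 = (b - a) ^ 2 * ((b - a)⁻¹ ^ 2 * (∫ x in a..b, f x) ^ 2) := by
        field_simp
    _ ≤ (b - a) ^ 2 * ((b - a)⁻¹ * ∫ x in a..b, f x ^ 2) := by gcongr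
    _ = (b - a) * ∫ x in a..b, f x ^ 2 := by field_simp

lemma hasDerivAt_div_rpow {R x : ℝ} (hR : 0 < R) (hx : 0 < x) (σ : ℝ) :
    HasDerivAt (fun x : ℝ => (x / R) ^ σ) (σ * ((x / R) ^ σ / x)) x := by
  have hxR : 0 < x / R := by positivity
  refine (((hasDerivAt_id x).div_const R).rpow_const (p := σ) (Or.inl hxR.ne')).congr_deriv ?_
  simp only [id_eq]
  rw [Real.rpow_sub_one hxR.ne']
  field_simp

lemma le_of_hasDerivAt_nonneg_Ioc {R : ℝ} {f f' : ℝ → ℝ}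
    (hf : ∀ ρ ∈ Ioc 0 R, HasDerivAt f (f' ρ) ρ) (hf' : ∀ ρ ∈ Ioc 0 R, 0 ≤ f' ρ) {r : ℝ}
    (hr : r ∈ Ioc 0 R) : f r ≤ f R :=
  monotoneOn_of_hasDerivWithinAt_nonneg (convex_Ioc 0 R)
    (fun x hx => (hf x hx).continuousAt.continuousWithinAt)
    (fun x hx => (hf x (interior_subset hx)).hasDerivWithinAt)
    (fun x hx => hf' x (interior_subset hx)) hr ⟨hr.1.trans_le hr.2, le_rfl⟩ hr.2

lemma le_mul_div_rpow_of_mul_le_deriv {D D' : ℝ → ℝ} {R γ p B : ℝ} (hR : 0 < R) (hp : 0 < p)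
    (hγp : 2 * γ ≤ p) (hB : 0 ≤ B) (hD : ∀ ρ ∈ Ioc 0 R, HasDerivAt D (D' ρ) ρ)
    (hode : ∀ ρ ∈ Ioc 0 R, γ * D ρ ≤ ρ * D' ρ + B * ρ ^ p) {ρ : ℝ} (hρ : ρ ∈ Ioc 0 R) :
    D ρ ≤ (D R + 2 / p * B * R ^ p) * (ρ / R) ^ γ := by
  have hpow (x : ℝ) (hx : 0 < x) : HasDerivAt (fun x : ℝ => x ^ p) (p * (x ^ p / x)) x := by
    simpa using hasDerivAt_div_rpow one_pos hx p
  have hmono := le_of_hasDerivAt_nonneg_Ioc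
    (f := fun x => (x / R) ^ (-γ) * (D x + 2 / p * B * x ^ p))
    (fun x hx => (hasDerivAt_div_rpow hR hx.1 _).mul
      ((hD x hx).add ((hpow x hx.1).const_mul (2 / p * B)))) (fun x hx => ?_) hρ
  · have hBρ : 0 ≤ 2 / p * B * ρ ^ p := by have := hρ.1; positivity
    have hρR : 0 < ρ / R := div_pos hρ.1 hR
    simp only [div_self hR.ne', Real.one_rpow, one_mul, Real.rpow_neg hρR.le] at hmono
    rw [inv_mul_le_iff₀ (by positivity), mul_comm] at hmono
    linarith
  · have hx0 := hx.1
    have hslack : 0 ≤ (p - 2 * γ) / p * (B * x ^ p) := by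
      have : 0 ≤ p - 2 * γ := sub_nonneg.2 hγp
      positivity
    have hderiv : -γ * ((x / R) ^ (-γ) / x) * (D x + 2 / p * B * x ^ p)
        + (x / R) ^ (-γ) * (D' x + 2 / p * B * (p * (x ^ p / x)))
        = (x / R) ^ (-γ) / x
          * ((x * D' x + B * x ^ p - γ * D x) + (p - 2 * γ) / p * (B * x ^ p)) := by
      field_simp
      ring
    change 0 ≤ -γ * ((x / R) ^ (-γ) / x) * (D x + 2 / p * B * x ^ p)
        + (x / R) ^ (-γ) * (D' x + 2 / p * B * (p * (x ^ p / x)))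
    rw [hderiv]
    exact mul_nonneg (by positivity) (add_nonneg (by linarith [hode x hx]) hslack)

lemma sub_le_of_energy_decay {D D' m m' : ℝ → ℝ} {R γ y : ℝ} (hR : 0 < R) (hγ : 0 < γ)
    (hy : 0 < y) (hD : ∀ ρ ∈ Ioc 0 R, HasDerivAt D (D' ρ) ρ) (hD0 : ∀ ρ ∈ Ioc 0 R, 0 ≤ D ρ)
    (hdecay : ∀ ρ ∈ Ioc 0 R, D ρ ≤ y ^ 2 * (ρ / R) ^ γ)
    (hm : ∀ ρ ∈ Ioc 0 R, HasDerivAt m (m' ρ) ρ) (hm' : ∀ ρ ∈ Ioc 0 R, ρ * m' ρ ^ 2 ≤ D' ρ)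
    {r : ℝ} (hr : r ∈ Ioc 0 R) : m R - m r ≤ (1 + 1 / γ) * y := by
  have hsplit (x : ℝ) (hx : 0 < x) : (x / R) ^ γ = ((x / R) ^ (γ / 2)) ^ 2 := by
    rw [← Real.rpow_natCast, ← Real.rpow_mul (by positivity)]
    norm_num
  have hmono := le_of_hasDerivAt_nonneg_Ioc
    (f := fun x => D x / (2 * y * (x / R) ^ (γ / 2))
      + y * (1 / 2 + 1 / γ) * (x / R) ^ (γ / 2) - m x)
    (fun x hx => (((hD x hx).div ((hasDerivAt_div_rpow hR hx.1 (γ / 2)).const_mul (2 * y))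
      (by have := hx.1; positivity)).add
      ((hasDerivAt_div_rpow hR hx.1 (γ / 2)).const_mul _)).sub (hm x hx)) (fun x hx => ?_) hr
  · have hDR := hdecay R ⟨hR, le_rfl⟩
    have hpos : 0 ≤ D r / (2 * y * (r / R) ^ (γ / 2))
        + y * (1 / 2 + 1 / γ) * (r / R) ^ (γ / 2) := by
      have := hD0 r hr
      have := hr.1
      positivity
    simp only [div_self hR.ne', Real.one_rpow, mul_one] at hmono hDR
    have hDR' : D R / (2 * y) ≤ y / 2 := by
      rw [div_le_iff₀ (by positivity)]
      linarith
    linarith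
  · have hx0 := hx.1
    have hDx := hdecay x hx
    rw [hsplit x hx0] at hDx
    have hw : 0 < (x / R) ^ (γ / 2) := by positivity
    change 0 ≤ (D' x * (2 * y * (x / R) ^ (γ / 2))
        - D x * (2 * y * (γ / 2 * ((x / R) ^ (γ / 2) / x)))) / (2 * y * (x / R) ^ (γ / 2)) ^ 2
        + y * (1 / 2 + 1 / γ) * (γ / 2 * ((x / R) ^ (γ / 2) / x)) - m' x
    generalize (x / R) ^ (γ / 2) = w at hw hDx
    have hderiv : (D' x * (2 * y * w) - D x * (2 * y * (γ / 2 * (w / x)))) / (2 * y * w) ^ 2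
        + y * (1 / 2 + 1 / γ) * (γ / 2 * (w / x)) - m' x
        = γ / (4 * y * w * x) * (y ^ 2 * w ^ 2 - D x) + (D' x - x * m' x ^ 2) / (2 * y * w)
          + (x * m' x - y * w) ^ 2 / (2 * y * w * x) := by
      field_simp
      ring
    rw [hderiv]
    have : 0 ≤ y ^ 2 * w ^ 2 - D x := sub_nonneg.2 hDx
    have : 0 ≤ D' x - x * m' x ^ 2 := sub_nonneg.2 (hm' x hx)
    positivity

theorem abs_sub_le_of_energy_ode {D D' m m' : ℝ → ℝ} {R γ p B y : ℝ} (hR : 0 < R) (hγ : 0 < γ)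
    (hγp : 2 * γ ≤ p) (hB : 0 ≤ B) (hy : 0 < y)
    (hD : ∀ ρ ∈ Ioc 0 R, HasDerivAt D (D' ρ) ρ) (hD0 : ∀ ρ ∈ Ioc 0 R, 0 ≤ D ρ)
    (hode : ∀ ρ ∈ Ioc 0 R, γ * D ρ ≤ ρ * D' ρ + B * ρ ^ p)
    (hm : ∀ ρ ∈ Ioc 0 R, HasDerivAt m (m' ρ) ρ) (hm' : ∀ ρ ∈ Ioc 0 R, ρ * m' ρ ^ 2 ≤ D' ρ)
    (hy2 : D R + 2 / p * B * R ^ p ≤ y ^ 2) {r : ℝ} (hr : r ∈ Ioc 0 R) :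
    |m R - m r| ≤ (1 + 1 / γ) * y := by
  have hdecay (ρ : ℝ) (hρ : ρ ∈ Ioc 0 R) : D ρ ≤ y ^ 2 * (ρ / R) ^ γ :=
    (le_mul_div_rpow_of_mul_le_deriv hR (by linarith) hγp hB hD hode hρ).trans
      (mul_le_mul_of_nonneg_right hy2 (by have := hρ.1; positivity))
  have hneg := sub_le_of_energy_decay hR hγ hy hD hD0 hdecay (fun ρ hρ => (hm ρ hρ).neg)
    (fun ρ hρ => by rw [neg_sq]; exact hm' ρ hρ) hr
  simp only [Pi.neg_apply] at hneg
  exact abs_le.2 ⟨by linarith, sub_le_of_energy_decay hR hγ hy hD hD0 hdecay hm hm' hr⟩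

lemma integral_sub_left_id (R c d : ℝ) :
    ∫ ρ in c..d, (R - ρ) = R * (d - c) - (d ^ 2 - c ^ 2) / 2 := by
  rw [intervalIntegral.integral_sub intervalIntegrable_const intervalIntegral.intervalIntegrable_id,
    integral_id, intervalIntegral.integral_const, smul_eq_mul]
  ring

lemma half_mul_sq_le_integral_of_monotoneOn {D : ℝ → ℝ} {R : ℝ} (hR : 0 ≤ R) (hDc : Continuous D)
    (hD0 : D 0 = 0) (hmono : MonotoneOn D (Icc 0 R)) :
    D (R / 2) * R ^ 2 / 8 ≤ ∫ ρ in (0 : ℝ)..R, (R - ρ) * D ρ := by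
  have hitg (c d : ℝ) : IntervalIntegrable (fun ρ => (R - ρ) * D ρ) volume c d :=
    (by fun_prop : Continuous _).intervalIntegrable _ _
  have hinner : 0 ≤ ∫ ρ in (0 : ℝ)..(R / 2), (R - ρ) * D ρ := by
    refine intervalIntegral.integral_nonneg (by linarith) fun x hx => ?_
    have hDx : D 0 ≤ D x := hmono ⟨le_rfl, hR⟩ ⟨hx.1, by linarith [hx.2]⟩ hx.1
    exact mul_nonneg (by linarith [hx.2]) (hD0 ▸ hDx)
  have houter : ∫ ρ in (R / 2)..R, (R - ρ) * D (R / 2) ≤ ∫ ρ in (R / 2)..R, (R - ρ) * D ρ := by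
    refine intervalIntegral.integral_mono_on (by linarith)
      ((by fun_prop : Continuous _).intervalIntegrable _ _) (hitg _ _) fun x hx => ?_
    exact mul_le_mul_of_nonneg_left
      (hmono ⟨by linarith, by linarith⟩ ⟨by linarith [hx.1], hx.2⟩ hx.1) (by linarith [hx.2])
  rw [intervalIntegral.integral_mul_const, integral_sub_left_id] at houter
  rw [← intervalIntegral.integral_add_adjacent_intervals (hitg 0 (R / 2)) (hitg (R / 2) R)]
  linarith

lemma integral_sq_mul_deriv_sub_eq_zero {D D' : ℝ → ℝ} {R : ℝ}
    (hD : ∀ ρ, HasDerivAt D (D' ρ) ρ) (hD'c : Continuous D') (hD0 : D 0 = 0) :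
    ∫ ρ in (0 : ℝ)..R, (1 / 2 * (R - ρ) ^ 2 * D' ρ - (R - ρ) * D ρ) = 0 := by
  have hDc : Continuous D := continuous_iff_continuousAt.2 fun x => (hD x).continuousAt
  have hprim (x : ℝ) : HasDerivAt (fun ρ => 1 / 2 * (R - ρ) ^ 2 * D ρ)
      (1 / 2 * (R - x) ^ 2 * D' x - (R - x) * D x) x := by
    refine (((((hasDerivAt_id x).const_sub R).pow 2).const_mul (1 / 2)).mul (hD x)).congr_deriv ?_
    simp only [Pi.pow_apply, id_eq]
    push_cast
    ring
  rw [intervalIntegral.integral_eq_sub_of_hasDerivAt (fun x _ => hprim x)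
    ((by fun_prop : Continuous _).intervalIntegrable _ _)]
  simp [hD0]

theorem half_mul_sq_le_of_caccioppoli_ode {D D' J : ℝ → ℝ} {R k N₀ : ℝ} (hR : 0 < R) (hk : 0 < k)
    (hN : 0 ≤ N₀) (hD : ∀ ρ, HasDerivAt D (D' ρ) ρ) (hD'c : Continuous D') (hJc : Continuous J)
    (hD0 : D 0 = 0) (hJ : ∀ ρ ∈ Icc 0 R, 0 ≤ J ρ) (hD' : ∀ ρ ∈ Icc 0 R, 0 ≤ D' ρ)
    (hode : ∀ ρ ∈ Icc 0 R, ∀ s > 0, D ρ ≤ k * (s * J ρ + ρ * D' ρ / s) + N₀) :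
    D (R / 2) * R ^ 2 ≤ 64 * k ^ 2 * (∫ ρ in (0 : ℝ)..R, ρ * J ρ) + 8 * R ^ 2 * N₀ := by
  have hDc : Continuous D := continuous_iff_continuousAt.2 fun x => (hD x).continuousAt
  have hmono : MonotoneOn D (Icc 0 R) :=
    monotoneOn_of_hasDerivWithinAt_nonneg (convex_Icc 0 R) hDc.continuousOn
      (fun x _ => (hD x).hasDerivWithinAt) fun x hx => hD' x (interior_subset hx)
  have hpt (ρ : ℝ) (hρ : ρ ∈ Icc 0 R) : (R - ρ) * D ρ ≤ 8 * k ^ 2 * (ρ * J ρ)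
      + (1 / 2 * (R - ρ) ^ 2 * D' ρ - (R - ρ) * D ρ) + 2 * N₀ * (R - ρ) := by
    have hDρ := hD' ρ hρ
    rcases hρ.1.eq_or_lt with rfl | h0
    · simp only [hD0, sub_zero, mul_zero, zero_mul, zero_add]
      positivity
    rcases hρ.2.eq_or_lt with rfl | h1
    · have := hJ ρ hρ
      norm_num
      positivity
    · have : 0 < R - ρ := sub_pos.2 h1
      -- this choice of `s` makes the boundary term equal to that of the cutoff `(R - ρ)²/2`
      have hs := mul_le_mul_of_nonneg_left (hode ρ hρ (4 * k * ρ / (R - ρ)) (by positivity))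
        (by positivity : 0 ≤ 2 * (R - ρ))
      have hsimp : 2 * (R - ρ) * (k * (4 * k * ρ / (R - ρ) * J ρ
          + ρ * D' ρ / (4 * k * ρ / (R - ρ))) + N₀)
          = 8 * k ^ 2 * (ρ * J ρ) + 1 / 2 * (R - ρ) ^ 2 * D' ρ + 2 * N₀ * (R - ρ) := by
        field_simp
        ring
      linarith
  have hitg {f : ℝ → ℝ} (hf : Continuous f) : IntervalIntegrable f volume 0 R :=
    hf.intervalIntegrable _ _
  have key := (half_mul_sq_le_integral_of_monotoneOn hR.le hDc hD0 hmono).trans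
    (intervalIntegral.integral_mono_on hR.le (hitg (by fun_prop)) (hitg (by fun_prop)) hpt)
  rw [intervalIntegral.integral_add (hitg (by fun_prop)) (hitg (by fun_prop)),
    intervalIntegral.integral_add (hitg (by fun_prop)) (hitg (by fun_prop)),
    integral_sq_mul_deriv_sub_eq_zero hD hD'c hD0, intervalIntegral.integral_const_mul,
    intervalIntegral.integral_const_mul, integral_sub_left_id] at key
  linarith

/-! ### Partial derivatives in the plane -/

theorem fderiv_apply_eq_pd (f : ℝ² → ℝ) (x v : ℝ²) :
    fderiv ℝ f x v = v 0 * pd 0 f x + v 1 * pd 1 f x := by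
  have hv : v = v 0 • EuclideanSpace.single 0 1 + v 1 • EuclideanSpace.single 1 1 := by
    ext i; fin_cases i <;> simp
  conv_lhs => rw [hv]
  simp [pd]

theorem contDiff_pd {f : ℝ² → ℝ} {m n : WithTop ℕ∞} (hf : ContDiff ℝ n f) (hmn : m + 1 ≤ n)
    (i : Fin 2) : ContDiff ℝ m (pd i f) :=
  (hf.fderiv_right hmn).clm_apply contDiff_const

@[fun_prop]
theorem continuous_pd {f : ℝ² → ℝ} (hf : ContDiff ℝ 1 f) (i : Fin 2) : Continuous (pd i f) :=
  (contDiff_pd (m := 0) hf (by simp) i).continuous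

theorem pd_mul {f g : ℝ² → ℝ} {x : ℝ²} (hf : DifferentiableAt ℝ f x)
    (hg : DifferentiableAt ℝ g x) (i : Fin 2) :
    pd i (fun y => f y * g y) x = f x * pd i g x + g x * pd i f x := by
  simp [pd, fderiv_fun_mul hf hg]

theorem pd_add {f g : ℝ² → ℝ} {x : ℝ²} (hf : DifferentiableAt ℝ f x)
    (hg : DifferentiableAt ℝ g x) (i : Fin 2) :
    pd i (fun y => f y + g y) x = pd i f x + pd i g x := by
  simp [pd, fderiv_fun_add hf hg]

theorem pd_sub {f g : ℝ² → ℝ} {x : ℝ²} (hf : DifferentiableAt ℝ f x)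
    (hg : DifferentiableAt ℝ g x) (i : Fin 2) :
    pd i (fun y => f y - g y) x = pd i f x - pd i g x := by
  simp [pd, fderiv_fun_sub hf hg]

theorem pd_zero_pd_one_comm {f : ℝ² → ℝ} (hf : ContDiff ℝ 2 f) (x : ℝ²) :
    pd 0 (pd 1 f) x = pd 1 (pd 0 f) x := by
  have hsymm : IsSymmSndFDerivAt ℝ f x := hf.contDiffAt.isSymmSndFDerivAt (by simp)
  have hd : DifferentiableAt ℝ (fderiv ℝ f) x :=
    (hf.fderiv_right (m := 1) (by norm_num)).differentiable one_ne_zero x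
  have hpd (i j : Fin 2) : pd i (pd j f) x =
      fderiv ℝ (fderiv ℝ f) x (EuclideanSpace.single i 1) (EuclideanSpace.single j 1) := by
    change fderiv ℝ (fun y => fderiv ℝ f y (EuclideanSpace.single j 1)) x _ = _
    rw [fderiv_clm_apply hd (differentiableAt_const _)]
    simp
  rw [hpd, hpd, hsymm.eq]

/-! ### Polar coordinates and integrals over circles and disks -/

/-- The point with polar coordinates `(ρ, θ)` about the center `c`. -/
noncomputable def polarPt (c : ℝ²) (ρ θ : ℝ) : ℝ² := c + !₂[ρ * Real.cos θ, ρ * Real.sin θ]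

/-- The integral of `f` over the circle of radius `ρ` about `c`, with respect to the angle `dθ`
(not arc length). -/
noncomputable def circleInt (c : ℝ²) (f : ℝ² → ℝ) (ρ : ℝ) : ℝ := ∫ θ in (-π)..π, f (polarPt c ρ θ)

/-- The integral of `f` over the disk of radius `ρ` about `c`, written in polar coordinates. -/
noncomputable def diskInt (c : ℝ²) (f : ℝ² → ℝ) (ρ : ℝ) : ℝ := ∫ t in 0..ρ, t * circleInt c f t

section Polar

variable {f g : ℝ² → ℝ} (c : ℝ²)

theorem continuous_polarPt : Continuous fun p : ℝ × ℝ => polarPt c p.1 p.2 := by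
  unfold polarPt; fun_prop

@[fun_prop]
theorem continuous_polarPt_comp {X : Type*} [TopologicalSpace X] {ρ θ : X → ℝ}
    (hρ : Continuous ρ) (hθ : Continuous θ) : Continuous fun x => polarPt c (ρ x) (θ x) :=
  (continuous_polarPt c).comp (hρ.prodMk hθ)

theorem dist_polarPt (ρ θ : ℝ) : dist (polarPt c ρ θ) c = |ρ| := by
  have hsq : ρ ^ 2 * Real.cos θ ^ 2 + ρ ^ 2 * Real.sin θ ^ 2 = ρ ^ 2 := by
    rw [← mul_add, Real.cos_sq_add_sin_sq, mul_one]
  simp [polarPt, EuclideanSpace.norm_eq, mul_pow, hsq, Real.sqrt_sq_eq_abs]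

theorem polarPt_mem_closedBall {ρ r : ℝ} (θ : ℝ) (h0 : 0 ≤ ρ) (h : ρ ≤ r) :
    polarPt c ρ θ ∈ Metric.closedBall c r := by
  rwa [Metric.mem_closedBall, dist_polarPt, abs_of_nonneg h0]

@[simp]
theorem polarPt_zero (θ : ℝ) : polarPt c 0 θ = c := by
  ext i; fin_cases i <;> simp [polarPt]

theorem polarPt_neg_pi (ρ : ℝ) : polarPt c ρ (-π) = polarPt c ρ π := by simp [polarPt]

theorem hasDerivAt_euclideanPair {a b : ℝ → ℝ} {a' b' t : ℝ} (ha : HasDerivAt a a' t)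
    (hb : HasDerivAt b b' t) : HasDerivAt (fun s => !₂[a s, b s]) !₂[a', b'] t := by
  have hab : HasDerivAt (fun s => ![a s, b s]) ![a', b'] t :=
    hasDerivAt_pi.2 <| Fin.forall_fin_two.2 ⟨ha, hb⟩
  exact (PiLp.continuousLinearEquiv 2 ℝ _).symm.hasFDerivAt.comp_hasDerivAt t hab

theorem hasDerivAt_polarPt_radius (ρ θ : ℝ) :
    HasDerivAt (fun r => polarPt c r θ) !₂[Real.cos θ, Real.sin θ] ρ :=
  (hasDerivAt_euclideanPair (hasDerivAt_mul_const _) (hasDerivAt_mul_const _)).const_add c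

theorem hasDerivAt_polarPt_angle (ρ θ : ℝ) :
    HasDerivAt (polarPt c ρ) !₂[ρ * -Real.sin θ, ρ * Real.cos θ] θ :=
  (hasDerivAt_euclideanPair ((Real.hasDerivAt_cos θ).const_mul ρ)
    ((Real.hasDerivAt_sin θ).const_mul ρ)).const_add c

theorem hasDerivAt_comp_polarPt_radius (hf : Differentiable ℝ f) (ρ θ : ℝ) :
    HasDerivAt (fun r => f (polarPt c r θ))
      (Real.cos θ * pd 0 f (polarPt c ρ θ) + Real.sin θ * pd 1 f (polarPt c ρ θ)) ρ := by
  have h := (hf (polarPt c ρ θ)).hasFDerivAt.comp_hasDerivAt ρ (hasDerivAt_polarPt_radius c ρ θ)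
  exact h.congr_deriv (fderiv_apply_eq_pd _ _ _)

theorem hasDerivAt_comp_polarPt_angle (hf : Differentiable ℝ f) (ρ θ : ℝ) :
    HasDerivAt (fun t => f (polarPt c ρ t))
      (ρ * (-Real.sin θ * pd 0 f (polarPt c ρ θ) + Real.cos θ * pd 1 f (polarPt c ρ θ))) θ := by
  have h := (hf (polarPt c ρ θ)).hasFDerivAt.comp_hasDerivAt θ (hasDerivAt_polarPt_angle c ρ θ)
  refine h.congr_deriv ?_
  simp only [fderiv_apply_eq_pd, Matrix.cons_val_zero, Matrix.cons_val_one]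
  ring

@[fun_prop]
theorem continuous_circleInt (hf : Continuous f) : Continuous (circleInt c f) :=
  intervalIntegral.continuous_parametric_intervalIntegral_of_continuous'
    (f := fun ρ θ => f (polarPt c ρ θ)) (by fun_prop) _ _

theorem hasDerivAt_diskInt (hf : Continuous f) (ρ : ℝ) :
    HasDerivAt (diskInt c f) (ρ * circleInt c f ρ) ρ := by
  have hc : Continuous fun t => t * circleInt c f t := by fun_prop
  exact intervalIntegral.integral_hasDerivAt_right (hc.intervalIntegrable _ _)
    (hc.stronglyMeasurableAtFilter _ _) hc.continuousAt

@[simp]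
theorem diskInt_zero_radius (f : ℝ² → ℝ) : diskInt c f 0 = 0 := intervalIntegral.integral_same

variable {ρ : ℝ}

theorem circleInt_nonneg (h0 : 0 ≤ ρ) (h : ∀ x ∈ Metric.closedBall c ρ, 0 ≤ f x) :
    0 ≤ circleInt c f ρ :=
  intervalIntegral.integral_nonneg (by linarith [Real.pi_pos]) fun θ _ =>
    h _ (polarPt_mem_closedBall c θ h0 le_rfl)

theorem diskInt_nonneg (h0 : 0 ≤ ρ) (h : ∀ x ∈ Metric.closedBall c ρ, 0 ≤ f x) :
    0 ≤ diskInt c f ρ :=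
  intervalIntegral.integral_nonneg h0 fun _ ht => mul_nonneg ht.1 <|
    circleInt_nonneg c ht.1 fun x hx => h x (Metric.closedBall_subset_closedBall ht.2 hx)

theorem circleInt_add (hf : Continuous f) (hg : Continuous g) (ρ : ℝ) :
    circleInt c (fun x => f x + g x) ρ = circleInt c f ρ + circleInt c g ρ :=
  intervalIntegral.integral_add (Continuous.intervalIntegrable (by fun_prop) _ _)
    (Continuous.intervalIntegrable (by fun_prop) _ _)

theorem circleInt_const_mul (f : ℝ² → ℝ) (k ρ : ℝ) :
    circleInt c (fun x => k * f x) ρ = k * circleInt c f ρ :=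
  intervalIntegral.integral_const_mul _ _

theorem diskInt_add (hf : Continuous f) (hg : Continuous g) (ρ : ℝ) :
    diskInt c (fun x => f x + g x) ρ = diskInt c f ρ + diskInt c g ρ := by
  simp only [diskInt, circleInt_add c hf hg, mul_add]
  exact intervalIntegral.integral_add (Continuous.intervalIntegrable (by fun_prop) _ _)
    (Continuous.intervalIntegrable (by fun_prop) _ _)

theorem diskInt_const_mul (f : ℝ² → ℝ) (k ρ : ℝ) :
    diskInt c (fun x => k * f x) ρ = k * diskInt c f ρ := by
  simp only [diskInt, circleInt_const_mul, mul_left_comm _ k]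
  exact intervalIntegral.integral_const_mul _ _

theorem circleInt_mono (hf : Continuous f) (hg : Continuous g) (h0 : 0 ≤ ρ)
    (h : ∀ x ∈ Metric.closedBall c ρ, f x ≤ g x) : circleInt c f ρ ≤ circleInt c g ρ :=
  intervalIntegral.integral_mono_on (by linarith [Real.pi_pos])
    (Continuous.intervalIntegrable (by fun_prop) _ _)
    (Continuous.intervalIntegrable (by fun_prop) _ _)
    fun θ _ => h _ (polarPt_mem_closedBall c θ h0 le_rfl)

theorem diskInt_mono (hf : Continuous f) (hg : Continuous g) (h0 : 0 ≤ ρ)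
    (h : ∀ x ∈ Metric.closedBall c ρ, f x ≤ g x) : diskInt c f ρ ≤ diskInt c g ρ :=
  intervalIntegral.integral_mono_on h0 (Continuous.intervalIntegrable (by fun_prop) _ _)
    (Continuous.intervalIntegrable (by fun_prop) _ _) fun _ ht =>
    mul_le_mul_of_nonneg_left (circleInt_mono c hf hg ht.1 fun x hx =>
      h x (Metric.closedBall_subset_closedBall ht.2 hx)) ht.1

theorem diskInt_sub_diskInt (hf : Continuous f) (r ρ : ℝ) :
    diskInt c f ρ - diskInt c f r = ∫ t in r..ρ, t * circleInt c f t :=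
  intervalIntegral.integral_interval_sub_left (Continuous.intervalIntegrable (by fun_prop) _ _)
    (Continuous.intervalIntegrable (by fun_prop) _ _)

theorem diskInt_mono_radius (hf : Continuous f) {r : ℝ} (h0 : 0 ≤ r) (h1 : r ≤ ρ)
    (h : ∀ x ∈ Metric.closedBall c ρ, 0 ≤ f x) : diskInt c f r ≤ diskInt c f ρ := by
  rw [← sub_nonneg, diskInt_sub_diskInt c hf]
  refine intervalIntegral.integral_nonneg h1 fun t ht => ?_
  have ht0 : 0 ≤ t := h0.trans ht.1
  exact mul_nonneg ht0 (circleInt_nonneg c ht0 fun x hx =>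
    h x (Metric.closedBall_subset_closedBall ht.2 hx))

end Polar

theorem hasDerivAt_intervalIntegral_of_continuous {F F' : ℝ → ℝ → ℝ} (a b x : ℝ)
    (hF : ∀ x, Continuous (F x)) (hF' : Continuous fun p : ℝ × ℝ => F' p.1 p.2)
    (hd : ∀ x t, HasDerivAt (F · t) (F' x t) x) :
    HasDerivAt (fun x => ∫ t in a..b, F x t) (∫ t in a..b, F' x t) x := by
  obtain ⟨C, hC⟩ := ((isCompact_closedBall x 1).prod (isCompact_uIcc (a := a) (b := b))
    ).exists_bound_of_continuousOn hF'.continuousOn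
  have hF'x : Continuous (F' x) := hF'.comp (by fun_prop : Continuous fun t : ℝ => (x, t))
  exact (intervalIntegral.hasDerivAt_integral_of_dominated_loc_of_deriv_le
    (Metric.closedBall_mem_nhds x one_pos)
    (Filter.Eventually.of_forall fun y => (hF y).aestronglyMeasurable)
    ((hF x).intervalIntegrable a b) hF'x.aestronglyMeasurable
    (ae_of_all _ fun t ht y hy => hC (y, t) ⟨hy, uIoc_subset_uIcc ht⟩)
    intervalIntegrable_const (ae_of_all _ fun t _ y _ => hd y t)).2

theorem hasDerivAt_circleInt {f : ℝ² → ℝ} (hf : ContDiff ℝ 1 f) (c : ℝ²) (ρ : ℝ) :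
    HasDerivAt (circleInt c f) (∫ θ in (-π)..π,
      (Real.cos θ * pd 0 f (polarPt c ρ θ) + Real.sin θ * pd 1 f (polarPt c ρ θ))) ρ :=
  have := hf.continuous
  hasDerivAt_intervalIntegral_of_continuous (F := fun ρ θ => f (polarPt c ρ θ))
    (F' := fun ρ θ => Real.cos θ * pd 0 f (polarPt c ρ θ) + Real.sin θ * pd 1 f (polarPt c ρ θ))
    _ _ _ (by fun_prop) (by fun_prop)
    (hasDerivAt_comp_polarPt_radius c (hf.differentiable one_ne_zero))

section Green

variable {P Q : ℝ² → ℝ}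

-- The two integrands differ by the `θ`-derivative of the radial component of `(P, Q)`.
theorem integral_deriv_circulation (hP : ContDiff ℝ 1 P) (hQ : ContDiff ℝ 1 Q) (c : ℝ²) (ρ : ℝ) :
    ∫ θ in (-π)..π, ((-Real.sin θ * P (polarPt c ρ θ) + Real.cos θ * Q (polarPt c ρ θ)) +
      ρ * (-Real.sin θ *
          (Real.cos θ * pd 0 P (polarPt c ρ θ) + Real.sin θ * pd 1 P (polarPt c ρ θ)) +
        Real.cos θ *
          (Real.cos θ * pd 0 Q (polarPt c ρ θ) + Real.sin θ * pd 1 Q (polarPt c ρ θ)))) =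
      ρ * circleInt c (fun x => pd 0 Q x - pd 1 P x) ρ := by
  have cP := hP.continuous
  have cQ := hQ.continuous
  rw [circleInt, ← intervalIntegral.integral_const_mul, ← sub_eq_zero,
    ← intervalIntegral.integral_sub (Continuous.intervalIntegrable (by fun_prop) _ _)
      (Continuous.intervalIntegrable (by fun_prop) _ _),
    intervalIntegral.integral_eq_sub_of_hasDerivAt
      (f := fun θ => Real.cos θ * P (polarPt c ρ θ) + Real.sin θ * Q (polarPt c ρ θ))
      (fun θ _ => ?_) (Continuous.intervalIntegrable (by fun_prop) _ _)]
  · simp [polarPt_neg_pi]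
  · have hPθ := hasDerivAt_comp_polarPt_angle c (hP.differentiable one_ne_zero) ρ θ
    have hQθ := hasDerivAt_comp_polarPt_angle c (hQ.differentiable one_ne_zero) ρ θ
    refine (((Real.hasDerivAt_cos θ).mul hPθ).add ((Real.hasDerivAt_sin θ).mul hQθ)).congr_deriv ?_
    linear_combination (ρ * (pd 1 P (polarPt c ρ θ) - pd 0 Q (polarPt c ρ θ))) *
      Real.sin_sq_add_cos_sq θ

theorem hasDerivAt_circulation (hP : ContDiff ℝ 1 P) (hQ : ContDiff ℝ 1 Q) (c : ℝ²) (ρ : ℝ) :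
    HasDerivAt (fun r => ∫ θ in (-π)..π,
        r * (-Real.sin θ * P (polarPt c r θ) + Real.cos θ * Q (polarPt c r θ)))
      (ρ * circleInt c (fun x => pd 0 Q x - pd 1 P x) ρ) ρ := by
  have cP := hP.continuous
  have cQ := hQ.continuous
  rw [← integral_deriv_circulation hP hQ]
  refine hasDerivAt_intervalIntegral_of_continuous
    (F := fun r θ => r * (-Real.sin θ * P (polarPt c r θ) + Real.cos θ * Q (polarPt c r θ)))
    (F' := fun r θ => (-Real.sin θ * P (polarPt c r θ) + Real.cos θ * Q (polarPt c r θ)) +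
      r * (-Real.sin θ *
          (Real.cos θ * pd 0 P (polarPt c r θ) + Real.sin θ * pd 1 P (polarPt c r θ)) +
        Real.cos θ *
          (Real.cos θ * pd 0 Q (polarPt c r θ) + Real.sin θ * pd 1 Q (polarPt c r θ))))
    _ _ _ (by fun_prop) (by fun_prop) fun r θ => ?_
  have hPr := hasDerivAt_comp_polarPt_radius c (hP.differentiable one_ne_zero) r θ
  have hQr := hasDerivAt_comp_polarPt_radius c (hQ.differentiable one_ne_zero) r θ
  exact ((hasDerivAt_id r).mul ((hPr.const_mul (-Real.sin θ)).add
    (hQr.const_mul (Real.cos θ)))).congr_deriv (by simp)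

theorem green_theorem_disk (hP : ContDiff ℝ 1 P) (hQ : ContDiff ℝ 1 Q) (c : ℝ²) (ρ : ℝ) :
    ∫ θ in (-π)..π, ρ * (-Real.sin θ * P (polarPt c ρ θ) + Real.cos θ * Q (polarPt c ρ θ)) =
      diskInt c (fun x => pd 0 Q x - pd 1 P x) ρ := by
  have hcurl : Continuous fun t => t * circleInt c (fun x => pd 0 Q x - pd 1 P x) t := by fun_prop
  rw [diskInt, intervalIntegral.integral_eq_sub_of_hasDerivAt
    (fun r _ => hasDerivAt_circulation hP hQ c r) (hcurl.intervalIntegrable _ _)]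
  simp

end Green

/-! ### Gradients and Jacobians on circles -/

/-- The squared length of the gradient of `q`. -/
noncomputable def gradSq (q : ℝ² → ℝ) (x : ℝ²) : ℝ := pd 0 q x ^ 2 + pd 1 q x ^ 2

/-- The derivative of `q` with respect to the polar angle `θ` about `c` (not arc length). -/
noncomputable def angularDeriv (q : ℝ² → ℝ) (c : ℝ²) (ρ θ : ℝ) : ℝ :=
  ρ * (-Real.sin θ * pd 0 q (polarPt c ρ θ) + Real.cos θ * pd 1 q (polarPt c ρ θ))

/-- The Jacobian determinant of the map `(q, v)`. -/
noncomputable def jacobian (q v : ℝ² → ℝ) (x : ℝ²) : ℝ :=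
  pd 0 q x * pd 1 v x - pd 1 q x * pd 0 v x

theorem gradSq_nonneg (q : ℝ² → ℝ) (x : ℝ²) : 0 ≤ gradSq q x := by unfold gradSq; positivity

theorem sq_cos_mul_add_sin_mul_le (θ a b : ℝ) :
    (Real.cos θ * a + Real.sin θ * b) ^ 2 ≤ a ^ 2 + b ^ 2 := by
  have h : a ^ 2 + b ^ 2 - (Real.cos θ * a + Real.sin θ * b) ^ 2 =
      (Real.cos θ * b - Real.sin θ * a) ^ 2 := by
    linear_combination (-(a ^ 2 + b ^ 2)) * Real.sin_sq_add_cos_sq θ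
  exact sub_nonneg.1 (h ▸ sq_nonneg _)

theorem sq_integral_div_two_pi_le {f : ℝ → ℝ} (hf : Continuous f) :
    ((∫ θ in (-π)..π, f θ) / (2 * π)) ^ 2 ≤ (∫ θ in (-π)..π, f θ ^ 2) / (2 * π) := by
  have h := sq_integral_le_mul_integral_sq (neg_lt_self Real.pi_pos) hf.continuousOn
  rw [sub_neg_eq_add, ← two_mul] at h
  rw [div_pow, div_le_div_iff₀ (by positivity) (by positivity)]
  nlinarith [Real.pi_pos]

theorem integral_mul_le_of_pos {f g : ℝ → ℝ} {a b : ℝ} (hab : a ≤ b) (hf : Continuous f)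
    (hg : Continuous g) {s : ℝ} (hs : 0 < s) :
    ∫ t in a..b, f t * g t ≤
      1 / 2 * (s * (∫ t in a..b, f t ^ 2) + (∫ t in a..b, g t ^ 2) / s) := by
  have hf2 : IntervalIntegrable (fun t => s * f t ^ 2) volume a b :=
    Continuous.intervalIntegrable (by fun_prop) _ _
  have hg2 : IntervalIntegrable (fun t => g t ^ 2 / s) volume a b :=
    Continuous.intervalIntegrable (by fun_prop) _ _
  rw [← intervalIntegral.integral_const_mul, ← intervalIntegral.integral_div,
    ← intervalIntegral.integral_add hf2 hg2, ← intervalIntegral.integral_const_mul]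
  refine intervalIntegral.integral_mono_on hab ((hf.mul hg).intervalIntegrable _ _)
    ((hf2.add hg2).const_mul _) fun t _ => ?_
  have hsq : s * f t ^ 2 + g t ^ 2 / s - 2 * (f t * g t) = (s * f t - g t) ^ 2 / s := by
    field_simp; ring
  have : 0 ≤ (s * f t - g t) ^ 2 / s := by positivity
  linarith

section Circle

variable {q v : ℝ² → ℝ}

@[fun_prop]
theorem continuous_gradSq (hq : ContDiff ℝ 1 q) : Continuous (gradSq q) := by
  unfold gradSq; fun_prop

@[fun_prop]
theorem continuous_jacobian (hq : ContDiff ℝ 1 q) (hv : ContDiff ℝ 1 v) :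
    Continuous (jacobian q v) := by
  unfold jacobian; fun_prop

@[fun_prop]
theorem continuous_angularDeriv (hq : ContDiff ℝ 1 q) (c : ℝ²) (ρ : ℝ) :
    Continuous (angularDeriv q c ρ) := by
  unfold angularDeriv; fun_prop

theorem angularDeriv_sq_le (q : ℝ² → ℝ) (c : ℝ²) (ρ θ : ℝ) :
    angularDeriv q c ρ θ ^ 2 ≤ ρ ^ 2 * gradSq q (polarPt c ρ θ) := by
  rw [angularDeriv, mul_pow]
  gcongr
  have h := sq_cos_mul_add_sin_mul_le θ (pd 1 q (polarPt c ρ θ)) (-pd 0 q (polarPt c ρ θ))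
  unfold gradSq
  linarith

theorem integral_angularDeriv (hq : ContDiff ℝ 1 q) (c : ℝ²) (ρ : ℝ) :
    ∫ θ in (-π)..π, angularDeriv q c ρ θ = 0 := by
  simp only [angularDeriv]
  rw [intervalIntegral.integral_eq_sub_of_hasDerivAt (f := fun θ => q (polarPt c ρ θ))
    (fun θ _ => hasDerivAt_comp_polarPt_angle c (hq.differentiable one_ne_zero) ρ θ)
    (Continuous.intervalIntegrable (by fun_prop) _ _), polarPt_neg_pi, sub_self]

theorem integral_angularDeriv_sq_le (hq : ContDiff ℝ 1 q) (c : ℝ²) (ρ : ℝ) :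
    ∫ θ in (-π)..π, angularDeriv q c ρ θ ^ 2 ≤ ρ ^ 2 * circleInt c (gradSq q) ρ := by
  rw [circleInt, ← intervalIntegral.integral_const_mul]
  exact intervalIntegral.integral_mono_on (by linarith [Real.pi_pos])
    (Continuous.intervalIntegrable (by fun_prop) _ _)
    (Continuous.intervalIntegrable (by fun_prop) _ _) fun θ _ => angularDeriv_sq_le q c ρ θ

theorem exists_integral_sub_sq_le_mul_circleInt_gradSq (hq : ContDiff ℝ 1 q) (c : ℝ²) (ρ : ℝ) :
    ∃ m, ∫ θ in (-π)..π, (q (polarPt c ρ θ) - m) ^ 2 ≤ ρ ^ 2 * circleInt c (gradSq q) ρ := by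
  obtain ⟨m, hm⟩ := exists_integral_sub_sq_le_integral_deriv_sq
    (fun θ => hasDerivAt_comp_polarPt_angle c (hq.differentiable one_ne_zero) ρ θ)
    (continuous_angularDeriv hq c ρ) (by rw [polarPt_neg_pi])
  exact ⟨m, hm.trans (integral_angularDeriv_sq_le hq c ρ)⟩

theorem diskInt_jacobian (hq : ContDiff ℝ 1 q) (hv : ContDiff ℝ 2 v) (c : ℝ²) (ρ : ℝ) :
    diskInt c (jacobian q v) ρ = ∫ θ in (-π)..π, q (polarPt c ρ θ) * angularDeriv v c ρ θ := by
  have hv0 : ContDiff ℝ 1 (pd 0 v) := contDiff_pd hv (by norm_num) 0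
  have hv1 : ContDiff ℝ 1 (pd 1 v) := contDiff_pd hv (by norm_num) 1
  have dq := hq.differentiable one_ne_zero
  have hcurl : jacobian q v =
      fun x => pd 0 (fun y => q y * pd 1 v y) x - pd 1 (fun y => q y * pd 0 v y) x := by
    ext x
    rw [pd_mul (dq x) (hv1.differentiable one_ne_zero x),
      pd_mul (dq x) (hv0.differentiable one_ne_zero x), pd_zero_pd_one_comm hv x, jacobian]
    ring
  rw [hcurl, ← green_theorem_disk (hq.mul hv0) (hq.mul hv1)]
  exact intervalIntegral.integral_congr fun θ _ => by simp only [angularDeriv]; ring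

theorem diskInt_jacobian_le_of_pos (hq : ContDiff ℝ 1 q) (hv : ContDiff ℝ 2 v) (c : ℝ²) (ρ : ℝ)
    {s : ℝ} (hs : 0 < s) :
    diskInt c (jacobian q v) ρ ≤
      1 / 2 * (s * circleInt c (fun x => q x ^ 2) ρ + ρ ^ 2 * circleInt c (gradSq v) ρ / s) := by
  have hv1 : ContDiff ℝ 1 v := hv.of_le one_le_two
  have cq := hq.continuous
  rw [diskInt_jacobian hq hv]
  refine (integral_mul_le_of_pos (by linarith [Real.pi_pos])
    (by fun_prop : Continuous fun θ => q (polarPt c ρ θ))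
    (continuous_angularDeriv hv1 c ρ) hs).trans ?_
  rw [circleInt]
  gcongr
  exact integral_angularDeriv_sq_le hv1 c ρ

/-- The mean of `q` may be subtracted because `angularDeriv v` has mean zero; Wirtinger's
inequality then makes this bound sharp. -/
theorem diskInt_jacobian_le (hq : ContDiff ℝ 1 q) (hv : ContDiff ℝ 2 v) (c : ℝ²) (ρ : ℝ) :
    diskInt c (jacobian q v) ρ ≤
      1 / 2 * (ρ ^ 2 * circleInt c (gradSq q) ρ + ρ ^ 2 * circleInt c (gradSq v) ρ) := by
  have hv1 : ContDiff ℝ 1 v := hv.of_le one_le_two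
  have cq := hq.continuous
  obtain ⟨m, hm⟩ := exists_integral_sub_sq_le_mul_circleInt_gradSq hq c ρ
  have hsub : ∫ θ in (-π)..π, q (polarPt c ρ θ) * angularDeriv v c ρ θ =
      ∫ θ in (-π)..π, (q (polarPt c ρ θ) - m) * angularDeriv v c ρ θ := by
    simp only [sub_mul]
    rw [intervalIntegral.integral_sub (Continuous.intervalIntegrable (by fun_prop) _ _)
      (Continuous.intervalIntegrable (by fun_prop) _ _), intervalIntegral.integral_const_mul,
      integral_angularDeriv hv1, mul_zero, sub_zero]
  have hamgm := integral_mul_le_of_pos (by linarith [Real.pi_pos] : -π ≤ π)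
    (by fun_prop : Continuous fun θ => q (polarPt c ρ θ) - m)
    (continuous_angularDeriv hv1 c ρ) one_pos
  rw [one_mul, div_one] at hamgm
  rw [diskInt_jacobian hq hv, hsub]
  refine hamgm.trans ?_
  gcongr
  exact integral_angularDeriv_sq_le hv1 c ρ

end Circle

/-! ### From integral bounds to pointwise bounds -/

theorem exists_circleInt_le_of_diskInt_lt {F : ℝ² → ℝ} (hF : Continuous F) (c : ℝ²) {R Z : ℝ}
    (hR : 0 < R) (hF0 : ∀ x, 0 ≤ F x) (hZ : diskInt c F (R / 2) < Z * R ^ 2) :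
    ∃ ρ ∈ Icc (R / 4) (R / 2), circleInt c F ρ ≤ 32 * Z := by
  by_contra! hcon
  have hsplit := diskInt_sub_diskInt c hF (R / 4) (R / 2)
  have h4 : 0 ≤ diskInt c F (R / 4) := diskInt_nonneg c (by positivity) fun x _ => hF0 x
  have h2 : 0 ≤ diskInt c F (R / 2) := diskInt_nonneg c (by positivity) fun x _ => hF0 x
  have hZ0 : 0 < Z := pos_of_mul_pos_left (h2.trans_lt hZ) (sq_nonneg R)
  have hlow : ∫ _ in (R / 4)..(R / 2), R / 4 * (32 * Z) ≤
      ∫ t in (R / 4)..(R / 2), t * circleInt c F t :=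
    intervalIntegral.integral_mono_on (by linarith) intervalIntegrable_const
      (Continuous.intervalIntegrable (by fun_prop) _ _) fun t ht =>
      mul_le_mul ht.1 (hcon t ht).le (by positivity) ((by positivity : 0 ≤ R / 4).trans ht.1)
  rw [intervalIntegral.integral_const, smul_eq_mul] at hlow
  nlinarith [sq_nonneg R]

section EnergyDecay

variable {q G : ℝ² → ℝ} {R γ p B : ℝ}

theorem abs_circleInt_div_two_pi_sub_center_le (hq : ContDiff ℝ 1 q) (hG : Continuous G) (c : ℝ²)
    {y : ℝ} (hR : 0 < R) (hγ : 0 < γ) (hγp : 2 * γ ≤ p) (hB : 0 ≤ B) (hG0 : ∀ x, 0 ≤ G x)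
    (hqG : ∀ x, gradSq q x ≤ G x)
    (hode : ∀ ρ ∈ Ioc 0 R, γ * diskInt c G ρ ≤ ρ * (ρ * circleInt c G ρ) + B * ρ ^ p)
    (hy : 0 < y) (hy2 : diskInt c G R + 2 / p * B * R ^ p ≤ y ^ 2) :
    |circleInt c q R / (2 * π) - q c| ≤ (1 + 1 / γ) * y := by
  have cq := hq.continuous
  have hm' : ∀ ρ ∈ Ioc 0 R, ρ * ((∫ θ in (-π)..π, (Real.cos θ * pd 0 q (polarPt c ρ θ) +
      Real.sin θ * pd 1 q (polarPt c ρ θ))) / (2 * π)) ^ 2 ≤ ρ * circleInt c G ρ := by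
    intro ρ hρ
    refine mul_le_mul_of_nonneg_left ((sq_integral_div_two_pi_le (by fun_prop)).trans ?_) hρ.1.le
    have hcG : 0 ≤ circleInt c G ρ := circleInt_nonneg c hρ.1.le fun x _ => hG0 x
    refine (div_le_div_of_nonneg_right ?_ (by positivity)).trans
      (div_le_self hcG (by linarith [Real.pi_gt_three]))
    exact intervalIntegral.integral_mono_on (by linarith [Real.pi_pos])
      (Continuous.intervalIntegrable (by fun_prop) _ _)
      (Continuous.intervalIntegrable (by fun_prop) _ _) fun θ _ =>
      (sq_cos_mul_add_sin_mul_le _ _ _).trans (hqG _)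
  have hgrowth : ∀ r ∈ Ioc 0 R,
      |circleInt c q R / (2 * π) - circleInt c q r / (2 * π)| ≤ (1 + 1 / γ) * y := fun r hr =>
    abs_sub_le_of_energy_ode hR hγ hγp hB hy (fun ρ _ => hasDerivAt_diskInt c hG ρ)
      (fun ρ hρ => diskInt_nonneg c hρ.1.le fun x _ => hG0 x) hode
      (fun ρ _ => (hasDerivAt_circleInt hq c ρ).div_const _) hm' hy2 hr
  have hcenter : circleInt c q 0 / (2 * π) = q c := by
    simp only [circleInt, polarPt_zero, intervalIntegral.integral_const, smul_eq_mul]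
    field_simp
    ring
  have hlim : Filter.Tendsto (fun r => |circleInt c q R / (2 * π) - circleInt c q r / (2 * π)|)
      (𝓝[>] 0) (𝓝 |circleInt c q R / (2 * π) - q c|) := by
    rw [← hcenter]
    exact Continuous.tendsto (by fun_prop) 0 |>.mono_left nhdsWithin_le_nhds
  exact le_of_tendsto hlim (Filter.eventually_of_mem (Ioc_mem_nhdsGT hR) hgrowth)

theorem center_sq_le_of_energy_ode (hq : ContDiff ℝ 1 q) (hG : Continuous G) (c : ℝ²)
    {X : ℝ} (hR : 0 < R) (hγ : 0 < γ) (hγp : 2 * γ ≤ p) (hB : 0 ≤ B) (hG0 : ∀ x, 0 ≤ G x)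
    (hqG : ∀ x, gradSq q x ≤ G x)
    (hode : ∀ ρ ∈ Ioc 0 R, γ * diskInt c G ρ ≤ ρ * (ρ * circleInt c G ρ) + B * ρ ^ p)
    (hX : 0 < X) (hDX : diskInt c G R + 2 / p * B * R ^ p ≤ X) :
    q c ^ 2 ≤ circleInt c (fun x => q x ^ 2) R + 2 * (1 + 1 / γ) ^ 2 * X := by
  have cq := hq.continuous
  have hmean : (circleInt c q R / (2 * π)) ^ 2 ≤ circleInt c (fun x => q x ^ 2) R / 2 :=
    (sq_integral_div_two_pi_le (by fun_prop)).trans <| div_le_div_of_nonneg_left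
      (circleInt_nonneg c hR.le fun x _ => sq_nonneg (q x)) two_pos (by linarith [Real.pi_gt_three])
  have hdiff : (circleInt c q R / (2 * π) - q c) ^ 2 ≤ (1 + 1 / γ) ^ 2 * X := by
    have h := abs_circleInt_div_two_pi_sub_center_le hq hG c hR hγ hγp hB hG0 hqG hode
      (Real.sqrt_pos.2 hX) (by rwa [Real.sq_sqrt hX.le])
    rw [← sq_abs, ← Real.sq_sqrt hX.le, ← mul_pow]
    gcongr
  nlinarith [sq_nonneg (2 * (circleInt c q R / (2 * π)) - q c)]

end EnergyDecay

section JacobianInequality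

variable {q v H : ℝ² → ℝ} {c : ℝ²} {R K K₁ : ℝ}

theorem diskInt_gradSq_le_jacobian (hq : ContDiff ℝ 1 q) (hv : ContDiff ℝ 1 v) (hH : Continuous H)
    (hpt : ∀ x ∈ Metric.closedBall c R,
      gradSq q x + gradSq v x ≤ K * jacobian q v x + K₁ * H x) {ρ : ℝ} (hρ : ρ ∈ Icc 0 R) :
    diskInt c (fun x => gradSq q x + gradSq v x) ρ ≤
      K * diskInt c (jacobian q v) ρ + K₁ * diskInt c H ρ := by
  rw [← diskInt_const_mul, ← diskInt_const_mul, ← diskInt_add c (by fun_prop) (by fun_prop)]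
  exact diskInt_mono c (by fun_prop) (by fun_prop) hρ.1 fun x hx =>
    hpt x (Metric.closedBall_subset_closedBall hρ.2 hx)

theorem mul_diskInt_gradSq_le_circleInt (hq : ContDiff ℝ 1 q) (hv : ContDiff ℝ 2 v)
    (hH : Continuous H) (hK : 0 < K) (hK₁ : 0 ≤ K₁) (hpt : ∀ x ∈ Metric.closedBall c R,
      gradSq q x + gradSq v x ≤ K * jacobian q v x + K₁ * H x) {ρ h : ℝ} (hρ : ρ ∈ Icc 0 R)
    (hh : diskInt c H ρ ≤ h) :
    2 / K * diskInt c (fun x => gradSq q x + gradSq v x) ρ ≤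
      ρ * (ρ * circleInt c (fun x => gradSq q x + gradSq v x) ρ) +
        2 / K * K₁ * h := by
  have hv1 : ContDiff ℝ 1 v := hv.of_le one_le_two
  have hD := diskInt_gradSq_le_jacobian hq hv1 hH hpt hρ
  have hJ := diskInt_jacobian_le hq hv c ρ
  rw [circleInt_add c (by fun_prop) (by fun_prop)]
  calc 2 / K * diskInt c (fun x => gradSq q x + gradSq v x) ρ
      ≤ 2 / K * (K * (1 / 2 * (ρ ^ 2 * circleInt c (gradSq q) ρ +
          ρ ^ 2 * circleInt c (gradSq v) ρ)) + K₁ * h) := by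
        gcongr
        exact hD.trans (by gcongr)
    _ = _ := by field_simp

theorem diskInt_gradSq_half_le (hq : ContDiff ℝ 1 q) (hv : ContDiff ℝ 2 v) (hH : Continuous H)
    (hR : 0 < R) (hK : 0 < K) (hK₁ : 0 ≤ K₁) (hpt : ∀ x ∈ Metric.closedBall c R,
      gradSq q x + gradSq v x ≤ K * jacobian q v x + K₁ * H x) {N : ℝ}
    (hHN : ∀ ρ ∈ Icc 0 R, diskInt c H ρ ≤ N)
    (hqN : diskInt c (fun x => q x ^ 2) R ≤ N * R ^ 2) :
    diskInt c (fun x => gradSq q x + gradSq v x) (R / 2) ≤ (16 * K ^ 2 + 8 * K₁) * N := by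
  have hv1 : ContDiff ℝ 1 v := hv.of_le one_le_two
  have cq := hq.continuous
  have hN0 : 0 ≤ N := by simpa using hHN 0 ⟨le_rfl, hR.le⟩
  have hcq (ρ : ℝ) (hρ : ρ ∈ Icc 0 R) : 0 ≤ circleInt c (gradSq q) ρ :=
    circleInt_nonneg c hρ.1 fun x _ => gradSq_nonneg q x
  have hcacc := half_mul_sq_le_of_caccioppoli_ode (k := K / 2) (N₀ := K₁ * N) hR (by positivity)
    (by positivity)
    (hasDerivAt_diskInt c (by fun_prop : Continuous fun x => gradSq q x + gradSq v x))
    (by fun_prop) (by fun_prop : Continuous (circleInt c fun x => q x ^ 2))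
    (diskInt_zero_radius c _)
    (fun ρ hρ => circleInt_nonneg c hρ.1 fun x _ => sq_nonneg (q x))
    (fun ρ hρ => mul_nonneg hρ.1 <| circleInt_nonneg c hρ.1 fun x _ =>
      add_nonneg (gradSq_nonneg q x) (gradSq_nonneg v x))
    (fun ρ hρ s hs => ?_)
  · change _ ≤ _ * diskInt c (fun x => q x ^ 2) R + _ at hcacc
    have := mul_le_mul_of_nonneg_left hqN (by positivity : 0 ≤ 16 * K ^ 2)
    exact le_of_mul_le_mul_right (by linarith) (pow_pos hR 2)
  · have hD := diskInt_gradSq_le_jacobian hq hv1 hH hpt hρ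
    have hJ := mul_le_mul_of_nonneg_left (diskInt_jacobian_le_of_pos hq hv c ρ hs) hK.le
    have hH' := mul_le_mul_of_nonneg_left (hHN ρ hρ) hK₁
    have hcirc : ρ ^ 2 * circleInt c (gradSq v) ρ / s ≤
        ρ * (ρ * circleInt c (fun x => gradSq q x + gradSq v x) ρ) / s := by
      rw [circleInt_add c (by fun_prop) (by fun_prop), ← mul_assoc, ← sq]
      gcongr
      exact le_add_of_nonneg_left (hcq ρ hρ)
    have := mul_le_mul_of_nonneg_left hcirc hK.le
    linarith

theorem exists_radius_of_jacobian (hq : ContDiff ℝ 1 q) (hv : ContDiff ℝ 2 v) (hH : Continuous H)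
    (hR : 0 < R) (hK : 0 < K) (hK₁ : 0 ≤ K₁) (hpt : ∀ x ∈ Metric.closedBall c R,
      gradSq q x + gradSq v x ≤ K * jacobian q v x + K₁ * H x) {Y : ℝ}
    (hHY : ∀ ρ ∈ Icc 0 R, diskInt c H ρ ≤ Y)
    (hqv : diskInt c (fun x => q x ^ 2 + v x ^ 2) R < Y * R ^ 2) :
    ∃ ρ ∈ Ioc 0 R, circleInt c (fun x => q x ^ 2 + v x ^ 2) ρ ≤ 32 * Y ∧
      diskInt c (fun x => gradSq q x + gradSq v x) ρ ≤ (16 * K ^ 2 + 8 * K₁) * Y := by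
  have hv1 : ContDiff ℝ 1 v := hv.of_le one_le_two
  have cq := hq.continuous
  have cv := hv.continuous
  obtain ⟨ρ, hρ, hcirc⟩ := exists_circleInt_le_of_diskInt_lt
    (by fun_prop : Continuous fun x => q x ^ 2 + v x ^ 2) c hR (fun x => by positivity)
    ((diskInt_mono_radius c (by fun_prop) (by positivity) (by linarith)
      fun x _ => by positivity).trans_lt hqv)
  have hρ0 : 0 < ρ := (by positivity : 0 < R / 4).trans_le hρ.1
  have hq2 : diskInt c (fun x => q x ^ 2) R ≤ Y * R ^ 2 :=
    (diskInt_mono c (by fun_prop) (by fun_prop) hR.le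
      fun x _ => le_add_of_nonneg_right (sq_nonneg (v x))).trans hqv.le
  exact ⟨ρ, ⟨hρ0, hρ.2.trans (by linarith)⟩, hcirc,
    (diskInt_mono_radius c (by fun_prop) hρ0.le hρ.2 fun x _ =>
      add_nonneg (gradSq_nonneg q x) (gradSq_nonneg v x)).trans
    (diskInt_gradSq_half_le hq hv hH hR hK hK₁ hpt hHY hq2)⟩

theorem center_sq_add_sq_le_of_jacobian (hq : ContDiff ℝ 2 q) (hv : ContDiff ℝ 2 v)
    (hH : Continuous H) {p B Y : ℝ} (hR : 0 < R) (hp : 0 < p) (hK : 4 ≤ p * K) (hK₁ : 0 ≤ K₁)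
    (hB : 0 ≤ B) (hpt : ∀ x ∈ Metric.closedBall c R,
      gradSq q x + gradSq v x ≤ K * jacobian q v x + K₁ * H x)
    (hHB : ∀ ρ ∈ Icc 0 R, diskInt c H ρ ≤ B * ρ ^ p) (hY : 0 < Y)
    (hqv : diskInt c (fun x => q x ^ 2 + v x ^ 2) R < Y * R ^ 2) (hBY : B * R ^ p ≤ Y) :
    q c ^ 2 + v c ^ 2 ≤ (32 + 4 * (1 + K / 2) ^ 2 * (16 * K ^ 2 + 9 * K₁)) * Y := by
  have hq1 : ContDiff ℝ 1 q := hq.of_le one_le_two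
  have hv1 : ContDiff ℝ 1 v := hv.of_le one_le_two
  have cq := hq.continuous
  have cv := hv.continuous
  have hK0 : 0 < K := pos_of_mul_pos_right (by linarith) hp.le
  have hBρ : ∀ ρ ∈ Icc 0 R, B * ρ ^ p ≤ Y := fun ρ hρ =>
    (mul_le_mul_of_nonneg_left (Real.rpow_le_rpow hρ.1 hρ.2 hp.le) hB).trans hBY
  obtain ⟨ρ, ⟨hρ0, hρR⟩, hcirc, hD⟩ := exists_radius_of_jacobian hq1 hv hH hR hK0 hK₁ hpt
    (fun r hr => (hHB r hr).trans (hBρ r hr)) hqv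
  have hode : ∀ r ∈ Ioc 0 ρ, 2 / K * diskInt c (fun x => gradSq q x + gradSq v x) r ≤
      r * (r * circleInt c (fun x => gradSq q x + gradSq v x) r) + 2 / K * K₁ * B * r ^ p := by
    intro r hr
    have hr' : r ∈ Icc 0 R := ⟨hr.1.le, hr.2.trans hρR⟩
    rw [mul_assoc _ B]
    exact mul_diskInt_gradSq_le_circleInt hq1 hv hH hK0 hK₁ hpt hr' (hHB r hr')
  have hX : diskInt c (fun x => gradSq q x + gradSq v x) ρ +
      2 / p * (2 / K * K₁ * B) * ρ ^ p ≤ (16 * K ^ 2 + 9 * K₁) * Y := by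
    have hpK : 2 / p * (2 / K * K₁ * B) * ρ ^ p = 4 / (p * K) * (K₁ * (B * ρ ^ p)) := by
      field_simp; ring
    have hBY' := mul_le_mul_of_nonneg_left (hBρ ρ ⟨hρ0.le, hρR⟩) hK₁
    have := mul_le_of_le_one_left (by positivity : 0 ≤ K₁ * (B * ρ ^ p))
      (div_le_one_of_le₀ hK (by positivity))
    linarith
  have hγp : 2 * (2 / K) ≤ p := by rw [← mul_div_assoc, div_le_iff₀ hK0]; linarith
  have hcenter {f : ℝ² → ℝ} (hf : ContDiff ℝ 1 f)
      (hfG : ∀ x, gradSq f x ≤ gradSq q x + gradSq v x) :=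
    center_sq_le_of_energy_ode hf (by fun_prop) c hρ0 (by positivity) hγp (by positivity)
      (fun x => add_nonneg (gradSq_nonneg q x) (gradSq_nonneg v x)) hfG hode (by positivity) hX
  have hq' := hcenter hq1 fun x => le_add_of_nonneg_right (gradSq_nonneg v x)
  have hv' := hcenter hv1 fun x => le_add_of_nonneg_left (gradSq_nonneg q x)
  rw [circleInt_add c (by fun_prop) (by fun_prop)] at hcirc
  rw [one_div_div] at hq' hv'
  linarith

end JacobianInequality

/-! ### The conductivity equation and vector fields tangent to the level sets of the coefficient -/

/-- On `s`, the coefficient `a` takes values in `[l, L]` and `u` solves `div (a ∇u) = 0`, with the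
divergence expanded. -/
structure IsConductivitySolutionOn (a u : ℝ² → ℝ) (l L : ℝ) (s : Set ℝ²) : Prop where
  le_coeff : ∀ x ∈ s, l ≤ a x
  coeff_le : ∀ x ∈ s, a x ≤ L
  div_eq_zero : ∀ x ∈ s, a x * (pd 0 (pd 0 u) x + pd 1 (pd 1 u) x) +
    (pd 0 a x * pd 0 u x + pd 1 a x * pd 1 u x) = 0

theorem IsConductivitySolutionOn.mono {a u : ℝ² → ℝ} {l L : ℝ} {s t : Set ℝ²}
    (h : IsConductivitySolutionOn a u l L t) (hst : s ⊆ t) : IsConductivitySolutionOn a u l L s :=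
  ⟨fun x hx => h.le_coeff x (hst hx), fun x hx => h.coeff_le x (hst hx),
    fun x hx => h.div_eq_zero x (hst hx)⟩

/-- The derivative of `f` along the vector field with components `T 0`, `T 1`. -/
noncomputable def fieldDeriv (T : Fin 2 → ℝ² → ℝ) (f : ℝ² → ℝ) (x : ℝ²) : ℝ :=
  T 0 x * pd 0 f x + T 1 x * pd 1 f x

/-- The derivative of `f` along the field `(T 1, -T 0)` obtained by turning `T` through a right
angle. -/
noncomputable def perpDeriv (T : Fin 2 → ℝ² → ℝ) (f : ℝ² → ℝ) (x : ℝ²) : ℝ :=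
  T 1 x * pd 0 f x - T 0 x * pd 1 f x

/-- The failure of the vector field `T` to be conformal Killing: the squared length of the
trace-free part of its symmetrized gradient (up to a factor). -/
noncomputable def killingDefect (T : Fin 2 → ℝ² → ℝ) (x : ℝ²) : ℝ :=
  (pd 1 (T 0) x + pd 0 (T 1) x) ^ 2 + (pd 0 (T 0) x - pd 1 (T 1) x) ^ 2

/-- The constant in front of the Jacobian in `gradSq_add_gradSq_le_jacobian`, for coefficients
between `l` and `L`. -/
noncomputable def jacobianConst (l L : ℝ) : ℝ := (1 + 2 * L ^ 2) * (2 / l)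

/-- The constant in front of the Killing defect in `gradSq_add_gradSq_le_jacobian`, for
coefficients between `l` and `L`. -/
noncomputable def defectConst (l L : ℝ) : ℝ := (1 + 2 * L ^ 2) * (L / l) + 2 * L ^ 2

/-- The constant in `gradSq_center_le_of_field`, for coefficients between `l` and `L` and a vector
field whose squared length is at most `M`, and at least `m` at the center. -/
noncomputable def gradConst (l L m M : ℝ) : ℝ :=
  (32 + 4 * (1 + jacobianConst l L / 2) ^ 2 *
    (16 * jacobianConst l L ^ 2 + 9 * defectConst l L)) * (M * (1 + L ^ 2)) / (m * l ^ 2)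

theorem killingDefect_nonneg (T : Fin 2 → ℝ² → ℝ) (x : ℝ²) : 0 ≤ killingDefect T x := by
  unfold killingDefect; positivity

@[fun_prop]
theorem continuous_killingDefect {T : Fin 2 → ℝ² → ℝ} (hT : ∀ i, ContDiff ℝ 1 (T i)) :
    Continuous (killingDefect T) := by
  have := continuous_pd (hT 0)
  have := continuous_pd (hT 1)
  unfold killingDefect
  fun_prop

theorem fieldDeriv_sq_add_perpDeriv_sq (T : Fin 2 → ℝ² → ℝ) (f : ℝ² → ℝ) (x : ℝ²) :
    fieldDeriv T f x ^ 2 + perpDeriv T f x ^ 2 = (T 0 x ^ 2 + T 1 x ^ 2) * gradSq f x := by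
  unfold fieldDeriv perpDeriv gradSq; ring

theorem gradConst_pos {l L m M : ℝ} (hl : 0 < l) (hL : 0 < L) (hm : 0 < m) (hM : 0 < M) :
    0 < gradConst l L m M := by
  unfold gradConst jacobianConst defectConst; positivity

/-- The perturbed Cauchy–Riemann (Beltrami) system `∂₀v = -a ∂₁q + e₁`, `∂₁v = a ∂₀q + e₂` makes
`(q, v)` quasiregular up to the error `h`. -/
theorem add_sq_le_jacobian_of_beltrami {a l L qx qy vx vy e₁ e₂ h : ℝ} (hl : 0 < l) (hla : l ≤ a)
    (haL : a ≤ L) (hvx : vx = -a * qy + e₁) (hvy : vy = a * qx + e₂)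
    (he : e₁ ^ 2 + e₂ ^ 2 = a ^ 2 * h) (hh : 0 ≤ h) :
    qx ^ 2 + qy ^ 2 + (vx ^ 2 + vy ^ 2) ≤
      jacobianConst l L * (qx * vy - qy * vx) + defectConst l L * h := by
  have ha : 0 < a := hl.trans_le hla
  set g := qx ^ 2 + qy ^ 2 with hg
  set J := qx * vy - qy * vx with hJ
  have hgJ : a / 2 * g ≤ J + a / 2 * h := by
    have hsq : 2 * a * (J + a / 2 * h - a / 2 * g) = (a * qx + e₂) ^ 2 + (a * qy - e₁) ^ 2 := by
      rw [hJ, hvx, hvy, hg]; linear_combination -he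
    have : 0 ≤ 2 * a * (J + a / 2 * h - a / 2 * g) := hsq ▸ by positivity
    linarith [nonneg_of_mul_nonneg_right this (by positivity)]
  have hq : g ≤ 2 / l * (J + L / 2 * h) := by
    rw [div_mul_eq_mul_div, le_div_iff₀ hl]
    have : l * g ≤ a * g := by gcongr
    have : a * h ≤ L * h := by gcongr
    linarith
  have hv : vx ^ 2 + vy ^ 2 ≤ 2 * L ^ 2 * (g + h) := by
    calc vx ^ 2 + vy ^ 2 ≤ 2 * a ^ 2 * (g + h) := by
          rw [hvx, hvy, hg]
          linarith [sq_nonneg (a * qy + e₁), sq_nonneg (a * qx - e₂)]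
      _ ≤ 2 * L ^ 2 * (g + h) := by gcongr
  calc g + (vx ^ 2 + vy ^ 2) ≤ (1 + 2 * L ^ 2) * g + 2 * L ^ 2 * h := by linarith
    _ ≤ (1 + 2 * L ^ 2) * (2 / l * (J + L / 2 * h)) + 2 * L ^ 2 * h := by gcongr
    _ = jacobianConst l L * J + defectConst l L * h := by unfold jacobianConst defectConst; ring

section Field

variable {a u : ℝ² → ℝ} {T : Fin 2 → ℝ² → ℝ} {l L : ℝ} {s : Set ℝ²}

theorem contDiff_fieldDeriv (hu : ContDiff ℝ 3 u) (hT : ∀ i, ContDiff ℝ 2 (T i)) :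
    ContDiff ℝ 2 (fieldDeriv T u) :=
  ((hT 0).mul (contDiff_pd hu (by norm_num) 0)).add ((hT 1).mul (contDiff_pd hu (by norm_num) 1))

theorem contDiff_perpDeriv (hu : ContDiff ℝ 3 u) (hT : ∀ i, ContDiff ℝ 2 (T i)) :
    ContDiff ℝ 2 (perpDeriv T u) :=
  ((hT 1).mul (contDiff_pd hu (by norm_num) 0)).sub ((hT 0).mul (contDiff_pd hu (by norm_num) 1))

theorem pd_fieldDeriv (hu : ContDiff ℝ 2 u) (hT : ∀ i, ContDiff ℝ 1 (T i)) (i : Fin 2) (x : ℝ²) :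
    pd i (fieldDeriv T u) x = T 0 x * pd i (pd 0 u) x + pd 0 u x * pd i (T 0) x +
      (T 1 x * pd i (pd 1 u) x + pd 1 u x * pd i (T 1) x) := by
  have dT j := (hT j).differentiable one_ne_zero x
  have du j := (contDiff_pd hu (m := 1) (by norm_num) j).differentiable one_ne_zero x
  unfold fieldDeriv
  rw [pd_add ((dT 0).fun_mul (du 0)) ((dT 1).fun_mul (du 1)), pd_mul (dT 0) (du 0),
    pd_mul (dT 1) (du 1)]

theorem pd_perpDeriv (hu : ContDiff ℝ 2 u) (hT : ∀ i, ContDiff ℝ 1 (T i)) (i : Fin 2) (x : ℝ²) :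
    pd i (perpDeriv T u) x = T 1 x * pd i (pd 0 u) x + pd 0 u x * pd i (T 1) x -
      (T 0 x * pd i (pd 1 u) x + pd 1 u x * pd i (T 0) x) := by
  have dT j := (hT j).differentiable one_ne_zero x
  have du j := (contDiff_pd hu (m := 1) (by norm_num) j).differentiable one_ne_zero x
  unfold perpDeriv
  rw [pd_sub ((dT 1).fun_mul (du 0)) ((dT 0).fun_mul (du 1)), pd_mul (dT 1) (du 0),
    pd_mul (dT 0) (du 1)]

/-- Since `T` annihilates `a`, the derivative `T·∇u` and its conjugate flux satisfy a Beltrami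
system whose inhomogeneity is controlled by the Killing defect of `T`. -/
theorem gradSq_add_gradSq_le_jacobian (hu : ContDiff ℝ 3 u) (ha : ContDiff ℝ 1 a)
    (hT : ∀ i, ContDiff ℝ 2 (T i)) (h : IsConductivitySolutionOn a u l L s) (hl : 0 < l)
    (hTa : ∀ x ∈ s, fieldDeriv T a x = 0) {x : ℝ²} (hx : x ∈ s) :
    gradSq (fieldDeriv T u) x + gradSq (fun y => a y * perpDeriv T u y) x ≤
      jacobianConst l L * jacobian (fieldDeriv T u) (fun y => a y * perpDeriv T u y) x +
        defectConst l L * (killingDefect T x * gradSq u x) := by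
  have hu2 : ContDiff ℝ 2 u := hu.of_le (by norm_num)
  have hT1 j : ContDiff ℝ 1 (T j) := (hT j).of_le one_le_two
  have hdiv := h.div_eq_zero x hx
  have hta := hTa x hx
  have hcomm := pd_zero_pd_one_comm hu2 x
  have hv i : pd i (fun y => a y * perpDeriv T u y) x =
      a x * pd i (perpDeriv T u) x + perpDeriv T u x * pd i a x :=
    pd_mul (ha.differentiable one_ne_zero x)
      ((contDiff_perpDeriv hu hT).differentiable two_ne_zero x) i
  unfold fieldDeriv at hta
  refine add_sq_le_jacobian_of_beltrami
    (e₁ := a x * ((pd 1 (T 0) x + pd 0 (T 1) x) * pd 0 u x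
      - (pd 0 (T 0) x - pd 1 (T 1) x) * pd 1 u x))
    (e₂ := -(a x * ((pd 0 (T 0) x - pd 1 (T 1) x) * pd 0 u x
      + (pd 1 (T 0) x + pd 0 (T 1) x) * pd 1 u x)))
    hl (h.le_coeff x hx) (h.coeff_le x hx) ?_ ?_ ?_ ?_
  · rw [hv, pd_perpDeriv hu2 hT1, pd_fieldDeriv hu2 hT1, perpDeriv, hcomm]
    linear_combination T 1 x * hdiv - pd 1 u x * hta
  · rw [hv, pd_perpDeriv hu2 hT1, pd_fieldDeriv hu2 hT1, perpDeriv, hcomm]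
    linear_combination -T 0 x * hdiv + pd 0 u x * hta
  · unfold killingDefect gradSq; ring
  · exact mul_nonneg (killingDefect_nonneg T x) (gradSq_nonneg u x)

theorem fieldDeriv_sq_add_flux_sq_le {M : ℝ} {x : ℝ²} (ha0 : 0 ≤ a x) (haL : a x ≤ L)
    (hTM : T 0 x ^ 2 + T 1 x ^ 2 ≤ M) :
    fieldDeriv T u x ^ 2 + (a x * perpDeriv T u x) ^ 2 ≤ M * (1 + L ^ 2) * gradSq u x := by
  have hsum : fieldDeriv T u x ^ 2 + perpDeriv T u x ^ 2 ≤ M * gradSq u x := by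
    rw [fieldDeriv_sq_add_perpDeriv_sq]
    exact mul_le_mul_of_nonneg_right hTM (gradSq_nonneg u x)
  have hflux : (a x * perpDeriv T u x) ^ 2 ≤ L ^ 2 * (M * gradSq u x) := by
    rw [mul_pow]
    have : perpDeriv T u x ^ 2 ≤ M * gradSq u x := by linarith [sq_nonneg (fieldDeriv T u x)]
    gcongr
  linarith [sq_nonneg (perpDeriv T u x)]

theorem le_fieldDeriv_sq_add_flux_sq {m : ℝ} {x : ℝ²} (hl : 0 ≤ l) (hl1 : l ≤ 1) (hla : l ≤ a x)
    (hTm : m ≤ T 0 x ^ 2 + T 1 x ^ 2) :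
    m * l ^ 2 * gradSq u x ≤ fieldDeriv T u x ^ 2 + (a x * perpDeriv T u x) ^ 2 := by
  have hq : l ^ 2 * fieldDeriv T u x ^ 2 ≤ fieldDeriv T u x ^ 2 :=
    mul_le_of_le_one_left (sq_nonneg _) (pow_le_one₀ hl hl1)
  have hv : l ^ 2 * perpDeriv T u x ^ 2 ≤ (a x * perpDeriv T u x) ^ 2 := by rw [mul_pow]; gcongr
  calc m * l ^ 2 * gradSq u x = l ^ 2 * (m * gradSq u x) := by ring
    _ ≤ l ^ 2 * (fieldDeriv T u x ^ 2 + perpDeriv T u x ^ 2) := by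
        rw [fieldDeriv_sq_add_perpDeriv_sq]
        gcongr
        exact gradSq_nonneg u x
    _ ≤ fieldDeriv T u x ^ 2 + (a x * perpDeriv T u x) ^ 2 := by linarith

theorem six_le_jacobianConst (hl : 0 < l) (hl1 : l ≤ 1) (hL : 1 ≤ L) : 6 ≤ jacobianConst l L := by
  rw [jacobianConst, mul_div_assoc', le_div_iff₀ hl]; nlinarith

theorem gradSq_center_le_of_field (hu : ContDiff ℝ 3 u) (ha : ContDiff ℝ 2 a)
    (hT : ∀ i, ContDiff ℝ 2 (T i)) {c : ℝ²} {R p B Y m M : ℝ} (hR : 0 < R) (hl : 0 < l)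
    (hl1 : l ≤ 1) (hL : 1 ≤ L) (hp : 2 / 3 ≤ p) (hB : 0 ≤ B) (hm : 0 < m) (hM : 1 ≤ M)
    (h : IsConductivitySolutionOn a u l L (Metric.closedBall c R))
    (hTa : ∀ x ∈ Metric.closedBall c R, fieldDeriv T a x = 0)
    (hTM : ∀ x ∈ Metric.closedBall c R, T 0 x ^ 2 + T 1 x ^ 2 ≤ M)
    (hTm : m ≤ T 0 c ^ 2 + T 1 c ^ 2)
    (hHB : ∀ ρ ∈ Icc 0 R, diskInt c (fun x => killingDefect T x * gradSq u x) ρ ≤ B * ρ ^ p)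
    (hY : 0 < Y) (huY : diskInt c (gradSq u) R < Y * R ^ 2) (hBY : B * R ^ p ≤ Y) :
    gradSq u c ≤ gradConst l L m M * Y := by
  have hu1 : ContDiff ℝ 1 u := hu.of_le (by norm_num)
  have hT1 j : ContDiff ℝ 1 (T j) := (hT j).of_le one_le_two
  have hq := contDiff_fieldDeriv hu hT
  have hv : ContDiff ℝ 2 fun x => a x * perpDeriv T u x := ha.mul (contDiff_perpDeriv hu hT)
  have cq := hq.continuous
  have cv := hv.continuous
  have cgrad := continuous_gradSq hu1
  have hMpos : 1 ≤ M * (1 + L ^ 2) := one_le_mul_of_one_le_of_one_le hM (by nlinarith)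
  have hK := six_le_jacobianConst hl hl1 hL
  have hqv : diskInt c (fun x => fieldDeriv T u x ^ 2 + (a x * perpDeriv T u x) ^ 2) R <
      M * (1 + L ^ 2) * Y * R ^ 2 := by
    calc _ ≤ diskInt c (fun x => M * (1 + L ^ 2) * gradSq u x) R :=
          diskInt_mono c (by fun_prop) (by fun_prop) hR.le fun x hx =>
            fieldDeriv_sq_add_flux_sq_le (hl.le.trans (h.le_coeff x hx)) (h.coeff_le x hx)
              (hTM x hx)
      _ = M * (1 + L ^ 2) * diskInt c (gradSq u) R := diskInt_const_mul ..
      _ < _ := by rw [mul_assoc _ Y]; gcongr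
  have hupper := center_sq_add_sq_le_of_jacobian hq hv
    ((continuous_killingDefect hT1).mul cgrad) hR (by linarith) (by nlinarith)
    (by unfold defectConst; positivity) hB
    (fun x hx => gradSq_add_gradSq_le_jacobian hu (ha.of_le one_le_two) hT h hl hTa hx) hHB
    (by positivity) hqv (hBY.trans (le_mul_of_one_le_left hY.le hMpos))
  have hlower : m * l ^ 2 * gradSq u c ≤ _ := le_fieldDeriv_sq_add_flux_sq hl.le hl1
    (h.le_coeff c (Metric.mem_closedBall_self hR.le)) hTm
  rw [gradConst, div_mul_eq_mul_div, le_div_iff₀ (by positivity), mul_comm]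
  linarith

end Field

/-! ### Disk integrals as area integrals -/

/-- The open disk of radius `ρ` about `c`, as a subset of `ℝ × ℝ` so that Fubini's theorem and the
polar coordinates of the library apply to it. -/
def diskRegion (c : ℝ²) (ρ : ℝ) : Set (ℝ × ℝ) := {p | dist !₂[p.1, p.2] c < ρ}

@[fun_prop]
theorem continuous_euclideanPair {X : Type*} [TopologicalSpace X] {f g : X → ℝ} (hf : Continuous f)
    (hg : Continuous g) : Continuous fun x => !₂[f x, g x] :=
  (PiLp.continuous_toLp 2 _).comp <| continuous_pi <| Fin.forall_fin_two.2 ⟨hf, hg⟩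

theorem dist_sq_eq (x y : ℝ²) : dist x y ^ 2 = (x 0 - y 0) ^ 2 + (x 1 - y 1) ^ 2 := by
  rw [EuclideanSpace.dist_sq_eq, Fin.sum_univ_two, Real.dist_eq, Real.dist_eq, sq_abs, sq_abs]

theorem abs_apply_sub_le_dist (x y : ℝ²) (i : Fin 2) : |x i - y i| ≤ dist x y := by
  rw [dist_eq_norm]
  exact PiLp.norm_apply_le (x - y) i

theorem measurableSet_diskRegion (c : ℝ²) (ρ : ℝ) : MeasurableSet (diskRegion c ρ) :=
  (isOpen_lt (by fun_prop) continuous_const).measurableSet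

theorem diskRegion_subset_prod (c : ℝ²) (ρ : ℝ) :
    diskRegion c ρ ⊆ Icc (c 0 - ρ) (c 0 + ρ) ×ˢ Icc (c 1 - ρ) (c 1 + ρ) := fun p hp => by
  have h i := (abs_apply_sub_le_dist !₂[p.1, p.2] c i).trans (le_of_lt hp)
  exact ⟨mem_Icc_iff_abs_le.1 (abs_sub_comm p.1 _ ▸ h 0),
    mem_Icc_iff_abs_le.1 (abs_sub_comm p.2 _ ▸ h 1)⟩

theorem integrableOn_diskRegion {f : ℝ² → ℝ} (hf : Continuous f) (c : ℝ²) (ρ : ℝ) :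
    IntegrableOn (fun p : ℝ × ℝ => f !₂[p.1, p.2]) (diskRegion c ρ) :=
  (Continuous.continuousOn (by fun_prop)).integrableOn_compact (isCompact_Icc.prod isCompact_Icc)
    |>.mono_set (diskRegion_subset_prod c ρ)

theorem euclideanPair_eq_polarPt (c : ℝ²) (r θ : ℝ) :
    !₂[r * Real.cos θ + c 0, r * Real.sin θ + c 1] = polarPt c r θ := by
  ext i; fin_cases i <;> simp [polarPt, add_comm]

theorem add_mem_diskRegion_iff (c : ℝ²) {r : ℝ} (hr : 0 < r) (ρ θ : ℝ) :
    (r * Real.cos θ + c 0, r * Real.sin θ + c 1) ∈ diskRegion c ρ ↔ r < ρ := by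
  simp only [diskRegion, mem_ofPred_eq, euclideanPair_eq_polarPt, dist_polarPt, abs_of_pos hr]

theorem diskInt_eq_setIntegral {f : ℝ² → ℝ} (hf : Continuous f) (c : ℝ²) {ρ : ℝ} (hρ : 0 ≤ ρ) :
    diskInt c f ρ = ∫ p in diskRegion c ρ, f !₂[p.1, p.2] := by
  set F := (diskRegion c ρ).indicator fun p : ℝ × ℝ => f !₂[p.1, p.2] with hF
  have hpolar : ∀ p ∈ polarCoord.target, p.1 • F (polarCoord.symm p + (c 0, c 1)) =
      (Iio ρ ×ˢ univ).indicator (fun p : ℝ × ℝ => p.1 * f (polarPt c p.1 p.2)) p := by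
    rintro ⟨r, θ⟩ ⟨hr, -⟩
    have hmem := add_mem_diskRegion_iff c hr ρ θ
    by_cases h : r < ρ
    · simp [hF, h, hmem, euclideanPair_eq_polarPt]
    · simp [hF, h, hmem]
  have hrect : polarCoord.target ∩ Iio ρ ×ˢ univ = Ioo 0 ρ ×ˢ Ioo (-π) π := by
    rw [polarCoord_target, prod_inter_prod, inter_univ, Ioi_inter_Iio]
  have hitg : IntegrableOn (fun p : ℝ × ℝ => p.1 * f (polarPt c p.1 p.2)) (Ioo 0 ρ ×ˢ Ioo (-π) π) :=
    (Continuous.continuousOn (by fun_prop)).integrableOn_compact (isCompact_Icc.prod isCompact_Icc)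
      |>.mono_set (prod_mono Ioo_subset_Icc_self Ioo_subset_Icc_self)
  rw [← integral_indicator (measurableSet_diskRegion c ρ), ← hF,
    ← integral_add_right_eq_self F (c 0, c 1),
    ← integral_comp_polarCoord_symm fun p => F (p + (c 0, c 1)),
    setIntegral_congr_fun polarCoord.open_target.measurableSet hpolar,
    setIntegral_indicator (measurableSet_Iio.prod .univ), hrect, Measure.volume_eq_prod,
    setIntegral_prod _ hitg]
  simp only [diskInt, circleInt, integral_const_mul, intervalIntegral.integral_of_le hρ,
    intervalIntegral.integral_of_le (neg_le_self Real.pi_pos.le), integral_Ioc_eq_integral_Ioo]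

theorem diskInt_le_diskInt_of_dist_add_le {f : ℝ² → ℝ} (hf : Continuous f) (hf0 : ∀ x, 0 ≤ f x)
    {c c' : ℝ²} {ρ r : ℝ} (hρ : 0 ≤ ρ) (h : dist c c' + ρ ≤ r) :
    diskInt c f ρ ≤ diskInt c' f r := by
  rw [diskInt_eq_setIntegral hf c hρ,
    diskInt_eq_setIntegral hf c' ((add_nonneg dist_nonneg hρ).trans h)]
  refine setIntegral_mono_set (integrableOn_diskRegion hf c' r)
    (Filter.Eventually.of_forall fun p => hf0 _) (LE.le.eventuallyLE fun p hp => ?_)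
  rw [diskRegion, mem_ofPred_eq] at hp ⊢
  linarith [dist_triangle !₂[p.1, p.2] c c']

theorem diskInt_congr {f g : ℝ² → ℝ} (hf : Continuous f) (hg : Continuous g) (c : ℝ²) {ρ : ℝ}
    (h0 : 0 ≤ ρ) (h : ∀ x ∈ Metric.closedBall c ρ, f x = g x) : diskInt c f ρ = diskInt c g ρ :=
  le_antisymm (diskInt_mono c hf hg h0 fun x hx => (h x hx).le)
    (diskInt_mono c hg hf h0 fun x hx => (h x hx).ge)

theorem diskInt_const (c : ℝ²) (k ρ : ℝ) : diskInt c (fun _ => k) ρ = π * k * ρ ^ 2 := by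
  simp only [diskInt, circleInt, intervalIntegral.integral_const, smul_eq_mul,
    intervalIntegral.integral_mul_const, integral_id]
  ring

/-! ### Energy estimates -/

/-- The derivative of `q` in the radial direction from `c`. -/
noncomputable def radialDeriv (q : ℝ² → ℝ) (c : ℝ²) (ρ θ : ℝ) : ℝ :=
  Real.cos θ * pd 0 q (polarPt c ρ θ) + Real.sin θ * pd 1 q (polarPt c ρ θ)

@[fun_prop]
theorem continuous_radialDeriv {q : ℝ² → ℝ} (hq : ContDiff ℝ 1 q) (c : ℝ²) (ρ : ℝ) :
    Continuous (radialDeriv q c ρ) := by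
  unfold radialDeriv; fun_prop

theorem radialDeriv_sq_le (q : ℝ² → ℝ) (c : ℝ²) (ρ θ : ℝ) :
    radialDeriv q c ρ θ ^ 2 ≤ gradSq q (polarPt c ρ θ) := sq_cos_mul_add_sin_mul_le _ _ _

theorem radialDeriv_sq_add_angularDeriv_sq (q : ℝ² → ℝ) (c : ℝ²) (ρ θ : ℝ) :
    (ρ * radialDeriv q c ρ θ) ^ 2 + angularDeriv q c ρ θ ^ 2 =
      ρ ^ 2 * gradSq q (polarPt c ρ θ) := by
  unfold radialDeriv angularDeriv gradSq
  linear_combination (ρ ^ 2 * (pd 0 q (polarPt c ρ θ) ^ 2 + pd 1 q (polarPt c ρ θ) ^ 2)) *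
    Real.sin_sq_add_cos_sq θ

theorem pd_sub_const (f : ℝ² → ℝ) (k : ℝ) (i : Fin 2) (x : ℝ²) :
    pd i (fun y => f y - k) x = pd i f x := by
  rw [pd, fderiv_sub_const, pd]

section Energy

variable {a u : ℝ² → ℝ} {l L : ℝ} {c : ℝ²}

theorem diskInt_mul_gradSq (hu : ContDiff ℝ 2 u) (ha : ContDiff ℝ 1 a) {ρ : ℝ} (h0 : 0 ≤ ρ)
    (h : IsConductivitySolutionOn a u l L (Metric.closedBall c ρ)) (k : ℝ) :
    diskInt c (fun x => a x * gradSq u x) ρ = ∫ θ in (-π)..π,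
      (u (polarPt c ρ θ) - k) * (ρ * (a (polarPt c ρ θ) * radialDeriv u c ρ θ)) := by
  have hu1 : ContDiff ℝ 1 u := hu.of_le one_le_two
  have huk : ContDiff ℝ 1 fun x => u x - k := hu1.sub contDiff_const
  have hu' i : ContDiff ℝ 1 (pd i u) := contDiff_pd hu (by norm_num) i
  have hP : ContDiff ℝ 1 fun x => (u x - k) * (-a x * pd 1 u x) := huk.mul (ha.neg.mul (hu' 1))
  have hQ : ContDiff ℝ 1 fun x => (u x - k) * (a x * pd 0 u x) := huk.mul (ha.mul (hu' 0))
  have hdiff {f : ℝ² → ℝ} (hf : ContDiff ℝ 1 f) (x : ℝ²) := hf.differentiable one_ne_zero x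
  rw [diskInt_congr (g := fun x => pd 0 (fun y => (u y - k) * (a y * pd 0 u y)) x -
      pd 1 (fun y => (u y - k) * (-a y * pd 1 u y)) x) (by fun_prop) (by fun_prop) c h0,
    ← green_theorem_disk hP hQ]
  · congr 1; ext θ; unfold radialDeriv; ring
  · intro x hx
    have hneg : pd 1 (fun y => -a y) x = -pd 1 a x := by simp [pd]
    rw [pd_mul (hdiff huk x) (hdiff (ha.mul (hu' 0)) x), pd_mul (hdiff ha x) (hdiff (hu' 0) x),
      pd_mul (hdiff huk x) (hdiff (ha.neg.mul (hu' 1)) x),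
      pd_mul (hdiff ha.neg x) (hdiff (hu' 1) x), pd_sub_const, pd_sub_const, hneg]
    unfold gradSq
    linear_combination (-(u x - k)) * h.div_eq_zero x hx

theorem integral_flux_sq_le (hu : ContDiff ℝ 1 u) (ha : Continuous a) {ρ : ℝ} (h0 : 0 ≤ ρ)
    (hl : 0 ≤ l) (h : ∀ x ∈ Metric.closedBall c ρ, a x ∈ Icc l L) :
    ∫ θ in (-π)..π, (ρ * (a (polarPt c ρ θ) * radialDeriv u c ρ θ)) ^ 2 ≤
      L ^ 2 * (ρ ^ 2 * circleInt c (gradSq u) ρ) := by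
  rw [circleInt, ← intervalIntegral.integral_const_mul, ← intervalIntegral.integral_const_mul]
  refine intervalIntegral.integral_mono_on (by linarith [Real.pi_pos])
    (Continuous.intervalIntegrable (by fun_prop) _ _)
    (Continuous.intervalIntegrable (by fun_prop) _ _) fun θ _ => ?_
  obtain ⟨hla, haL⟩ := h _ (polarPt_mem_closedBall c θ h0 le_rfl)
  have : 0 ≤ a (polarPt c ρ θ) := hl.trans hla
  calc (ρ * (a (polarPt c ρ θ) * radialDeriv u c ρ θ)) ^ 2
      = a (polarPt c ρ θ) ^ 2 * (ρ ^ 2 * radialDeriv u c ρ θ ^ 2) := by ring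
    _ ≤ L ^ 2 * (ρ ^ 2 * gradSq u (polarPt c ρ θ)) := by
        gcongr
        exact radialDeriv_sq_le u c ρ θ

theorem diskInt_gradSq_le_of_pos (hu : ContDiff ℝ 2 u) (ha : ContDiff ℝ 1 a) {ρ s : ℝ}
    (h0 : 0 ≤ ρ) (hl : 0 < l) (hL : 1 ≤ L) (hs : 0 < s)
    (h : IsConductivitySolutionOn a u l L (Metric.closedBall c ρ)) :
    diskInt c (gradSq u) ρ ≤ L ^ 2 / (2 * l) *
      (s * circleInt c (fun x => u x ^ 2) ρ + ρ * (ρ * circleInt c (gradSq u) ρ) / s) := by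
  have hu1 : ContDiff ℝ 1 u := hu.of_le one_le_two
  have cu := hu1.continuous
  have ca := ha.continuous
  set J := circleInt c (fun x => u x ^ 2) ρ
  have hJ : 0 ≤ J := circleInt_nonneg c h0 fun x _ => sq_nonneg _
  have hlower : l * diskInt c (gradSq u) ρ ≤ diskInt c (fun x => a x * gradSq u x) ρ := by
    rw [← diskInt_const_mul]
    exact diskInt_mono c (by fun_prop) (by fun_prop) h0 fun x hx =>
      mul_le_mul_of_nonneg_right (h.le_coeff x hx) (gradSq_nonneg u x)
  have hflux := integral_flux_sq_le hu1 ca h0 hl.le fun x hx => ⟨h.le_coeff x hx, h.coeff_le x hx⟩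
  have henergy : l * diskInt c (gradSq u) ρ ≤
      1 / 2 * (s * J + L ^ 2 * (ρ ^ 2 * circleInt c (gradSq u) ρ) / s) := by
    refine hlower.trans ((diskInt_mul_gradSq hu ha h0 h 0).trans_le ?_)
    simp only [sub_zero]
    refine (integral_mul_le_of_pos (neg_le_self Real.pi_pos.le) (by fun_prop) (by fun_prop)
      hs).trans ?_
    gcongr
    exact le_rfl
  have hsJ : s * J ≤ L ^ 2 * (s * J) := le_mul_of_one_le_left (by positivity) (one_le_pow₀ hL)
  rw [div_mul_eq_mul_div, le_div_iff₀ (by positivity)]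
  linear_combination 2 * henergy + hsJ

theorem diskInt_gradSq_half_le_of_abs_le (hu : ContDiff ℝ 2 u) (ha : ContDiff ℝ 1 a) {R N : ℝ}
    (hR : 0 < R) (hl : 0 < l) (hL : 1 ≤ L)
    (h : IsConductivitySolutionOn a u l L (Metric.closedBall c R))
    (hN : ∀ x ∈ Metric.closedBall c R, |u x| ≤ N) :
    diskInt c (gradSq u) (R / 2) ≤ 64 * L ^ 4 / l ^ 2 * N ^ 2 := by
  have hu1 : ContDiff ℝ 1 u := hu.of_le one_le_two
  have cu := hu1.continuous
  have hgrad := continuous_gradSq hu1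
  have hcaccioppoli := half_mul_sq_le_of_caccioppoli_ode (k := L ^ 2 / (2 * l)) hR (by positivity)
    le_rfl (hasDerivAt_diskInt c hgrad) (by fun_prop)
    (continuous_circleInt c (f := fun x => u x ^ 2) (by fun_prop)) (diskInt_zero_radius c _)
    (fun ρ hρ => circleInt_nonneg c hρ.1 fun x _ => sq_nonneg _)
    (fun ρ hρ => mul_nonneg hρ.1 (circleInt_nonneg c hρ.1 fun x _ => gradSq_nonneg u x))
    fun ρ hρ s hs => (diskInt_gradSq_le_of_pos hu ha hρ.1 hl hL hs
      (h.mono (Metric.closedBall_subset_closedBall hρ.2))).trans_eq (add_zero _).symm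
  have hsup : diskInt c (fun x => u x ^ 2) R ≤ 4 * N ^ 2 * R ^ 2 := by
    calc diskInt c (fun x => u x ^ 2) R ≤ diskInt c (fun _ => N ^ 2) R :=
          diskInt_mono c (by fun_prop) (by fun_prop) hR.le fun x hx => sq_le_sq.2 <|
            (hN x hx).trans (le_abs_self N)
      _ = π * N ^ 2 * R ^ 2 := diskInt_const c _ R
      _ ≤ 4 * N ^ 2 * R ^ 2 := by gcongr; exact Real.pi_le_four
  refine le_of_mul_le_mul_right ?_ (pow_pos hR 2)
  calc diskInt c (gradSq u) (R / 2) * R ^ 2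
      ≤ 64 * (L ^ 2 / (2 * l)) ^ 2 * diskInt c (fun x => u x ^ 2) R + 8 * R ^ 2 * 0 := hcaccioppoli
    _ ≤ 64 * (L ^ 2 / (2 * l)) ^ 2 * (4 * N ^ 2 * R ^ 2) + 8 * R ^ 2 * 0 := by gcongr
    _ = 64 * L ^ 4 / l ^ 2 * N ^ 2 * R ^ 2 := by field_simp; ring

/-- The field generating the rotations about `c`. -/
def rotField (c : ℝ²) : Fin 2 → ℝ² → ℝ := ![fun x => -(x 1 - c 1), fun x => x 0 - c 0]

theorem apply_polarPt_eq_of_fieldDeriv_rotField (ha : Differentiable ℝ a) {ρ : ℝ} (h0 : 0 ≤ ρ)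
    (hrot : ∀ x ∈ Metric.closedBall c ρ, fieldDeriv (rotField c) a x = 0) (θ θ' : ℝ) :
    a (polarPt c ρ θ) = a (polarPt c ρ θ') := by
  have hder := hasDerivAt_comp_polarPt_angle c ha ρ
  refine is_const_of_deriv_eq_zero (fun t => (hder t).differentiableAt) (fun t => ?_) θ θ'
  rw [(hder t).deriv, ← hrot _ (polarPt_mem_closedBall c t h0 le_rfl)]
  simp only [fieldDeriv, rotField, polarPt, Matrix.cons_val_zero, Matrix.cons_val_one,
    PiLp.add_apply]
  ring

/-- On a circle where `a` is constant, Wirtinger's inequality makes the constant `2` sharp, which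
is what yields the optimal decay exponent. -/
theorem two_mul_diskInt_energy_le (hu : ContDiff ℝ 2 u) (ha : ContDiff ℝ 1 a) {ρ : ℝ} (h0 : 0 ≤ ρ)
    (hl : 0 ≤ l) (h : IsConductivitySolutionOn a u l L (Metric.closedBall c ρ))
    (hrot : ∀ x ∈ Metric.closedBall c ρ, fieldDeriv (rotField c) a x = 0) :
    2 * diskInt c (fun x => a x * gradSq u x) ρ ≤
      ρ * (ρ * circleInt c (fun x => a x * gradSq u x) ρ) := by
  have hu1 : ContDiff ℝ 1 u := hu.of_le one_le_two
  have cu := hu1.continuous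
  set α := a (polarPt c ρ 0)
  have hα : 0 ≤ α := hl.trans (h.le_coeff _ (polarPt_mem_closedBall c 0 h0 le_rfl))
  have hconst θ : a (polarPt c ρ θ) = α :=
    apply_polarPt_eq_of_fieldDeriv_rotField (ha.differentiable one_ne_zero) h0 hrot θ 0
  obtain ⟨k, hk⟩ := exists_integral_sub_sq_le_integral_deriv_sq
    (fun θ => hasDerivAt_comp_polarPt_angle c (hu1.differentiable one_ne_zero) ρ θ)
    (continuous_angularDeriv hu1 c ρ) (by rw [polarPt_neg_pi])
  have hamgm := integral_mul_le_of_pos (f := fun θ => u (polarPt c ρ θ) - k)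
    (g := fun θ => ρ * radialDeriv u c ρ θ) (neg_le_self Real.pi_pos.le) (by fun_prop)
    (by fun_prop) one_pos
  rw [one_mul, div_one] at hamgm
  have hpythagoras : (∫ θ in (-π)..π, angularDeriv u c ρ θ ^ 2) +
      ∫ θ in (-π)..π, (ρ * radialDeriv u c ρ θ) ^ 2 = ρ ^ 2 * circleInt c (gradSq u) ρ := by
    rw [circleInt, ← intervalIntegral.integral_const_mul,
      ← intervalIntegral.integral_add (Continuous.intervalIntegrable (by fun_prop) _ _)
        (Continuous.intervalIntegrable (by fun_prop) _ _)]
    simp only [← radialDeriv_sq_add_angularDeriv_sq, add_comm]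
  calc 2 * diskInt c (fun x => a x * gradSq u x) ρ
      = 2 * (α * ∫ θ in (-π)..π, (u (polarPt c ρ θ) - k) * (ρ * radialDeriv u c ρ θ)) := by
        simp only [diskInt_mul_gradSq hu ha h0 h k, hconst, mul_left_comm _ α,
          intervalIntegral.integral_const_mul]
    _ ≤ 2 * (α * (1 / 2 * (ρ ^ 2 * circleInt c (gradSq u) ρ))) := by
        rw [← hpythagoras]
        gcongr
        exact hamgm.trans (by gcongr; exact hk)
    _ = ρ * (ρ * (α * circleInt c (gradSq u) ρ)) := by ring
    _ = ρ * (ρ * circleInt c (fun x => a x * gradSq u x) ρ) := by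
        simp only [circleInt, hconst, intervalIntegral.integral_const_mul]

theorem diskInt_energy_mul_sq_le (hu : ContDiff ℝ 2 u) (ha : ContDiff ℝ 1 a) {r R : ℝ}
    (hr : 0 < r) (hrR : r ≤ R) (hl : 0 ≤ l)
    (h : IsConductivitySolutionOn a u l L (Metric.closedBall c R))
    (hrot : ∀ x ∈ Metric.closedBall c R, fieldDeriv (rotField c) a x = 0) :
    diskInt c (fun x => a x * gradSq u x) r * R ^ 2 ≤
      diskInt c (fun x => a x * gradSq u x) R * r ^ 2 := by
  have hR : 0 < R := hr.trans_le hrR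
  have hcont : Continuous fun x => a x * gradSq u x :=
    ha.continuous.mul (continuous_gradSq (hu.of_le one_le_two))
  have hdecay := le_mul_div_rpow_of_mul_le_deriv (γ := 2) (p := 4) hR (by norm_num) (by norm_num)
    le_rfl (fun ρ _ => hasDerivAt_diskInt c hcont ρ)
    (fun ρ hρ => by
      have hsub := Metric.closedBall_subset_closedBall (x := c) hρ.2
      simpa using two_mul_diskInt_energy_le hu ha hρ.1.le hl (h.mono hsub) fun x hx =>
        hrot x (hsub hx)) ⟨hr, hrR⟩
  rwa [mul_zero, zero_mul, add_zero, Real.rpow_two, div_pow, mul_div_assoc',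
    le_div_iff₀ (by positivity)] at hdecay

end Energy

/-! ### The gradient bound near a single circle -/

/-- The constant in `gradSq_le_of_fieldDeriv_rotField_of_ne`, for coefficients between `l` and
`L`. -/
noncomputable def rotConst (l L : ℝ) : ℝ := 256 * 65 * L ^ 5 / l ^ 3

theorem pd_apply (i j : Fin 2) (x : ℝ²) : pd i (fun y => y j) x = if i = j then 1 else 0 := by
  have h : HasFDerivAt (fun y : ℝ² => y j) (EuclideanSpace.proj j : ℝ² →L[ℝ] ℝ) x :=
    (EuclideanSpace.proj j : ℝ² →L[ℝ] ℝ).hasFDerivAt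
  simp [pd, h.fderiv, eq_comm]

theorem pd_const_mul {f : ℝ² → ℝ} {x : ℝ²} (hf : DifferentiableAt ℝ f x) (k : ℝ) (i : Fin 2) :
    pd i (fun y => k * f y) x = k * pd i f x := by
  simp [pd, fderiv_const_mul hf]

theorem fieldDeriv_const_mul (k : ℝ) (T : Fin 2 → ℝ² → ℝ) (f : ℝ² → ℝ) (x : ℝ²) :
    fieldDeriv (fun i y => k * T i y) f x = k * fieldDeriv T f x := by
  unfold fieldDeriv; ring

theorem killingDefect_const_mul {T : Fin 2 → ℝ² → ℝ} {x : ℝ²}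
    (hT : ∀ i, DifferentiableAt ℝ (T i) x) (k : ℝ) :
    killingDefect (fun i y => k * T i y) x = k ^ 2 * killingDefect T x := by
  simp only [killingDefect, pd_const_mul (hT _)]; ring

theorem contDiff_rotField (c : ℝ²) (n : WithTop ℕ∞) (i : Fin 2) : ContDiff ℝ n (rotField c i) :=
  Fin.forall_fin_two (p := fun i => ContDiff ℝ n (rotField c i)).2
    ⟨(by fun_prop : ContDiff ℝ n fun x : ℝ² => -(x 1 - c 1)),
    (by fun_prop : ContDiff ℝ n fun x : ℝ² => x 0 - c 0)⟩ i

theorem pd_rotField_zero (c x : ℝ²) (i : Fin 2) :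
    pd i (rotField c 0) x = if i = 1 then -1 else 0 := by
  have hneg : pd i (rotField c 0) x = -pd i (fun y => y 1) x :=
    (congrArg (pd i · x) (funext fun y => neg_sub (y 1) (c 1))).trans (by
      simp [pd, fderiv_const_sub])
  rw [hneg, pd_apply]
  split_ifs <;> simp

theorem pd_rotField_one (c x : ℝ²) (i : Fin 2) :
    pd i (rotField c 1) x = if i = 0 then 1 else 0 :=
  (pd_sub_const _ _ i x).trans (pd_apply i 0 x)

theorem killingDefect_rotField (c x : ℝ²) : killingDefect (rotField c) x = 0 := by
  simp [killingDefect, pd_rotField_zero, pd_rotField_one]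

theorem rotField_sq (c x : ℝ²) : rotField c 0 x ^ 2 + rotField c 1 x ^ 2 = dist x c ^ 2 := by
  rw [dist_sq_eq]; simp only [rotField, Matrix.cons_val_zero, Matrix.cons_val_one]; ring

section Rotation

variable {a u : ℝ² → ℝ} {l L : ℝ} {c y : ℝ²}

theorem gradSq_le_of_fieldDeriv_rotField (hu : ContDiff ℝ 3 u) (ha : ContDiff ℝ 2 a) {r Y : ℝ}
    (hr : 0 < r) (hl : 0 < l) (hl1 : l ≤ 1) (hL : 1 ≤ L)
    (h : IsConductivitySolutionOn a u l L (Metric.closedBall y r))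
    (hrot : ∀ x ∈ Metric.closedBall y r, fieldDeriv (rotField c) a x = 0)
    (hrc : r ≤ dist y c / 2) (hY : 0 < Y) (huY : diskInt y (gradSq u) r < Y * r ^ 2) :
    gradSq u y ≤ gradConst l L (1 / 4) 9 * Y := by
  have hd : 0 < dist y c := by linarith
  have hT i : ContDiff ℝ 2 fun x => (dist y c)⁻¹ * rotField c i x :=
    contDiff_const.mul (contDiff_rotField c 2 i)
  have hsq x : ((dist y c)⁻¹ * rotField c 0 x) ^ 2 + ((dist y c)⁻¹ * rotField c 1 x) ^ 2 =
      (dist x c / dist y c) ^ 2 := by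
    rw [div_pow, ← rotField_sq c x]; field_simp
  refine gradSq_center_le_of_field (T := fun i x => (dist y c)⁻¹ * rotField c i x) (B := 0) hu ha hT
    hr hl hl1 hL le_rfl le_rfl (by norm_num) (by norm_num) h (fun x hx => ?_) (fun x hx => ?_) ?_
    (fun ρ _ => ?_) hY huY (by simpa using hY.le)
  · rw [fieldDeriv_const_mul, hrot x hx, mul_zero]
  · have hx' : dist x c / dist y c ≤ 3 := by
      rw [div_le_iff₀ hd]
      linarith [dist_triangle x y c, Metric.mem_closedBall.1 hx]
    rw [hsq]
    calc (dist x c / dist y c) ^ 2 ≤ 3 ^ 2 := by gcongr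
      _ = 9 := by norm_num
  · rw [hsq, div_self hd.ne']; norm_num
  · simp_rw [killingDefect_const_mul fun i =>
      (contDiff_rotField c 1 i).differentiable one_ne_zero _, killingDefect_rotField]
    simp [diskInt_const]

theorem mul_diskInt_gradSq_mul_sq_le (hu : ContDiff ℝ 2 u) (ha : ContDiff ℝ 1 a) {r R : ℝ}
    (hr : 0 < r) (hrR : r ≤ R) (hl : 0 ≤ l)
    (h : IsConductivitySolutionOn a u l L (Metric.closedBall c R))
    (hrot : ∀ x ∈ Metric.closedBall c R, fieldDeriv (rotField c) a x = 0) :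
    l * diskInt c (gradSq u) r * R ^ 2 ≤ L * diskInt c (gradSq u) R * r ^ 2 := by
  have hu1 : ContDiff ℝ 1 u := hu.of_le one_le_two
  have ca := ha.continuous
  calc l * diskInt c (gradSq u) r * R ^ 2
      ≤ diskInt c (fun x => a x * gradSq u x) r * R ^ 2 := by
        rw [← diskInt_const_mul]
        gcongr
        exact diskInt_mono c (by fun_prop) (by fun_prop) hr.le fun x hx =>
          mul_le_mul_of_nonneg_right
            (h.le_coeff x (Metric.closedBall_subset_closedBall hrR hx)) (gradSq_nonneg u x)
    _ ≤ diskInt c (fun x => a x * gradSq u x) R * r ^ 2 :=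
        diskInt_energy_mul_sq_le hu ha hr hrR hl h hrot
    _ ≤ L * diskInt c (gradSq u) R * r ^ 2 := by
        rw [← diskInt_const_mul]
        gcongr
        exact diskInt_mono c (by fun_prop) (by fun_prop) (hr.le.trans hrR) fun x hx =>
          mul_le_mul_of_nonneg_right (h.coeff_le x hx) (gradSq_nonneg u x)

theorem rotConst_pos (hl : 0 < l) (hL : 0 < L) : 0 < rotConst l L := by
  unfold rotConst; positivity

theorem gradSq_le_of_fieldDeriv_rotField_of_le_dist (hu : ContDiff ℝ 3 u) (ha : ContDiff ℝ 2 a)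
    {R N : ℝ} (hR : 0 < R) (hl : 0 < l) (hl1 : l ≤ 1) (hL : 1 ≤ L) (hN : 0 < N)
    (h : IsConductivitySolutionOn a u l L (Metric.closedBall y R))
    (hrot : ∀ x ∈ Metric.closedBall y R, fieldDeriv (rotField c) a x = 0)
    (huN : ∀ x ∈ Metric.closedBall y R, |u x| ≤ N) (hfar : R / 8 ≤ dist y c) :
    gradSq u y ≤ gradConst l L (1 / 4) 9 * (rotConst l L * N ^ 2 / R ^ 2) := by
  have hsub : Metric.closedBall y (R / 16) ⊆ Metric.closedBall y R :=
    Metric.closedBall_subset_closedBall (by linarith)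
  have := rotConst_pos hl (by linarith : 0 < L)
  refine gradSq_le_of_fieldDeriv_rotField hu ha (r := R / 16) (by positivity) hl hl1 hL
    (h.mono hsub) (fun x hx => hrot x (hsub hx)) (by linarith) (by positivity) ?_
  calc diskInt y (gradSq u) (R / 16) ≤ diskInt y (gradSq u) (R / 2) :=
        diskInt_mono_radius y (continuous_gradSq (hu.of_le (by norm_num))) (by positivity)
          (by linarith) fun x _ => gradSq_nonneg u x
    _ ≤ 64 * L ^ 4 / l ^ 2 * N ^ 2 := diskInt_gradSq_half_le_of_abs_le (hu.of_le (by norm_num))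
        (ha.of_le one_le_two) hR hl hL h huN
    _ < 65 * (L ^ 4 / l ^ 2 * N ^ 2) := by
        rw [mul_div_assoc, mul_assoc]; gcongr; norm_num
    _ ≤ L / l * (65 * (L ^ 4 / l ^ 2 * N ^ 2)) :=
        le_mul_of_one_le_left (by positivity) ((one_le_div hl).2 (hl1.trans hL))
    _ = rotConst l L * N ^ 2 / R ^ 2 * (R / 16) ^ 2 := by unfold rotConst; field_simp; ring

theorem gradSq_le_of_fieldDeriv_rotField_of_dist_lt (hu : ContDiff ℝ 3 u) (ha : ContDiff ℝ 2 a)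
    {R N : ℝ} (hR : 0 < R) (hl : 0 < l) (hl1 : l ≤ 1) (hL : 1 ≤ L) (hN : 0 < N)
    (h : IsConductivitySolutionOn a u l L (Metric.closedBall y R))
    (hrot : ∀ x ∈ Metric.closedBall y R, fieldDeriv (rotField c) a x = 0)
    (huN : ∀ x ∈ Metric.closedBall y R, |u x| ≤ N) (hd : 0 < dist y c) (hnear : dist y c < R / 8) :
    gradSq u y ≤ gradConst l L (1 / 4) 9 * (rotConst l L * N ^ 2 / R ^ 2) := by
  have hu2 : ContDiff ℝ 2 u := hu.of_le (by norm_num)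
  have ha1 : ContDiff ℝ 1 a := ha.of_le one_le_two
  have hgrad : Continuous (gradSq u) := continuous_gradSq (hu.of_le (by norm_num))
  have hsub : Metric.closedBall y (dist y c / 2) ⊆ Metric.closedBall y R :=
    Metric.closedBall_subset_closedBall (by linarith)
  have hsubc : Metric.closedBall c (R / 4) ⊆ Metric.closedBall y R :=
    Metric.closedBall_subset_closedBall' (by rw [dist_comm]; linarith)
  have := rotConst_pos hl (by linarith : 0 < L)
  refine gradSq_le_of_fieldDeriv_rotField hu ha (r := dist y c / 2) (by positivity) hl hl1 hL
    (h.mono hsub) (fun x hx => hrot x (hsub hx)) le_rfl (by positivity) ?_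
  have hinner : diskInt y (gradSq u) (dist y c / 2) ≤ diskInt c (gradSq u) (2 * dist y c) :=
    diskInt_le_diskInt_of_dist_add_le hgrad (gradSq_nonneg u) (by positivity) (by linarith)
  have houter : diskInt c (gradSq u) (R / 4) ≤ 64 * L ^ 4 / l ^ 2 * N ^ 2 :=
    (diskInt_le_diskInt_of_dist_add_le hgrad (gradSq_nonneg u) (by positivity)
      (by rw [dist_comm]; linarith)).trans (diskInt_gradSq_half_le_of_abs_le hu2 ha1 hR hl hL h huN)
  have hdecay := mul_diskInt_gradSq_mul_sq_le hu2 ha1 (r := 2 * dist y c) (R := R / 4)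
    (by positivity) (by linarith) hl.le (h.mono hsubc) fun x hx => hrot x (hsubc hx)
  refine lt_of_mul_lt_mul_left ?_ (by positivity : 0 ≤ l * (R / 4) ^ 2)
  calc l * (R / 4) ^ 2 * diskInt y (gradSq u) (dist y c / 2)
      ≤ l * (R / 4) ^ 2 * diskInt c (gradSq u) (2 * dist y c) := by gcongr
    _ = l * diskInt c (gradSq u) (2 * dist y c) * (R / 4) ^ 2 := by ring
    _ ≤ L * diskInt c (gradSq u) (R / 4) * (2 * dist y c) ^ 2 := hdecay
    _ ≤ L * (64 * L ^ 4 / l ^ 2 * N ^ 2) * (2 * dist y c) ^ 2 := by gcongr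
    _ = 64 * (4 * L ^ 5 / l ^ 2 * N ^ 2 * dist y c ^ 2) := by ring
    _ < 65 * (4 * L ^ 5 / l ^ 2 * N ^ 2 * dist y c ^ 2) := by gcongr; norm_num
    _ = l * (R / 4) ^ 2 * (rotConst l L * N ^ 2 / R ^ 2 * (dist y c / 2) ^ 2) := by
        unfold rotConst; field_simp; ring

theorem gradSq_le_of_fieldDeriv_rotField_of_ne (hu : ContDiff ℝ 3 u) (ha : ContDiff ℝ 2 a)
    {R N : ℝ} (hR : 0 < R) (hl : 0 < l) (hl1 : l ≤ 1) (hL : 1 ≤ L) (hN : 0 < N)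
    (h : IsConductivitySolutionOn a u l L (Metric.closedBall y R))
    (hrot : ∀ x ∈ Metric.closedBall y R, fieldDeriv (rotField c) a x = 0)
    (huN : ∀ x ∈ Metric.closedBall y R, |u x| ≤ N) (hyc : y ≠ c) :
    gradSq u y ≤ gradConst l L (1 / 4) 9 * (rotConst l L * N ^ 2 / R ^ 2) :=
  (le_or_gt (R / 8) (dist y c)).elim
    (gradSq_le_of_fieldDeriv_rotField_of_le_dist hu ha hR hl hl1 hL hN h hrot huN)
    (gradSq_le_of_fieldDeriv_rotField_of_dist_lt hu ha hR hl hl1 hL hN h hrot huN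
      (dist_pos.2 hyc))

theorem gradSq_le_of_rotational (hu : ContDiff ℝ 3 u) (ha : ContDiff ℝ 2 a)
    {R N : ℝ} (hR : 0 < R) (hl : 0 < l) (hl1 : l ≤ 1) (hL : 1 ≤ L) (hN : 0 < N)
    (h : IsConductivitySolutionOn a u l L (Metric.closedBall y R))
    (hrot : ∀ x ∈ Metric.closedBall y R, fieldDeriv (rotField c) a x = 0)
    (huN : ∀ x ∈ Metric.closedBall y R, |u x| ≤ N) :
    gradSq u y ≤ gradConst l L (1 / 4) 9 * (4 * rotConst l L * N ^ 2 / R ^ 2) := by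
  have := gradConst_pos (m := 1 / 4) (M := 9) hl (by linarith : 0 < L) (by norm_num) (by norm_num)
  have := rotConst_pos hl (by linarith : 0 < L)
  rcases ne_or_eq y c with hyc | rfl
  · refine (gradSq_le_of_fieldDeriv_rotField_of_ne hu ha hR hl hl1 hL hN h hrot huN hyc).trans ?_
    gcongr
    linarith
  · have hlim : Filter.Tendsto (fun t => gradSq u (polarPt y t 0)) (𝓝[>] 0) (𝓝 (gradSq u y)) := by
      have hgrad : Continuous (gradSq u) := continuous_gradSq (hu.of_le (by norm_num))
      have hcont : Continuous fun t => gradSq u (polarPt y t 0) := by fun_prop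
      simpa using (hcont.tendsto 0).mono_left nhdsWithin_le_nhds
    refine le_of_tendsto hlim ?_
    filter_upwards [Ioc_mem_nhdsGT (half_pos hR)] with t ht
    have hd : dist (polarPt y t 0) y = t := by rw [dist_polarPt, abs_of_pos ht.1]
    have hsub : Metric.closedBall (polarPt y t 0) (R / 2) ⊆ Metric.closedBall y R :=
      Metric.closedBall_subset_closedBall' (by linarith [ht.2])
    refine (gradSq_le_of_fieldDeriv_rotField_of_ne hu ha (half_pos hR) hl hl1 hL hN (h.mono hsub)
      (fun x hx => hrot x (hsub hx)) (fun x hx => huN x (hsub hx))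
      (dist_pos.1 (hd.symm ▸ ht.1))).trans_eq ?_
    field_simp
    ring

end Rotation

/-! ### Singular product weights -/

section AbsRpow

variable {p : ℝ}

theorem intervalIntegrable_abs_rpow (hp : -1 < p) (a b : ℝ) :
    IntervalIntegrable (fun t : ℝ => |t| ^ p) volume a b := by
  refine intervalIntegrable_of_even (fun t => by rw [abs_neg]) fun r hr => ?_
  refine (intervalIntegral.intervalIntegrable_rpow' hp).congr fun t ht => ?_
  rw [uIoc_of_le hr.le] at ht
  simp only [abs_of_pos ht.1]

theorem integral_abs_rpow_neg_self (hp : -1 < p) {r : ℝ} (hr : 0 ≤ r) :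
    ∫ t in -r..r, |t| ^ p = 2 * (r ^ (p + 1) / (p + 1)) := by
  have hright : ∫ t in (0 : ℝ)..r, |t| ^ p = r ^ (p + 1) / (p + 1) := by
    have habs : EqOn (fun t : ℝ => |t| ^ p) (fun t => t ^ p) (uIcc 0 r) := fun t ht => by
      rw [uIcc_of_le hr] at ht
      simp only [abs_of_nonneg ht.1]
    rw [intervalIntegral.integral_congr habs, integral_rpow (Or.inl hp),
      Real.zero_rpow (by linarith), sub_zero]
  have hleft : ∫ t in -r..0, |t| ^ p = ∫ t in (0 : ℝ)..r, |t| ^ p := by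
    simpa using (intervalIntegral.integral_comp_neg (a := 0) (b := r) fun t => |t| ^ p).symm
  rw [← intervalIntegral.integral_add_adjacent_intervals (intervalIntegrable_abs_rpow hp _ 0)
    (intervalIntegrable_abs_rpow hp 0 _), hleft, hright, two_mul]

theorem abs_rpow_le_add_indicator (hp : p ≤ 0) {r : ℝ} (hr : 0 < r) (t : ℝ) :
    |t| ^ p ≤ r ^ p + (Ioc (-r) r).indicator (fun t => |t| ^ p) t := by
  by_cases ht : t ∈ Ioc (-r) r
  · rw [indicator_of_mem ht]
    exact le_add_of_nonneg_left (by positivity)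
  · rw [indicator_of_notMem ht, add_zero]
    refine Real.rpow_le_rpow_of_nonpos hr (not_lt.1 fun h => ht ?_) hp
    exact ⟨(abs_lt.1 h).1, (abs_lt.1 h).2.le⟩

theorem integral_abs_rpow_le (hp : -1 < p) (hp0 : p ≤ 0) (c : ℝ) {r : ℝ} (hr : 0 < r) :
    ∫ t in (c - r)..(c + r), |t| ^ p ≤ (2 + 2 / (p + 1)) * r ^ (p + 1) := by
  set ind := (Ioc (-r) r).indicator fun t : ℝ => |t| ^ p with hind
  have hle : c - r ≤ c + r := by linarith
  have hitg : Integrable ind := (integrable_indicator_iff measurableSet_Ioc).2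
    ((intervalIntegrable_iff_integrableOn_Ioc_of_le (by linarith)).1
      (intervalIntegrable_abs_rpow hp (-r) r))
  have hindicator : ∫ t in (c - r)..(c + r), ind t ≤ 2 * (r ^ (p + 1) / (p + 1)) := by
    rw [intervalIntegral.integral_of_le hle]
    refine (setIntegral_le_integral hitg (.of_forall fun t =>
      indicator_nonneg (fun t _ => by positivity) t)).trans_eq ?_
    rw [hind, integral_indicator measurableSet_Ioc,
      ← intervalIntegral.integral_of_le (by linarith), integral_abs_rpow_neg_self hp hr.le]
  calc ∫ t in (c - r)..(c + r), |t| ^ p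
      ≤ ∫ t in (c - r)..(c + r), (r ^ p + ind t) :=
        intervalIntegral.integral_mono_on hle (intervalIntegrable_abs_rpow hp _ _)
          (intervalIntegrable_const.add hitg.intervalIntegrable)
          fun t _ => abs_rpow_le_add_indicator hp0 hr t
    _ = 2 * r * r ^ p + ∫ t in (c - r)..(c + r), ind t := by
        rw [intervalIntegral.integral_add intervalIntegrable_const hitg.intervalIntegrable,
          intervalIntegral.integral_const, smul_eq_mul]
        ring
    _ ≤ 2 * r ^ (p + 1) + 2 * (r ^ (p + 1) / (p + 1)) := by
        refine add_le_add (le_of_eq ?_) hindicator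
        rw [Real.rpow_add_one hr.ne', mul_assoc, mul_comm r]
    _ = (2 + 2 / (p + 1)) * r ^ (p + 1) := by ring

theorem integrableOn_abs_add_rpow (hp : -1 < p) (b c : ℝ) {r : ℝ} (hr : 0 ≤ r) :
    IntegrableOn (fun t => |t + b| ^ p) (Icc (c - r) (c + r)) := by
  rw [integrableOn_Icc_iff_integrableOn_Ioc,
    ← intervalIntegrable_iff_integrableOn_Ioc_of_le (by linarith)]
  simpa using (intervalIntegrable_abs_rpow hp (c - r + b) (c + r + b)).comp_add_right b

theorem setIntegral_abs_add_rpow_le (hp : -1 < p) (hp0 : p ≤ 0) (b c : ℝ) {r : ℝ} (hr : 0 < r) :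
    ∫ t in Icc (c - r) (c + r), |t + b| ^ p ≤ (2 + 2 / (p + 1)) * r ^ (p + 1) := by
  rw [integral_Icc_eq_integral_Ioc, ← intervalIntegral.integral_of_le (by linarith),
    intervalIntegral.integral_comp_add_right (fun t => |t| ^ p) b, sub_add_eq_add_sub,
    add_right_comm]
  exact integral_abs_rpow_le hp hp0 (c + b) hr

theorem ae_fst_ne_and_snd_ne (s t : ℝ) : ∀ᵐ x : ℝ × ℝ, x.1 ≠ s ∧ x.2 ≠ t :=
  (Measure.quasiMeasurePreserving_fst.ae (Measure.ae_ne volume s)).and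
    (Measure.quasiMeasurePreserving_snd.ae (Measure.ae_ne volume t))

theorem setIntegral_mul_abs_rpow_le (hp : -1 < p) (hp0 : p ≤ 0) (c : ℝ²) {b K ρ : ℝ} (hK : 0 ≤ K)
    (hρ : 0 < ρ) :
    ∫ x in Icc (c 0 - ρ) (c 0 + ρ) ×ˢ Icc (c 1 - ρ) (c 1 + ρ), K * (|x.1| ^ p * |x.2 + b| ^ p) ≤
      (2 + 2 / (p + 1)) ^ 2 * K * ρ ^ (2 * (p + 1)) := by
  have hp1 : 0 < p + 1 := by linarith
  have h0 : ∫ t in Icc (c 0 - ρ) (c 0 + ρ), |t| ^ p ≤ (2 + 2 / (p + 1)) * ρ ^ (p + 1) := by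
    simpa using setIntegral_abs_add_rpow_le hp hp0 0 (c 0) hρ
  rw [integral_const_mul, Measure.volume_eq_prod,
    setIntegral_prod_mul (fun t => |t| ^ p) fun t => |t + b| ^ p]
  calc K * ((∫ t in Icc (c 0 - ρ) (c 0 + ρ), |t| ^ p) *
        ∫ t in Icc (c 1 - ρ) (c 1 + ρ), |t + b| ^ p)
      ≤ K * (((2 + 2 / (p + 1)) * ρ ^ (p + 1)) * ((2 + 2 / (p + 1)) * ρ ^ (p + 1))) := by
        refine mul_le_mul_of_nonneg_left (mul_le_mul h0
          (setIntegral_abs_add_rpow_le hp hp0 b (c 1) hρ) (integral_nonneg fun t => ?_) ?_) hK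
        all_goals positivity
    _ = (2 + 2 / (p + 1)) ^ 2 * K * ρ ^ (2 * (p + 1)) := by
        rw [two_mul (p + 1), Real.rpow_add hρ (p + 1)]; ring

theorem diskInt_le_of_le_mul_abs_rpow (hp : -1 < p) (hp0 : p ≤ 0) {f : ℝ² → ℝ} (hf : Continuous f)
    (c : ℝ²) {b K ρ : ℝ} (hK : 0 ≤ K) (hρ : 0 < ρ)
    (h : ∀ x ∈ Metric.closedBall c ρ, x 0 ≠ 0 → x 1 ≠ -b → f x ≤ K * (|x 0| ^ p * |x 1 + b| ^ p)) :
    diskInt c f ρ ≤ (2 + 2 / (p + 1)) ^ 2 * K * ρ ^ (2 * (p + 1)) := by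
  have hitg : IntegrableOn (fun x : ℝ × ℝ => K * (|x.1| ^ p * |x.2 + b| ^ p))
      (Icc (c 0 - ρ) (c 0 + ρ) ×ˢ Icc (c 1 - ρ) (c 1 + ρ)) := by
    have h0 := integrableOn_abs_add_rpow hp 0 (c 0) hρ.le
    simp only [add_zero] at h0
    rw [IntegrableOn, Measure.volume_eq_prod, ← Measure.prod_restrict]
    exact (h0.mul_prod (integrableOn_abs_add_rpow hp b (c 1) hρ.le)).const_mul K
  rw [diskInt_eq_setIntegral hf c hρ.le]
  refine le_trans ?_ ((setIntegral_mono_set hitg (.of_forall fun x => ?_)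
    (diskRegion_subset_prod c ρ).eventuallyLE).trans (setIntegral_mul_abs_rpow_le hp hp0 c hK hρ))
  · refine setIntegral_mono_on_ae (integrableOn_diskRegion hf c ρ)
      (hitg.mono_set (diskRegion_subset_prod c ρ)) (measurableSet_diskRegion c ρ) ?_
    filter_upwards [ae_fst_ne_and_snd_ne 0 (-b)] with x hx hmem
    exact h !₂[x.1, x.2] (Metric.mem_closedBall.2 (le_of_lt hmem)) hx.1 hx.2
  · simp only [Pi.zero_apply]; positivity

theorem one_div_le_abs_rpow_mul_abs_rpow {Q s t : ℝ} (hs : s ≠ 0) (ht : t ≠ 0) (hsQ : s ^ 2 ≤ Q)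
    (htQ : |t| ≤ Q) : 1 / Q ≤ |s| ^ (-2 / 3 : ℝ) * |t| ^ (-2 / 3 : ℝ) := by
  have hQ : 0 < Q := lt_of_lt_of_le (by positivity) hsQ
  have hsQ' : Q ^ (-1 / 3 : ℝ) ≤ |s| ^ (-2 / 3 : ℝ) := by
    have hpow : |s| ^ (-2 / 3 : ℝ) = (s ^ 2) ^ (-1 / 3 : ℝ) := by
      rw [← sq_abs, ← Real.rpow_two, ← Real.rpow_mul (abs_nonneg s)]; norm_num
    rw [hpow]
    exact Real.rpow_le_rpow_of_nonpos (by positivity) hsQ (by norm_num)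
  have htQ' : Q ^ (-2 / 3 : ℝ) ≤ |t| ^ (-2 / 3 : ℝ) :=
    Real.rpow_le_rpow_of_nonpos (abs_pos.2 ht) htQ (by norm_num)
  calc 1 / Q = Q ^ (-1 / 3 : ℝ) * Q ^ (-2 / 3 : ℝ) := by
        rw [← Real.rpow_add hQ]; norm_num [Real.rpow_neg_one]
    _ ≤ |s| ^ (-2 / 3 : ℝ) * |t| ^ (-2 / 3 : ℝ) := by gcongr

end AbsRpow

/-! ### The vector field in the gap -/

theorem pd_comp {g : ℝ → ℝ} {f : ℝ² → ℝ} {x : ℝ²} (hg : DifferentiableAt ℝ g (f x))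
    (hf : DifferentiableAt ℝ f x) (i : Fin 2) :
    pd i (fun y => g (f y)) x = deriv g (f x) * pd i f x :=
  congrArg (· (EuclideanSpace.single i 1))
    (hg.hasDerivAt.comp_hasFDerivAt x hf.hasFDerivAt).fderiv

theorem gradSq_comp {g : ℝ → ℝ} {f : ℝ² → ℝ} {x : ℝ²} (hg : DifferentiableAt ℝ g (f x))
    (hf : DifferentiableAt ℝ f x) :
    gradSq (fun y => g (f y)) x = deriv g (f x) ^ 2 * gradSq f x := by
  simp only [gradSq, pd_comp hg hf]; ring

theorem gradSq_const_mul {f : ℝ² → ℝ} {x : ℝ²} (hf : DifferentiableAt ℝ f x) (k : ℝ) :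
    gradSq (fun y => k * f y) x = k ^ 2 * gradSq f x := by
  simp only [gradSq, pd_const_mul hf]; ring

theorem pd_add_const (f : ℝ² → ℝ) (k : ℝ) (i : Fin 2) (x : ℝ²) :
    pd i (fun y => f y + k) x = pd i f x := by
  rw [pd, fderiv_add_const, pd]

theorem pd_sq {f : ℝ² → ℝ} {x : ℝ²} (hf : DifferentiableAt ℝ f x) (i : Fin 2) :
    pd i (fun y => f y ^ 2) x = 2 * f x * pd i f x := by
  rw [pd_comp (g := fun t => t ^ 2) (by fun_prop) hf]
  simp

theorem killingDefect_rotField_sub_mul_rotField {w : ℝ² → ℝ} {x : ℝ²} (hw : DifferentiableAt ℝ w x)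
    (c d : ℝ²) :
    killingDefect (fun i y => rotField c i y - w y * rotField d i y) x =
      gradSq w x * dist x d ^ 2 := by
  have hrot c i := (contDiff_rotField c 1 i).differentiable one_ne_zero x
  have hpd i j : pd j (fun y => rotField c i y - w y * rotField d i y) x =
      pd j (rotField c i) x - (w x * pd j (rotField d i) x + rotField d i x * pd j w x) := by
    rw [pd_sub (hrot c i) (hw.fun_mul (hrot d i)), pd_mul hw (hrot d i)]
  simp only [killingDefect, hpd, pd_rotField_zero, pd_rotField_one, ← rotField_sq, gradSq]
  norm_num
  ring

theorem deriv_smoothTransition_eq_zero {t : ℝ} (ht : t ∉ Icc 0 1) :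
    deriv Real.smoothTransition t = 0 := by
  rcases lt_or_gt_of_ne (by rintro rfl; simp at ht : t ≠ 0) with h0 | h0
  · have : Real.smoothTransition =ᶠ[𝓝 t] fun _ => 0 := by
      filter_upwards [Iio_mem_nhds h0] with s hs
      exact Real.smoothTransition.zero_of_nonpos hs.le
    rw [this.deriv_eq, deriv_const]
  · have : Real.smoothTransition =ᶠ[𝓝 t] fun _ => 1 := by
      filter_upwards [Ioi_mem_nhds (not_le.1 fun h => ht ⟨h0.le, h⟩ : 1 < t)] with s hs
      exact Real.smoothTransition.one_of_one_le hs.le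
    rw [this.deriv_eq, deriv_const]

theorem exists_deriv_smoothTransition_sq_le : ∃ M, ∀ t, deriv Real.smoothTransition t ^ 2 ≤ M := by
  have hcont : Continuous (deriv Real.smoothTransition) :=
    (Real.smoothTransition.contDiff (n := 1)).continuous_deriv le_rfl
  obtain ⟨M, hM⟩ := (isCompact_Icc (a := (0 : ℝ)) (b := 1)).bddAbove_image
    (hcont.pow 2).continuousOn
  have hM' t (ht : t ∈ Icc (0 : ℝ) 1) := hM (mem_image_of_mem _ ht)
  refine ⟨M, fun t => ?_⟩
  by_cases ht : t ∈ Icc (0 : ℝ) 1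
  · exact hM' t ht
  · rw [deriv_smoothTransition_eq_zero ht, zero_pow two_ne_zero]
    exact (sq_nonneg _).trans (hM' 0 (left_mem_Icc.2 zero_le_one))

/-- The mean of `‖x‖ ^ 2 - 1` and `dist x !₂[0, -2 * b] ^ 2 - 1`. -/
def gapDenom (b : ℝ) (x : ℝ²) : ℝ := x 0 ^ 2 + (x 1 + b) ^ 2 - (1 - b ^ 2)

/-- A quarter of the difference of `dist x !₂[0, -2 * b] ^ 2 - 1` and `‖x‖ ^ 2 - 1`, relative to
their mean: it is `1 / 2` on the upper circle and `-1 / 2` on the lower one. -/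
noncomputable def gapRatio (b : ℝ) (x : ℝ²) : ℝ := b * (x 1 + b) / gapDenom b x

/-- The smooth cutoff which vanishes near the upper circle and is `1` near the lower one. -/
noncomputable def gapCutoff (b : ℝ) (x : ℝ²) : ℝ := Real.smoothTransition (1 / 2 - 2 * gapRatio b x)

/-- The field in the gap between the unit circles around `0` and `!₂[0, -2 * b]`: the rotation about
`0`, minus `2 * gapCutoff b` times the rotation about the midpoint `!₂[0, -b]`. It is the rotation
about `0` near the upper circle, and minus the rotation about `!₂[0, -2 * b]` near the lower one. -/
noncomputable def gapField (b : ℝ) (i : Fin 2) (x : ℝ²) : ℝ :=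
  rotField 0 i x - 2 * gapCutoff b x * rotField !₂[0, -b] i x

section GapField

variable {b : ℝ} {x : ℝ²}

theorem norm_sq_sub_one_eq (b : ℝ) (x : ℝ²) : ‖x‖ ^ 2 - 1 = gapDenom b x - 2 * b * (x 1 + b) := by
  rw [← dist_zero_right, dist_sq_eq, gapDenom]
  simp only [PiLp.zero_apply]
  ring

theorem dist_sq_sub_one_eq (b : ℝ) (x : ℝ²) :
    dist x !₂[0, -2 * b] ^ 2 - 1 = gapDenom b x + 2 * b * (x 1 + b) := by
  rw [dist_sq_eq, gapDenom]
  simp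
  ring

theorem gapDenom_eq (b : ℝ) (x : ℝ²) : gapDenom b x = dist x !₂[0, -b] ^ 2 + (b ^ 2 - 1) := by
  rw [dist_sq_eq, gapDenom]
  simp
  ring

theorem gapDenom_pos (hb : 1 < b) (x : ℝ²) : 0 < gapDenom b x := by
  rw [gapDenom_eq]
  have : 1 < b ^ 2 := one_lt_pow₀ hb two_ne_zero
  linarith [sq_nonneg (dist x !₂[0, -b])]

theorem contDiff_gapDenom (b : ℝ) : ContDiff ℝ ∞ (gapDenom b) := by unfold gapDenom; fun_prop

theorem contDiff_gapRatio (hb : 1 < b) : ContDiff ℝ ∞ (gapRatio b) :=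
  ContDiff.div (by fun_prop) (contDiff_gapDenom b) fun x => (gapDenom_pos hb x).ne'

theorem contDiff_gapCutoff (hb : 1 < b) : ContDiff ℝ ∞ (gapCutoff b) :=
  Real.smoothTransition.contDiff.comp
    (contDiff_const.sub (contDiff_const.mul (contDiff_gapRatio hb)))

theorem contDiff_gapField (hb : 1 < b) (i : Fin 2) : ContDiff ℝ ∞ (gapField b i) :=
  (contDiff_rotField 0 ∞ i).sub
    ((contDiff_const.mul (contDiff_gapCutoff hb)).mul (contDiff_rotField _ ∞ i))

theorem gapCutoff_mem_Icc (b : ℝ) (x : ℝ²) : gapCutoff b x ∈ Icc (0 : ℝ) 1 :=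
  ⟨Real.smoothTransition.nonneg _, Real.smoothTransition.le_one _⟩

theorem gapCutoff_eq_zero (hb : 1 < b) (hx : gapDenom b x ≤ 4 * b * (x 1 + b)) :
    gapCutoff b x = 0 := by
  have : 1 / 4 ≤ gapRatio b x := by rw [gapRatio, le_div_iff₀ (gapDenom_pos hb x)]; linarith
  exact Real.smoothTransition.zero_of_nonpos (by linarith)

theorem gapCutoff_eq_one (hb : 1 < b) (hx : gapDenom b x ≤ -(4 * b * (x 1 + b))) :
    gapCutoff b x = 1 := by
  have : gapRatio b x ≤ -1 / 4 := by rw [gapRatio, div_le_iff₀ (gapDenom_pos hb x)]; linarith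
  exact Real.smoothTransition.one_of_one_le (by linarith)

theorem pd_gapDenom (b : ℝ) (x : ℝ²) (i : Fin 2) :
    pd i (gapDenom b) x = 2 * if i = 0 then x 0 else x 1 + b := by
  refine (pd_sub_const _ _ i x).trans ?_
  rw [pd_add (by fun_prop) (by fun_prop), pd_sq (by fun_prop), pd_sq (by fun_prop), pd_add_const,
    pd_apply, pd_apply]
  fin_cases i <;> simp

theorem gradSq_gapRatio_le (hb : 1 < b) (x : ℝ²) :
    gradSq (gapRatio b) x ≤ (b / gapDenom b x) ^ 2 := by
  have hQ := gapDenom_pos hb x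
  have hmul : (fun y => gapRatio b y * gapDenom b y) = fun y => b * (y 1 + b) :=
    funext fun y => div_mul_cancel₀ _ (gapDenom_pos hb y).ne'
  have hpd i : gapRatio b x * (2 * if i = 0 then x 0 else x 1 + b) +
      gapDenom b x * pd i (gapRatio b) x = b * if i = 1 then 1 else 0 := by
    rw [← pd_gapDenom, ← pd_mul ((contDiff_gapRatio hb).differentiable (by simp) x)
      ((contDiff_gapDenom b).differentiable (by simp) x), hmul, pd_const_mul (by fun_prop),
      pd_add_const, pd_apply]
  have h0 : gapDenom b x * pd 0 (gapRatio b) x = -(2 * gapRatio b x * x 0) := by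
    have := hpd 0
    simp only [↓reduceIte, zero_ne_one] at this
    linarith
  have h1 : gapDenom b x * pd 1 (gapRatio b) x = b - 2 * gapRatio b x * (x 1 + b) := by
    have := hpd 1
    simp only [↓reduceIte, one_ne_zero] at this
    linarith
  have hτ : gapRatio b x * gapDenom b x = b * (x 1 + b) := congrFun hmul x
  have hb2 : 0 ≤ b ^ 2 - 1 := by nlinarith
  rw [div_pow, le_div_iff₀ (by positivity)]
  calc gradSq (gapRatio b) x * gapDenom b x ^ 2
      = (gapDenom b x * pd 0 (gapRatio b) x) ^ 2 + (gapDenom b x * pd 1 (gapRatio b) x) ^ 2 := by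
        rw [gradSq]; ring
    _ = b ^ 2 - 4 * gapRatio b x * (b * (x 1 + b)) +
          4 * gapRatio b x ^ 2 * (x 0 ^ 2 + (x 1 + b) ^ 2) := by rw [h0, h1]; ring
    _ = b ^ 2 - 4 * gapRatio b x ^ 2 * (b ^ 2 - 1) := by rw [← hτ, gapDenom]; ring
    _ ≤ b ^ 2 := by linarith [mul_nonneg (sq_nonneg (gapRatio b x)) hb2]

theorem gradSq_gapCutoff (hb : 1 < b) (x : ℝ²) : gradSq (gapCutoff b) x =
    4 * deriv Real.smoothTransition (1 / 2 - 2 * gapRatio b x) ^ 2 * gradSq (gapRatio b) x := by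
  have hτ := (contDiff_gapRatio hb).differentiable (by simp) x
  have hχ := (Real.smoothTransition.contDiff (n := 1)).differentiable one_ne_zero
  have hinner : deriv (fun t : ℝ => Real.smoothTransition (1 / 2 - 2 * t)) (gapRatio b x) =
      deriv Real.smoothTransition (1 / 2 - 2 * gapRatio b x) * -2 :=
    ((hχ _).hasDerivAt.comp _ (((hasDerivAt_id _).const_mul 2).const_sub (1 / 2))).deriv.trans
      (by simp)
  refine (gradSq_comp (g := fun t => Real.smoothTransition (1 / 2 - 2 * t))
    (by fun_prop) hτ).trans ?_
  rw [hinner]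
  ring

theorem killingDefect_gapField (hb : 1 < b) (x : ℝ²) :
    killingDefect (gapField b) x = 4 * gradSq (gapCutoff b) x * dist x !₂[0, -b] ^ 2 := by
  have hdiff := (contDiff_gapCutoff hb).differentiable (by simp) x
  refine (killingDefect_rotField_sub_mul_rotField (hdiff.const_mul 2) 0 !₂[0, -b]).trans ?_
  rw [gradSq_const_mul hdiff]
  norm_num

theorem killingDefect_gapField_le (hb : 1 < b) {M : ℝ}
    (hM : ∀ t, deriv Real.smoothTransition t ^ 2 ≤ M) (h0 : x 0 ≠ 0) (h1 : x 1 ≠ -b) :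
    killingDefect (gapField b) x ≤
      16 * b ^ 2 * M * (|x 0| ^ (-2 / 3 : ℝ) * |x 1 + b| ^ (-2 / 3 : ℝ)) := by
  have hM0 : 0 ≤ M := (sq_nonneg _).trans (hM 0)
  rw [killingDefect_gapField hb, gradSq_gapCutoff hb]
  by_cases ht : 1 / 2 - 2 * gapRatio b x ∈ Icc (0 : ℝ) 1
  swap
  · rw [deriv_smoothTransition_eq_zero ht]
    simp only [ne_eq, OfNat.ofNat_ne_zero, not_false_eq_true, zero_pow, mul_zero, zero_mul]
    positivity
  have hQ := gapDenom_pos hb x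
  have hratio : |gapRatio b x| ≤ 1 / 4 := abs_le.2 ⟨by linarith [ht.2], by linarith [ht.1]⟩
  have hz : |x 1 + b| ≤ gapDenom b x := by
    rw [gapRatio, abs_div, abs_mul, abs_of_pos hQ, abs_of_pos (zero_lt_one.trans hb),
      div_le_iff₀ hQ] at hratio
    linarith [mul_le_mul_of_nonneg_right hb.le (abs_nonneg (x 1 + b))]
  have hd : dist x !₂[0, -b] ^ 2 ≤ gapDenom b x := by
    rw [gapDenom_eq]; nlinarith
  have hx0 : x 0 ^ 2 ≤ gapDenom b x := by
    unfold gapDenom; nlinarith [sq_nonneg (x 1 + b)]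
  have hweight := one_div_le_abs_rpow_mul_abs_rpow h0 (fun h => h1 (eq_neg_of_add_eq_zero_left h))
    hx0 hz
  set S := deriv Real.smoothTransition (1 / 2 - 2 * gapRatio b x)
  calc 4 * (4 * S ^ 2 * gradSq (gapRatio b) x) * dist x !₂[0, -b] ^ 2
      ≤ 4 * (4 * M * (b / gapDenom b x) ^ 2) * gapDenom b x := by
        gcongr
        · exact gradSq_nonneg _ _
        · exact hM _
        · exact gradSq_gapRatio_le hb x
    _ = 16 * b ^ 2 * M * (1 / gapDenom b x) := by field_simp; ring
    _ ≤ _ := by gcongr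

end GapField

/-- At the points of `s` at distance more than `ε` from the unit circle around `!₂[0, -2 * b]`, the
coefficient `a` is invariant under infinitesimal rotations about `0`, and vice versa. -/
structure IsRotationalOffCircles (a : ℝ² → ℝ) (b ε : ℝ) (s : Set ℝ²) : Prop where
  fieldDeriv_zero : ∀ x ∈ s, ε < |dist x !₂[0, -2 * b] - 1| → fieldDeriv (rotField 0) a x = 0
  fieldDeriv_lower : ∀ x ∈ s, ε < |‖x‖ - 1| → fieldDeriv (rotField !₂[0, -2 * b]) a x = 0

theorem IsRotationalOffCircles.mono {a : ℝ² → ℝ} {b ε : ℝ} {s t : Set ℝ²}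
    (h : IsRotationalOffCircles a b ε t) (hst : s ⊆ t) : IsRotationalOffCircles a b ε s :=
  ⟨fun x hx => h.fieldDeriv_zero x (hst hx), fun x hx => h.fieldDeriv_lower x (hst hx)⟩

section GapField

variable {b ε : ℝ} {x : ℝ²}

theorem two_mul_le_norm_add_dist (b : ℝ) (x : ℝ²) : 2 * b ≤ ‖x‖ + dist x !₂[0, -2 * b] := by
  have h := (abs_apply_sub_le_dist 0 !₂[0, -2 * b] 1).trans (dist_triangle_left 0 _ x)
  rw [dist_zero_right] at h
  refine le_trans (le_trans (le_abs_self _) (le_of_eq ?_)) h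
  congr 1
  simp

theorem fieldDeriv_gapField (b : ℝ) (f : ℝ² → ℝ) (x : ℝ²) :
    fieldDeriv (gapField b) f x = (1 - gapCutoff b x) * fieldDeriv (rotField 0) f x -
      gapCutoff b x * fieldDeriv (rotField !₂[0, -2 * b]) f x := by
  simp only [fieldDeriv, gapField, rotField, Matrix.cons_val_zero, Matrix.cons_val_one,
    PiLp.zero_apply]
  ring

theorem gapCutoff_eq_zero_of_abs_norm_sub_one_le (hb : 1 < b) (hε : ε < (b - 1) / 2)
    (hx : |‖x‖ - 1| ≤ ε) : gapCutoff b x = 0 := by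
  have hε0 : 0 ≤ ε := (abs_nonneg _).trans hx
  have hnorm : ‖x‖ ^ 2 ≤ (1 + ε) ^ 2 := by gcongr; linarith [(abs_le.1 hx).2]
  have hdist : (1 + 3 * ε) ^ 2 ≤ dist x !₂[0, -2 * b] ^ 2 := by
    gcongr; linarith [(abs_le.1 hx).2, two_mul_le_norm_add_dist b x]
  apply gapCutoff_eq_zero hb
  linarith [norm_sq_sub_one_eq b x, dist_sq_sub_one_eq b x, sq_nonneg ε]

theorem gapCutoff_eq_one_of_abs_dist_sub_one_le (hb : 1 < b) (hε : ε < (b - 1) / 2)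
    (hx : |dist x !₂[0, -2 * b] - 1| ≤ ε) : gapCutoff b x = 1 := by
  have hε0 : 0 ≤ ε := (abs_nonneg _).trans hx
  have hdist : dist x !₂[0, -2 * b] ^ 2 ≤ (1 + ε) ^ 2 := by
    gcongr; linarith [(abs_le.1 hx).2]
  have hnorm : (1 + 3 * ε) ^ 2 ≤ ‖x‖ ^ 2 := by
    gcongr; linarith [(abs_le.1 hx).2, two_mul_le_norm_add_dist b x]
  apply gapCutoff_eq_one hb
  linarith [norm_sq_sub_one_eq b x, dist_sq_sub_one_eq b x, sq_nonneg ε]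

theorem IsRotationalOffCircles.fieldDeriv_gapField_eq_zero {a : ℝ² → ℝ} {s : Set ℝ²}
    (h : IsRotationalOffCircles a b ε s) (hb : 1 < b) (hε : ε < (b - 1) / 2) (hx : x ∈ s) :
    fieldDeriv (gapField b) a x = 0 := by
  rw [fieldDeriv_gapField]
  have hupper : (1 - gapCutoff b x) * fieldDeriv (rotField 0) a x = 0 := by
    rcases le_or_gt |dist x !₂[0, -2 * b] - 1| ε with hd | hd
    · rw [gapCutoff_eq_one_of_abs_dist_sub_one_le hb hε hd, sub_self, zero_mul]
    · rw [h.fieldDeriv_zero x hx hd, mul_zero]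
  have hlower : gapCutoff b x * fieldDeriv (rotField !₂[0, -2 * b]) a x = 0 := by
    rcases le_or_gt |‖x‖ - 1| ε with hd | hd
    · rw [gapCutoff_eq_zero_of_abs_norm_sub_one_le hb hε hd, zero_mul]
    · rw [h.fieldDeriv_lower x hx hd, mul_zero]
  rw [hupper, hlower, sub_zero]

theorem gapField_sq_mem_Icc (hb : 1 ≤ b) (hb2 : b ≤ 2) (hx : dist x !₂[0, -b] ≤ 1 / 2) :
    gapField b 0 x ^ 2 + gapField b 1 x ^ 2 ∈ Icc (1 / 4 : ℝ) 9 := by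
  obtain ⟨hw0, hw1⟩ := gapCutoff_mem_Icc b x
  have h0 : gapField b 0 x = b + (2 * gapCutoff b x - 1) * (x 1 + b) := by
    simp only [gapField, rotField, Matrix.cons_val_zero, Matrix.cons_val_one, PiLp.zero_apply]
    ring
  have h1 : gapField b 1 x = (1 - 2 * gapCutoff b x) * x 0 := by
    simp only [gapField, rotField, Matrix.cons_val_zero, Matrix.cons_val_one, PiLp.zero_apply]
    ring
  have hw : |2 * gapCutoff b x - 1| ≤ 1 := abs_le.2 ⟨by linarith, by linarith⟩
  have hx0 : |x 0| ≤ 1 / 2 := by simpa using (abs_apply_sub_le_dist x !₂[0, -b] 0).trans hx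
  have hx1 : |x 1 + b| ≤ 1 / 2 := by simpa using (abs_apply_sub_le_dist x !₂[0, -b] 1).trans hx
  have hz : |(2 * gapCutoff b x - 1) * (x 1 + b)| ≤ 1 / 2 := by
    rw [abs_mul]; nlinarith [abs_nonneg (x 1 + b)]
  have hs : |gapField b 1 x| ≤ 1 / 2 := by
    rw [h1, abs_mul, abs_sub_comm]; nlinarith [abs_nonneg (x 0)]
  rw [abs_le] at hz hs
  constructor
  · nlinarith [sq_nonneg (gapField b 1 x)]
  · nlinarith

end GapField

section Gap

variable {a u : ℝ² → ℝ} {l L b ε : ℝ}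

theorem diskInt_killingDefect_gapField_mul_gradSq_le (hu : ContDiff ℝ 1 u) (hb : 1 < b)
    (hb2 : b ≤ 2) {M : ℝ} (hM : ∀ t, deriv Real.smoothTransition t ^ 2 ≤ M) {y : ℝ²} {ρ G : ℝ}
    (hρ : 0 ≤ ρ) (hG : ∀ x ∈ Metric.closedBall y ρ, gradSq u x ≤ G) :
    diskInt y (fun x => killingDefect (gapField b) x * gradSq u x) ρ ≤
      4096 * M * G * ρ ^ (2 / 3 : ℝ) := by
  have hM0 : 0 ≤ M := (sq_nonneg _).trans (hM 0)
  have hG0 : 0 ≤ G := (gradSq_nonneg u y).trans (hG y (Metric.mem_closedBall_self hρ))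
  have hT i : ContDiff ℝ 1 (gapField b i) := (contDiff_gapField hb i).of_le (by simp)
  rcases hρ.eq_or_lt with rfl | hρ
  · rw [diskInt_zero_radius]; positivity
  refine (diskInt_le_of_le_mul_abs_rpow (p := -2 / 3) (b := b) (K := 64 * M * G) (by norm_num)
    (by norm_num) (by fun_prop) y (by positivity) hρ fun x hx h0 h1 => ?_).trans_eq ?_
  · calc killingDefect (gapField b) x * gradSq u x
        ≤ (16 * b ^ 2 * M * (|x 0| ^ (-2 / 3 : ℝ) * |x 1 + b| ^ (-2 / 3 : ℝ))) * G :=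
          mul_le_mul (killingDefect_gapField_le hb hM h0 h1) (hG x hx) (gradSq_nonneg u x)
            (by positivity)
      _ ≤ (16 * 2 ^ 2 * M * (|x 0| ^ (-2 / 3 : ℝ) * |x 1 + b| ^ (-2 / 3 : ℝ))) * G := by gcongr
      _ = 64 * M * G * (|x 0| ^ (-2 / 3 : ℝ) * |x 1 + b| ^ (-2 / 3 : ℝ)) := by ring
  · rw [show (2 + 2 / (-2 / 3 + 1) : ℝ) ^ 2 = 64 by norm_num,
      show (2 * (-2 / 3 + 1) : ℝ) = 2 / 3 by norm_num]
    ring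

theorem gradSq_le_of_gap (hu : ContDiff ℝ 3 u) (ha : ContDiff ℝ 2 a) {M : ℝ}
    (hM : ∀ t, deriv Real.smoothTransition t ^ 2 ≤ M) {y : ℝ²} {R N G : ℝ} (hR : 0 < R)
    (hl : 0 < l) (hl1 : l ≤ 1) (hL : 1 ≤ L) (hN : 0 < N) (hb : 1 < b) (hb2 : b ≤ 2)
    (hε : ε < (b - 1) / 2) (h : IsConductivitySolutionOn a u l L (Metric.closedBall y R))
    (hrot : IsRotationalOffCircles a b ε (Metric.closedBall y R))
    (huN : ∀ x ∈ Metric.closedBall y R, |u x| ≤ N)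
    (huG : ∀ x ∈ Metric.closedBall y R, gradSq u x ≤ G)
    (hgap : Metric.closedBall y R ⊆ Metric.closedBall !₂[0, -b] (1 / 2)) :
    gradSq u y ≤ gradConst l L (1 / 4) 9 *
      (260 * L ^ 4 / l ^ 2 * N ^ 2 / R ^ 2 + 4096 * M * G * R ^ (2 / 3 : ℝ)) := by
  have hM0 : 0 ≤ M := (sq_nonneg _).trans (hM 0)
  have hy : y ∈ Metric.closedBall y R := Metric.mem_closedBall_self hR.le
  have hG0 : 0 ≤ G := (gradSq_nonneg u y).trans (huG y hy)
  have hsub : Metric.closedBall y (R / 2) ⊆ Metric.closedBall y R :=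
    Metric.closedBall_subset_closedBall (by linarith)
  have hfield x (hx : x ∈ Metric.closedBall y R) := gapField_sq_mem_Icc hb.le hb2 (hgap hx)
  have hE : 0 < 260 * L ^ 4 / l ^ 2 * N ^ 2 / R ^ 2 := by positivity
  have hD : 0 ≤ 4096 * M * G * R ^ (2 / 3 : ℝ) := by positivity
  refine gradSq_center_le_of_field (p := 2 / 3) (B := 4096 * M * G) hu ha
    (fun i => contDiff_infty.1 (contDiff_gapField hb i) 2) (half_pos hR) hl hl1 hL le_rfl
    (by positivity) (by norm_num) (by norm_num) (h.mono hsub)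
    (fun x hx => hrot.fieldDeriv_gapField_eq_zero hb hε (hsub hx))
    (fun x hx => (hfield x (hsub hx)).2) (hfield y hy).1 (fun ρ hρ => ?_) (by positivity) ?_ ?_
  · exact diskInt_killingDefect_gapField_mul_gradSq_le (hu.of_le (by norm_num)) hb hb2 hM hρ.1
      fun x hx => huG x (hsub (Metric.closedBall_subset_closedBall hρ.2 hx))
  · calc diskInt y (gradSq u) (R / 2) ≤ 64 * L ^ 4 / l ^ 2 * N ^ 2 :=
          diskInt_gradSq_half_le_of_abs_le (hu.of_le (by norm_num)) (ha.of_le one_le_two) hR hl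
            hL h huN
      _ < 65 * L ^ 4 / l ^ 2 * N ^ 2 := by gcongr; norm_num
      _ = 260 * L ^ 4 / l ^ 2 * N ^ 2 / R ^ 2 * (R / 2) ^ 2 := by field_simp; norm_num
      _ ≤ _ := by gcongr; linarith
  · calc 4096 * M * G * (R / 2) ^ (2 / 3 : ℝ) ≤ 4096 * M * G * R ^ (2 / 3 : ℝ) := by
          gcongr; linarith
      _ ≤ _ := by linarith

end Gap

/-! ### The interior estimate -/

section Local

variable {a u : ℝ² → ℝ} {l L b ε : ℝ} {y : ℝ²} {R : ℝ}

theorem dist_le_two_mul_of_mem_closedBall {p q : ℝ²} (hp : p ∈ Metric.closedBall y R)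
    (hq : q ∈ Metric.closedBall y R) : dist p q ≤ 2 * R := by
  linarith [dist_triangle_right p q y, Metric.mem_closedBall.1 hp, Metric.mem_closedBall.1 hq]

theorem sub_one_lt_of_mem_closedBall_near_circles {p q : ℝ²} (hp : p ∈ Metric.closedBall y R)
    (hq : q ∈ Metric.closedBall y R) (hε : ε < (b - 1) / 2) (hpε : |‖p‖ - 1| ≤ ε)
    (hqε : |dist q !₂[0, -2 * b] - 1| ≤ ε) : b - 1 < 2 * R := by
  linarith [two_mul_le_norm_add_dist b p, dist_triangle p q !₂[0, -2 * b],
    dist_le_two_mul_of_mem_closedBall hp hq, (abs_le.1 hpε).2, (abs_le.1 hqε).2]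

theorem dist_midpoint_le_half (hb : 1 < b) {x : ℝ²} (hR1 : R ≤ 1 / 100) (hx : ‖x‖ ≤ 1 + 3 * R)
    (hx' : dist x !₂[0, -2 * b] ≤ 1 + 3 * R) : dist x !₂[0, -b] ≤ 1 / 2 := by
  have : 0 ≤ 1 + 3 * R := (norm_nonneg x).trans hx
  have hnorm : ‖x‖ ^ 2 ≤ (1 + 3 / 100) ^ 2 := by gcongr; linarith
  have hdist : dist x !₂[0, -2 * b] ^ 2 ≤ (1 + 3 / 100) ^ 2 := by gcongr; linarith
  have hb2 : 1 < b ^ 2 := one_lt_pow₀ hb two_ne_zero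
  refine le_of_sq_le_sq ?_ (by norm_num)
  linarith [norm_sq_sub_one_eq b x, dist_sq_sub_one_eq b x, gapDenom_eq b x]

theorem closedBall_subset_of_near_circles {p q : ℝ²} (hp : p ∈ Metric.closedBall y R)
    (hq : q ∈ Metric.closedBall y R) (hR1 : R ≤ 1 / 100) (hb : 1 < b) (hε : ε < (b - 1) / 2)
    (hpε : |‖p‖ - 1| ≤ ε) (hqε : |dist q !₂[0, -2 * b] - 1| ≤ ε) :
    Metric.closedBall y R ⊆ Metric.closedBall !₂[0, -b] (1 / 2) := by
  intro x hx
  have hbR := sub_one_lt_of_mem_closedBall_near_circles hp hq hε hpε hqε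
  refine Metric.mem_closedBall.2 (dist_midpoint_le_half hb hR1 ?_ ?_)
  · linarith [norm_le_norm_add_norm_sub p x, dist_eq_norm p x,
      dist_le_two_mul_of_mem_closedBall hp hx, (abs_le.1 hpε).2]
  · linarith [dist_triangle x q !₂[0, -2 * b], dist_le_two_mul_of_mem_closedBall hx hq,
      (abs_le.1 hqε).2]

/-- The constant in front of `N ^ 2 / R ^ 2` in the interior estimate. -/
noncomputable def energyConst (l L : ℝ) : ℝ := 4 * rotConst l L + 260 * L ^ 4 / l ^ 2

theorem energyConst_pos (hl : 0 < l) (hL : 0 < L) : 0 < energyConst l L := by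
  have := rotConst_pos hl hL
  unfold energyConst
  positivity

theorem gradSq_le_of_forall_abs_le (hu : ContDiff ℝ 3 u) (ha : ContDiff ℝ 2 a) {M : ℝ}
    (hM : ∀ t, deriv Real.smoothTransition t ^ 2 ≤ M) {N G : ℝ} (hR : 0 < R) (hR1 : R ≤ 1 / 100)
    (hl : 0 < l) (hl1 : l ≤ 1) (hL : 1 ≤ L) (hN : 0 < N) (hb : 1 < b) (hε : ε < (b - 1) / 2)
    (h : IsConductivitySolutionOn a u l L (Metric.closedBall y R))
    (hrot : IsRotationalOffCircles a b ε (Metric.closedBall y R))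
    (huN : ∀ x ∈ Metric.closedBall y R, |u x| ≤ N)
    (huG : ∀ x ∈ Metric.closedBall y R, gradSq u x ≤ G) :
    gradSq u y ≤ gradConst l L (1 / 4) 9 *
      (energyConst l L * N ^ 2 / R ^ 2 + 4096 * M * G * R ^ (2 / 3 : ℝ)) := by
  have hL0 : 0 < L := by linarith
  have := gradConst_pos (m := 1 / 4) (M := 9) hl hL0 (by norm_num) (by norm_num)
  have hM0 : 0 ≤ M := (sq_nonneg _).trans (hM 0)
  have hG0 : 0 ≤ G := (gradSq_nonneg u y).trans (huG y (Metric.mem_closedBall_self hR.le))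
  have hrotConst : 4 * rotConst l L ≤ energyConst l L :=
    le_add_of_nonneg_right (by positivity)
  have hgapConst : 260 * L ^ 4 / l ^ 2 ≤ energyConst l L :=
    le_add_of_nonneg_left (mul_nonneg zero_le_four (rotConst_pos hl hL0).le)
  have hone {c : ℝ²} (hc : ∀ x ∈ Metric.closedBall y R, fieldDeriv (rotField c) a x = 0) :
      gradSq u y ≤ gradConst l L (1 / 4) 9 *
        (energyConst l L * N ^ 2 / R ^ 2 + 4096 * M * G * R ^ (2 / 3 : ℝ)) := by
    refine (gradSq_le_of_rotational hu ha hR hl hl1 hL hN h hc huN).trans ?_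
    gcongr
    exact (by gcongr : _ ≤ _).trans (le_add_of_nonneg_right (by positivity))
  by_cases hlower : ∀ x ∈ Metric.closedBall y R, ε < |dist x !₂[0, -2 * b] - 1|
  · exact hone fun x hx => hrot.fieldDeriv_zero x hx (hlower x hx)
  by_cases hupper : ∀ x ∈ Metric.closedBall y R, ε < |‖x‖ - 1|
  · exact hone fun x hx => hrot.fieldDeriv_lower x hx (hupper x hx)
  push Not at hlower hupper
  obtain ⟨q, hq, hqε⟩ := hlower
  obtain ⟨p, hp, hpε⟩ := hupper
  have hbR := sub_one_lt_of_mem_closedBall_near_circles hp hq hε hpε hqε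
  refine (gradSq_le_of_gap hu ha hM hR hl hl1 hL hN hb (by linarith) hε h hrot huN huG
    (closedBall_subset_of_near_circles hp hq hR1 hb hε hpε hqε)).trans ?_
  gcongr

end Local

section Localization

variable {f g a u A U : ℝ² → ℝ} {x : ℝ²} {l L b ε : ℝ} {s : Set ℝ²}

theorem exists_contDiff_eventuallyEq_of_mem_closedBall {E F : Type*} [NormedAddCommGroup E]
    [NormedSpace ℝ E] [FiniteDimensional ℝ E] [NormedAddCommGroup F] [NormedSpace ℝ F] {f : E → F}
    {Ω : Set E} (hΩ : IsOpen Ω) {n : ℕ∞} (hf : ContDiffOn ℝ n f Ω) {c : E} {R : ℝ} (hR : 0 ≤ R)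
    (hsub : Metric.closedBall c R ⊆ Ω) :
    ∃ g : E → F, ContDiff ℝ n g ∧ ∀ x ∈ Metric.closedBall c R, g =ᶠ[𝓝 x] f := by
  obtain ⟨r, hr, hthick⟩ := (isCompact_closedBall c R).exists_cthickening_subset_open hΩ hsub
  have hball : Metric.closedBall c (R + r) ⊆ Ω := by
    rwa [cthickening_closedBall hr.le hR, add_comm] at hthick
  let χ : ContDiffBump c := ⟨R + r / 3, R + 2 * r / 3, by linarith, by linarith⟩
  refine ⟨fun x => χ x • f x, contDiff_iff_contDiffAt.2 fun x => ?_, fun x hx => ?_⟩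
  · by_cases hx : x ∈ Metric.closedBall c (R + 2 * r / 3)
    · have hxΩ : x ∈ Ω := hball (Metric.closedBall_subset_closedBall (by linarith) hx)
      exact χ.contDiff.contDiffAt.smul (hf.contDiffAt (hΩ.mem_nhds hxΩ))
    · refine contDiffAt_const (c := 0) |>.congr_of_eventuallyEq ?_
      filter_upwards [Metric.isClosed_closedBall.isOpen_compl.mem_nhds hx] with z hz
      rw [χ.zero_of_le_dist (not_le.1 (mt Metric.mem_closedBall.2 hz)).le, zero_smul]
  · have hnhds : Metric.ball c (R + r / 3) ∈ 𝓝 x :=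
      Metric.isOpen_ball.mem_nhds (Metric.closedBall_subset_ball (by linarith) hx)
    filter_upwards [hnhds] with z hz
    rw [χ.one_of_mem_closedBall (Metric.ball_subset_closedBall hz), one_smul]

theorem pd_congr (h : f =ᶠ[𝓝 x] g) (i : Fin 2) : pd i f x = pd i g x := by
  unfold pd; rw [h.fderiv_eq]

theorem eventuallyEq_pd (h : f =ᶠ[𝓝 x] g) (i : Fin 2) : pd i f =ᶠ[𝓝 x] pd i g :=
  h.eventuallyEq_nhds.mono fun _ hy => pd_congr hy i

theorem gradSq_congr (h : f =ᶠ[𝓝 x] g) : gradSq f x = gradSq g x := by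
  simp only [gradSq, pd_congr h]

theorem fieldDeriv_congr (h : f =ᶠ[𝓝 x] g) (T : Fin 2 → ℝ² → ℝ) :
    fieldDeriv T f x = fieldDeriv T g x := by
  simp only [fieldDeriv, pd_congr h]

theorem IsConductivitySolutionOn.congr (h : IsConductivitySolutionOn a u l L s)
    (hA : ∀ x ∈ s, A =ᶠ[𝓝 x] a) (hU : ∀ x ∈ s, U =ᶠ[𝓝 x] u) :
    IsConductivitySolutionOn A U l L s where
  le_coeff x hx := (hA x hx).eq_of_nhds ▸ h.le_coeff x hx
  coeff_le x hx := (hA x hx).eq_of_nhds ▸ h.coeff_le x hx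
  div_eq_zero x hx := by
    simpa only [(hA x hx).eq_of_nhds, pd_congr (hA x hx), pd_congr (hU x hx),
      fun i => pd_congr (eventuallyEq_pd (hU x hx) i) i] using h.div_eq_zero x hx

theorem IsRotationalOffCircles.congr (h : IsRotationalOffCircles a b ε s)
    (hA : ∀ x ∈ s, A =ᶠ[𝓝 x] a) : IsRotationalOffCircles A b ε s where
  fieldDeriv_zero x hx hε := (fieldDeriv_congr (hA x hx) _).trans (h.fieldDeriv_zero x hx hε)
  fieldDeriv_lower x hx hε := (fieldDeriv_congr (hA x hx) _).trans (h.fieldDeriv_lower x hx hε)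

theorem gradSq_le_of_contDiffOn {Ω : Set ℝ²} (hΩ : IsOpen Ω) (hu : ContDiffOn ℝ 3 u Ω)
    (ha : ContDiffOn ℝ 2 a Ω) {M : ℝ} (hM : ∀ t, deriv Real.smoothTransition t ^ 2 ≤ M) {y : ℝ²}
    {R N G : ℝ} (hR : 0 < R) (hR1 : R ≤ 1 / 100) (hsub : Metric.closedBall y R ⊆ Ω)
    (hl : 0 < l) (hl1 : l ≤ 1) (hL : 1 ≤ L) (hN : 0 < N) (hb : 1 < b) (hε : ε < (b - 1) / 2)
    (h : IsConductivitySolutionOn a u l L Ω) (hrot : IsRotationalOffCircles a b ε Ω)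
    (huN : ∀ x ∈ Ω, |u x| ≤ N) (huG : ∀ x ∈ Metric.closedBall y R, gradSq u x ≤ G) :
    gradSq u y ≤ gradConst l L (1 / 4) 9 *
      (energyConst l L * N ^ 2 / R ^ 2 + 4096 * M * G * R ^ (2 / 3 : ℝ)) := by
  obtain ⟨U, hU, hUu⟩ := exists_contDiff_eventuallyEq_of_mem_closedBall hΩ hu hR.le hsub
  obtain ⟨A, hA, hAa⟩ := exists_contDiff_eventuallyEq_of_mem_closedBall hΩ ha hR.le hsub
  rw [← gradSq_congr (hUu y (Metric.mem_closedBall_self hR.le))]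
  exact gradSq_le_of_forall_abs_le hU hA hM hR hR1 hl hl1 hL hN hb hε ((h.mono hsub).congr hAa hUu)
    ((hrot.mono hsub).congr hAa) (fun x hx => (hUu x hx).eq_of_nhds ▸ huN x (hsub hx))
    fun x hx => (gradSq_congr (hUu x hx)).trans_le (huG x hx)

end Localization

section Absorption

variable {X : Type*} [PseudoMetricSpace X] {F : X → ℝ} {x : X} {c₁ c₂ p r s : ℝ}

theorem le_of_isMaxOn_sq_sub_dist_mul (hc₁ : 0 ≤ c₁) (hc₂ : 0 ≤ c₂) (hp : 0 ≤ p) (hr : 0 < r)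
    (hrs : r ≤ s / 2) (hc : c₂ * r ^ p ≤ 1 / 8) {y : X}
    (hF : ∀ z ∈ Metric.closedBall x s, 0 ≤ F z) (hy : y ∈ Metric.closedBall x s)
    (hmax : IsMaxOn (fun z => (s - dist z x) ^ 2 * F z) (Metric.closedBall x s) y)
    (h : ∀ R G, 0 < R → R ≤ r → Metric.closedBall y R ⊆ Metric.closedBall x s →
      (∀ z ∈ Metric.closedBall y R, F z ≤ G) → F y ≤ c₁ / R ^ 2 + c₂ * G * R ^ p) :
    (s - dist y x) ^ 2 * F y ≤ 2 * c₁ * s ^ 2 / r ^ 2 := by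
  set d := s - dist y x with hd
  set P := d ^ 2 * F y with hP
  have hP0 : 0 ≤ P := mul_nonneg (sq_nonneg d) (hF y hy)
  rcases (sub_nonneg.2 (Metric.mem_closedBall.1 hy)).eq_or_lt with h0 | hd0
  · rw [hP, hd, ← h0, zero_pow two_ne_zero, zero_mul]; positivity
  replace hd0 : 0 < d := hd0
  have hds : d ≤ s := sub_le_self s dist_nonneg
  have hs : 0 < s := hd0.trans_le hds
  set R := r / s * d with hR
  have hRd : R ≤ d / 2 := by
    rw [hR, div_mul_eq_mul_div, div_le_iff₀ hs]; nlinarith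
  have hRr : R ≤ r := by
    rw [hR, div_mul_eq_mul_div, div_le_iff₀ hs]; gcongr
  have hhalf z (hz : z ∈ Metric.closedBall y R) : d / 2 ≤ s - dist z x := by
    linarith [Metric.mem_closedBall.1 hz, dist_triangle z y x]
  have hsub : Metric.closedBall y R ⊆ Metric.closedBall x s := fun z hz =>
    Metric.mem_closedBall.2 (by linarith [hhalf z hz])
  have hG z (hz : z ∈ Metric.closedBall y R) : F z ≤ 4 * P / d ^ 2 := by
    rw [le_div_iff₀ (by positivity)]
    have hsq : (d / 2) ^ 2 ≤ (s - dist z x) ^ 2 := by gcongr; exact hhalf z hz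
    linarith [mul_le_mul_of_nonneg_right hsq (hF z (hsub hz)), isMaxOn_iff.1 hmax z (hsub hz)]
  have hcR : c₂ * R ^ p ≤ 1 / 8 := le_trans (by gcongr) hc
  have key : P ≤ c₁ * s ^ 2 / r ^ 2 + P / 2 := calc
    P ≤ d ^ 2 * (c₁ / R ^ 2 + c₂ * (4 * P / d ^ 2) * R ^ p) :=
        mul_le_mul_of_nonneg_left (h R _ (by positivity) hRr hsub hG) (sq_nonneg d)
    _ = c₁ * s ^ 2 / r ^ 2 + 4 * P * (c₂ * R ^ p) := by
        rw [hR, mul_add]; field_simp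
    _ ≤ c₁ * s ^ 2 / r ^ 2 + 4 * P * (1 / 8) := by gcongr
    _ = c₁ * s ^ 2 / r ^ 2 + P / 2 := by ring
  linarith [show 2 * c₁ * s ^ 2 / r ^ 2 = 2 * (c₁ * s ^ 2 / r ^ 2) by ring]

/-- The a priori bound `h`, in which the supremum `G` of `F` reappears with a small factor, is
applied where `(s - dist z x) ^ 2 * F z` is maximal: there `G` is comparable to `F` itself. -/
theorem le_of_forall_le_add_mul_rpow [ProperSpace X] (hc₁ : 0 ≤ c₁) (hc₂ : 0 ≤ c₂) (hp : 0 ≤ p)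
    (hr : 0 < r) (hrs : r ≤ s / 2) (hc : c₂ * r ^ p ≤ 1 / 8)
    (hFc : ContinuousOn F (Metric.closedBall x s)) (hF : ∀ z ∈ Metric.closedBall x s, 0 ≤ F z)
    (h : ∀ y R G, 0 < R → R ≤ r → Metric.closedBall y R ⊆ Metric.closedBall x s →
      (∀ z ∈ Metric.closedBall y R, F z ≤ G) → F y ≤ c₁ / R ^ 2 + c₂ * G * R ^ p) :
    F x ≤ 2 * c₁ / r ^ 2 := by
  have hs : 0 < s := by linarith
  have hx : x ∈ Metric.closedBall x s := Metric.mem_closedBall_self hs.le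
  obtain ⟨y, hy, hmax⟩ := (isCompact_closedBall x s).exists_isMaxOn ⟨x, hx⟩
    (f := fun z => (s - dist z x) ^ 2 * F z) (by fun_prop)
  refine le_of_mul_le_mul_left ?_ (pow_pos hs 2)
  calc s ^ 2 * F x = (s - dist x x) ^ 2 * F x := by rw [dist_self, sub_zero]
    _ ≤ (s - dist y x) ^ 2 * F y := hmax hx
    _ ≤ 2 * c₁ * s ^ 2 / r ^ 2 :=
        le_of_isMaxOn_sq_sub_dist_mul hc₁ hc₂ hp hr hrs hc hF hy hmax (h y)
    _ = s ^ 2 * (2 * c₁ / r ^ 2) := by ring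

theorem exists_pos_le_mul_rpow_le (c : ℝ) {p r₀ κ : ℝ} (hp : 0 < p) (hr₀ : 0 < r₀) (hκ : 0 < κ) :
    ∃ r, 0 < r ∧ r ≤ r₀ ∧ c * r ^ p ≤ κ := by
  have hlim : Filter.Tendsto (fun r : ℝ => c * r ^ p) (𝓝[>] 0) (𝓝 0) := by
    have hcont : Continuous fun r : ℝ => c * r ^ p := by fun_prop (disch := exact hp.le)
    simpa [Real.zero_rpow hp.ne'] using (hcont.tendsto 0).mono_left nhdsWithin_le_nhds
  obtain ⟨r, hrκ, hr⟩ := ((hlim.eventually (ge_mem_nhds hκ)).and (Ioc_mem_nhdsGT hr₀)).exists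
  exact ⟨r, hr.1, hr.2, hrκ⟩

end Absorption

theorem continuousOn_gradSq {u : ℝ² → ℝ} {Ω : Set ℝ²} (hΩ : IsOpen Ω) (hu : ContDiffOn ℝ 1 u Ω) :
    ContinuousOn (gradSq u) Ω := by
  have hd := hu.continuousOn_fderiv_of_isOpen hΩ le_rfl
  unfold gradSq pd
  fun_prop

theorem norm_fderiv_sq_le_gradSq (u : ℝ² → ℝ) (x : ℝ²) : ‖fderiv ℝ u x‖ ^ 2 ≤ gradSq u x := by
  refine Real.le_sqrt (norm_nonneg _) (gradSq_nonneg u x) |>.1 ?_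
  refine ContinuousLinearMap.opNorm_le_bound _ (Real.sqrt_nonneg _) fun v => ?_
  rw [Real.norm_eq_abs, ← Real.sqrt_sq (norm_nonneg v), ← Real.sqrt_mul (gradSq_nonneg u x)]
  refine Real.abs_le_sqrt ?_
  rw [fderiv_apply_eq_pd, EuclideanSpace.real_norm_sq_eq, Fin.sum_univ_two, gradSq]
  nlinarith [sq_nonneg (v 0 * pd 1 u x - v 1 * pd 0 u x)]

theorem closedBall_subset_of_lt_infDist_frontier {E : Type*} [SeminormedAddCommGroup E]
    [NormedSpace ℝ E] {Ω : Set E} (hΩ : IsOpen Ω) {x : E} (hx : x ∈ Ω) {r : ℝ} (hr : 0 ≤ r)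
    (hxr : r < Metric.infDist x (frontier Ω)) : Metric.closedBall x r ⊆ Ω := by
  refine (convex_closedBall x r).isPreconnected.subset_of_closure_inter_subset hΩ
    ⟨x, Metric.mem_closedBall_self hr, hx⟩ fun z ⟨hz, hzr⟩ => ?_
  by_contra hzΩ
  have hzf : z ∈ frontier Ω := hΩ.frontier_eq ▸ ⟨hz, hzΩ⟩
  linarith [Metric.infDist_le_dist_of_mem hzf (x := x), dist_comm x z, Metric.mem_closedBall.1 hzr]

theorem exists_gradSq_le_mul_sq {l L s : ℝ} (hl : 0 < l) (hl1 : l ≤ 1) (hL : 1 ≤ L) (hs : 0 < s) :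
    ∃ C > 0, ∀ {a u : ℝ² → ℝ} {Ω : Set ℝ²} {b ε N : ℝ} {x : ℝ²}, IsOpen Ω →
      ContDiffOn ℝ 3 u Ω → ContDiffOn ℝ 2 a Ω → 1 < b → ε < (b - 1) / 2 →
      IsConductivitySolutionOn a u l L Ω → IsRotationalOffCircles a b ε Ω →
      (∀ y ∈ Ω, |u y| ≤ N) → Metric.closedBall x s ⊆ Ω → gradSq u x ≤ C * N ^ 2 := by
  have hL0 : 0 < L := by linarith
  have hgrad := gradConst_pos (m := 1 / 4) (M := 9) hl hL0 (by norm_num) (by norm_num)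
  have henergy := energyConst_pos hl hL0
  obtain ⟨M, hM⟩ := exists_deriv_smoothTransition_sq_le
  have hM0 : 0 ≤ M := (sq_nonneg _).trans (hM 0)
  set c := gradConst l L (1 / 4) 9 * (4096 * M)
  obtain ⟨r, hr, hr₀, hc⟩ := exists_pos_le_mul_rpow_le c (p := 2 / 3) (r₀ := min (1 / 100) (s / 2))
    (κ := 1 / 8) (by norm_num) (by positivity) (by norm_num)
  refine ⟨2 * (gradConst l L (1 / 4) 9 * energyConst l L) / r ^ 2, by positivity, ?_⟩
  intro a u Ω b ε N x hΩ hu ha hb hε h hrot huN hsub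
  have hN : 0 ≤ N := (abs_nonneg _).trans (huN x (hsub (Metric.mem_closedBall_self hs.le)))
  have key {N'} (hN' : N < N') :
      gradSq u x ≤ 2 * (gradConst l L (1 / 4) 9 * energyConst l L * N' ^ 2) / r ^ 2 := by
    refine le_of_forall_le_add_mul_rpow (by positivity) (by positivity) (by norm_num) hr
      (hr₀.trans (min_le_right _ _)) hc
      ((continuousOn_gradSq hΩ (hu.of_le (by norm_num))).mono hsub)
      (fun z _ => gradSq_nonneg u z) fun y R G hR hRr hball hG => ?_
    refine (gradSq_le_of_contDiffOn hΩ hu ha hM hR ((hRr.trans hr₀).trans (min_le_left _ _))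
      (hball.trans hsub) hl hl1 hL (hN.trans_lt hN') hb hε h hrot
      (fun y hy => (huN y hy).trans hN'.le) hG).trans_eq ?_
    ring
  have hcont : Continuous fun N' =>
      2 * (gradConst l L (1 / 4) 9 * energyConst l L * N' ^ 2) / r ^ 2 := by fun_prop
  calc gradSq u x ≤ 2 * (gradConst l L (1 / 4) 9 * energyConst l L * N ^ 2) / r ^ 2 :=
        ge_of_tendsto ((hcont.tendsto N).mono_left (nhdsWithin_le_nhds (s := Ioi N)))
          (Filter.eventually_of_mem self_mem_nhdsWithin fun _ => key)
    _ = _ := by ring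

/-! ### The maximum principle -/

theorem deriv_deriv_nonpos_of_isLocalMax {h : ℝ → ℝ} {t : ℝ} (hc : ContinuousAt h t)
    (hmax : IsLocalMax h t) : deriv (deriv h) t ≤ 0 := by
  by_contra! hpos
  have hconst : h =ᶠ[𝓝 t] fun _ => h t := by
    filter_upwards [isLocalMin_of_deriv_deriv_pos hpos hmax.deriv_eq_zero hc, hmax]
      with z hmin hmax using le_antisymm hmax hmin
  exact hpos.ne' (by simpa using hconst.deriv.deriv_eq)

section LocalMax

variable {f : ℝ² → ℝ} {p : ℝ²}

theorem pd_eq_zero_of_isLocalMax (hp : IsLocalMax f p) (i : Fin 2) : pd i f p = 0 := by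
  simp [pd, hp.fderiv_eq_zero]

theorem pd_pd_nonpos_of_isLocalMax (hf : ContDiff ℝ 2 f) (hp : IsLocalMax f p) (i : Fin 2) :
    pd i (pd i f) p ≤ 0 := by
  let line : ℝ → ℝ² := fun t => p + t • EuclideanSpace.single i 1
  have hline t : HasDerivAt line (EuclideanSpace.single i 1) t := by
    simpa [line] using ((hasDerivAt_id t).smul_const (EuclideanSpace.single i (1 : ℝ))).const_add p
  have hline0 : line 0 = p := by simp [line]
  have hderiv {g : ℝ² → ℝ} (hg : ContDiff ℝ 1 g) :
      deriv (g ∘ line) = pd i g ∘ line := funext fun t =>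
    ((hg.differentiable one_ne_zero _).hasFDerivAt.comp_hasDerivAt t (hline t)).deriv
  have hmax : IsLocalMax (f ∘ line) 0 :=
    (hline0.symm ▸ hp : IsLocalMax f (line 0)).comp_continuous (hline 0).continuousAt
  have h := deriv_deriv_nonpos_of_isLocalMax
    (hf.continuous.continuousAt.comp (hline 0).continuousAt) hmax
  rwa [hderiv (hf.of_le one_le_two), hderiv (contDiff_pd hf one_add_one_eq_two.le i),
    Function.comp_apply, hline0] at h

end LocalMax

theorem pd_const_mul_exp_mul_apply_zero (s γ : ℝ) (i : Fin 2) :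
    pd i (fun x => s * Real.exp (γ * x 0)) =
      fun x => s * (γ * if i = 0 then 1 else 0) * Real.exp (γ * x 0) := funext fun x => by
  rw [pd_const_mul (by fun_prop), pd_comp (f := fun y : ℝ² => γ * y 0) (by fun_prop) (by fun_prop),
    pd_const_mul (by fun_prop), pd_apply, Real.deriv_exp]
  ring

section MaximumPrinciple

variable {a u : ℝ² → ℝ} {l L m γ s : ℝ} {Ω : Set ℝ²} {p : ℝ²}

/-- `s * Real.exp (γ * x 0)` is a strict subsolution, since the growth rate `γ` dominates the drift
`pd 0 a / a`. -/
theorem not_isLocalMax_add_const_mul_exp (hu : ContDiff ℝ 2 u) (hγ : 0 < γ) (hs : 0 < s)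
    (ha : 0 < a p) (hdrift : -pd 0 a p < γ * a p)
    (h : a p * (pd 0 (pd 0 u) p + pd 1 (pd 1 u) p) +
      (pd 0 a p * pd 0 u p + pd 1 a p * pd 1 u p) = 0) :
    ¬ IsLocalMax (fun x => u x + s * Real.exp (γ * x 0)) p := by
  intro hmax
  set e : ℝ² → ℝ := fun x => s * Real.exp (γ * x 0) with he
  have hec : ContDiff ℝ 2 e := by fun_prop
  have hsum i : pd i (fun x => u x + e x) = fun x => pd i u x + pd i e x := funext fun x =>
    pd_add (hu.differentiable two_ne_zero x) (hec.differentiable two_ne_zero x) i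
  have hgrad i : pd i u p + pd i e p = 0 :=
    (congrFun (hsum i) p).symm.trans (pd_eq_zero_of_isLocalMax hmax i)
  have hhess i : pd i (pd i u) p + pd i (pd i e) p ≤ 0 := by
    refine le_of_eq_of_le ?_ (pd_pd_nonpos_of_isLocalMax (hu.add hec) hmax i)
    rw [hsum, pd_add] <;>
      exact (contDiff_pd ‹_› one_add_one_eq_two.le i).differentiable one_ne_zero p
  simp only [he, pd_const_mul_exp_mul_apply_zero, Fin.forall_fin_two, one_ne_zero, if_true,
    if_false, mul_one, mul_zero, zero_mul, add_zero] at hgrad hhess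
  obtain ⟨hgrad0, hgrad1⟩ := hgrad
  obtain ⟨hhess0, hhess1⟩ := hhess
  have hlap : a p * (pd 0 (pd 0 u) p + pd 1 (pd 1 u) p) ≤
      a p * -(s * γ * γ * Real.exp (γ * p 0)) := mul_le_mul_of_nonneg_left (by linarith) ha.le
  have hpos : 0 < s * γ * Real.exp (γ * p 0) * (γ * a p + pd 0 a p) :=
    mul_pos (by positivity) (by linarith)
  rw [hgrad1, eq_neg_of_add_eq_zero_left hgrad0] at h
  linarith

theorem exists_isLocalMax_add_mul {X : Type*} [TopologicalSpace X] {Ω : Set X} (hΩ : IsOpen Ω)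
    (hc : IsCompact (closure Ω)) {u e : X → ℝ} (hu : ContinuousOn u (closure Ω))
    (he : ContinuousOn e (closure Ω)) {t : ℝ} (hfr : ∀ y ∈ frontier Ω, u y ≤ t) {x : X}
    (hx : x ∈ Ω) (hxt : t < u x) :
    ∃ s > 0, ∃ p ∈ Ω, t < u p ∧ IsLocalMax (fun y => u y + s * e y) p := by
  obtain ⟨E, hE⟩ := hc.exists_bound_of_continuousOn he
  have hxc : x ∈ closure Ω := subset_closure hx
  have hE0 : 0 ≤ E := (norm_nonneg _).trans (hE x hxc)
  set s := (u x - t) / (2 * (E + 1)) with hs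
  have hs0 : 0 < s := div_pos (sub_pos.2 hxt) (by positivity)
  have hsE : u x - t = 2 * s * E + 2 * s := by rw [hs]; field_simp
  obtain ⟨p, hp, hmax⟩ := hc.exists_isMaxOn ⟨x, hxc⟩ (f := fun y => u y + s * e y) (by fun_prop)
  have hse {y} (hy : y ∈ closure Ω) : |s * e y| ≤ s * E := by
    rw [abs_mul, abs_of_pos hs0]; exact mul_le_mul_of_nonneg_left (hE y hy) hs0.le
  have hpt : t < u p := by
    have hle : u x + s * e x ≤ u p + s * e p := hmax hxc
    linarith [(abs_le.1 (hse hxc)).1, (abs_le.1 (hse hp)).2]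
  have hpΩ : p ∈ Ω := by
    by_contra hpΩ
    exact hpt.not_ge (hfr p (hΩ.frontier_eq ▸ ⟨hp, hpΩ⟩))
  exact ⟨s, hs0, p, hpΩ, hpt,
    hmax.isLocalMax (Filter.mem_of_superset (hΩ.mem_nhds hpΩ) subset_closure)⟩

theorem exists_pos_forall_neg_pd_lt_mul (hΩ : IsOpen Ω) (ha : ContDiffOn ℝ 1 a Ω) {K : Set ℝ²}
    (hK : IsCompact K) (hKΩ : K ⊆ Ω) (hl : 0 < l) (hla : ∀ x ∈ K, l ≤ a x) (i : Fin 2) :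
    ∃ γ > 0, ∀ x ∈ K, -pd i a x < γ * a x := by
  have hcont : ContinuousOn (pd i a) Ω :=
    (ha.continuousOn_fderiv_of_isOpen hΩ le_rfl).clm_apply continuousOn_const
  obtain ⟨B, hB⟩ := hK.exists_bound_of_continuousOn (hcont.mono hKΩ)
  refine ⟨(|B| + 1) / l, by positivity, fun x hx => ?_⟩
  calc -pd i a x ≤ |B| := (neg_le_abs _).trans ((hB x hx).trans (le_abs_self B))
    _ < (|B| + 1) / l * l := by rw [div_mul_cancel₀ _ hl.ne']; linarith
    _ ≤ (|B| + 1) / l * a x := by gcongr; exact hla x hx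

theorem IsConductivitySolutionOn.le_of_forall_frontier_le (h : IsConductivitySolutionOn a u l L Ω)
    (hl : 0 < l) (hΩ : IsOpen Ω) (hΩb : Bornology.IsBounded Ω) (hu : ContDiffOn ℝ 2 u Ω)
    (huc : ContinuousOn u (closure Ω)) (ha : ContDiffOn ℝ 1 a Ω) (hfr : ∀ y ∈ frontier Ω, u y ≤ m)
    {x : ℝ²} (hx : x ∈ Ω) : u x ≤ m := by
  by_contra! hmx
  have hcl : IsCompact (closure Ω) := hΩb.isCompact_closure
  set t := (m + u x) / 2 with ht
  set K := closure Ω ∩ u ⁻¹' Ici t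
  have hK : IsCompact K := hcl.of_isClosed_subset
    (huc.preimage_isClosed_of_isClosed isClosed_closure isClosed_Ici) inter_subset_left
  have hKΩ : K ⊆ Ω := fun y ⟨hy, hty⟩ => by
    by_contra hyΩ
    have hle := hfr y (hΩ.frontier_eq ▸ ⟨hy, hyΩ⟩)
    linarith [mem_Ici.1 (mem_preimage.1 hty)]
  obtain ⟨γ, hγ, hdrift⟩ := exists_pos_forall_neg_pd_lt_mul hΩ ha hK hKΩ hl
    (fun y hy => h.le_coeff y (hKΩ hy)) 0
  obtain ⟨s, hs, p, hp, htp, hmax⟩ := exists_isLocalMax_add_mul hΩ hcl huc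
    (e := fun y => Real.exp (γ * y 0)) (by fun_prop) (t := t)
    (fun y hy => (hfr y hy).trans (by linarith)) hx (by linarith)
  obtain ⟨r, hr, hball⟩ := Metric.nhds_basis_closedBall.mem_iff.1 (hΩ.mem_nhds hp)
  obtain ⟨U, hU, hUu⟩ := exists_contDiff_eventuallyEq_of_mem_closedBall hΩ hu hr.le hball
  have hpr : p ∈ Metric.closedBall p r := Metric.mem_closedBall_self hr.le
  have hUp := hUu p hpr
  have hsol := (h.mono hball).congr (fun _ _ => .rfl) hUu
  refine not_isLocalMax_add_const_mul_exp hU hγ hs (hl.trans_le (h.le_coeff p hp))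
    (hdrift p ⟨subset_closure hp, htp.le⟩) (hsol.div_eq_zero p hpr) ?_
  exact (hUp.add .rfl).isLocalMax_iff.2 hmax

theorem IsConductivitySolutionOn.neg (h : IsConductivitySolutionOn a u l L Ω) :
    IsConductivitySolutionOn a (fun x => -u x) l L Ω where
  le_coeff := h.le_coeff
  coeff_le := h.coeff_le
  div_eq_zero x hx := by
    have hneg (f : ℝ² → ℝ) (i : Fin 2) : pd i (fun y => -f y) = fun y => -pd i f y :=
      funext fun y => by simp [pd, fderiv_fun_neg]
    simp only [hneg]
    linear_combination -h.div_eq_zero x hx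

theorem IsConductivitySolutionOn.abs_le_of_forall_frontier (h : IsConductivitySolutionOn a u l L Ω)
    (hl : 0 < l) (hΩ : IsOpen Ω) (hΩb : Bornology.IsBounded Ω) (hu : ContDiffOn ℝ 2 u Ω)
    (huc : ContinuousOn u (closure Ω)) (ha : ContDiffOn ℝ 1 a Ω)
    (hfr : ∀ y ∈ frontier Ω, |u y| ≤ m) {x : ℝ²} (hx : x ∈ Ω) : |u x| ≤ m :=
  abs_le'.2 ⟨h.le_of_forall_frontier_le hl hΩ hΩb hu huc ha
      (fun y hy => (abs_le'.1 (hfr y hy)).1) hx,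
    h.neg.le_of_forall_frontier_le hl hΩ hΩb hu.neg huc.neg ha
      (fun y hy => (abs_le'.1 (hfr y hy)).2) hx⟩

end MaximumPrinciple

/-! ### The smoothed conductivity of two disks -/

theorem exists_polarPt_eq (c x : ℝ²) : ∃ ρ θ, polarPt c ρ θ = x := by
  let z : ℂ := ⟨x 0 - c 0, x 1 - c 1⟩
  refine ⟨‖z‖, z.arg, ?_⟩
  ext i
  fin_cases i <;> simp [polarPt, Complex.norm_mul_cos_arg, Complex.norm_mul_sin_arg, z]

theorem fieldDeriv_rotField_eq_zero_of_eventually_eq {a : ℝ² → ℝ} {c x : ℝ²}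
    (ha : DifferentiableAt ℝ a x) (h : ∀ᶠ y in 𝓝 x, dist y c = dist x c → a y = a x) :
    fieldDeriv (rotField c) a x = 0 := by
  obtain ⟨ρ, θ, rfl⟩ := exists_polarPt_eq c x
  have hpolar := hasDerivAt_polarPt_angle c ρ θ
  have hconst : (fun t => a (polarPt c ρ t)) =ᶠ[𝓝 θ] fun _ => a (polarPt c ρ θ) := by
    filter_upwards [hpolar.continuousAt.eventually h] with t ht
    exact ht (by rw [dist_polarPt, dist_polarPt])
  have hderiv := (ha.hasFDerivAt.comp_hasDerivAt θ hpolar).unique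
    ((hasDerivAt_const θ _).congr_of_eventuallyEq hconst)
  rw [fderiv_apply_eq_pd] at hderiv
  simpa [fieldDeriv, rotField, polarPt] using hderiv

section TwoCircles

variable {X : Type*} [PseudoMetricSpace X] {c x : X} {ε : ℝ}

theorem eventually_dist_lt_iff {r : ℝ} (h : dist x c ≠ r) :
    ∀ᶠ y in 𝓝 x, (dist y c < r ↔ dist x c < r) := by
  have hcont : ContinuousAt (fun y => dist y c) x := by fun_prop
  rcases h.lt_or_gt with h | h
  · filter_upwards [hcont.eventually_lt_const h] with y hy using iff_of_true hy h
  · filter_upwards [hcont.eventually_const_lt h] with y hy using iff_of_false hy.not_gt h.not_gt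

theorem eventually_eq_of_dist_eq {Ω : Set X} {d : X} {α : Type*} {a a₀ : X → α} (hΩ : Ω ∈ 𝓝 x)
    (hε : 0 ≤ ε) (ha₀ : ∀ y z, (dist y c < 1 ↔ dist z c < 1) → (dist y d < 1 ↔ dist z d < 1) →
      a₀ y = a₀ z)
    (hout : ∀ y ∈ Ω, ε ≤ |dist y c - 1| → ε ≤ |dist y d - 1| → a y = a₀ y)
    (hrad : ∃ g : ℝ → α, ∀ y ∈ Ω, |dist y c - 1| < ε → a y = g (dist y c))
    (hx : ε < |dist x d - 1|) : ∀ᶠ y in 𝓝 x, dist y c = dist x c → a y = a x := by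
  obtain ⟨g, hg⟩ := hrad
  have hcont : ContinuousAt (fun y => |dist y d - 1|) x := by fun_prop
  have hne : dist x d ≠ 1 := fun h => by simp [h, hε.not_gt] at hx
  have hxΩ : x ∈ Ω := mem_of_mem_nhds hΩ
  filter_upwards [hΩ, hcont.eventually_const_lt hx, eventually_dist_lt_iff hne]
    with y hyΩ hyε hyd hyx
  rcases lt_or_ge |dist x c - 1| ε with hnear | hfar
  · rw [hg x hxΩ hnear, hg y hyΩ (hyx ▸ hnear), hyx]
  · rw [hout x hxΩ hfar hx.le, hout y hyΩ (hyx ▸ hfar) hyε.le]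
    exact ha₀ y x (hyx ▸ Iff.rfl) hyd

end TwoCircles

theorem ctr_eq (δ : ℝ) : ctr δ = !₂[0, -2 * (1 + δ)] := by
  ext i
  fin_cases i
  · simp [ctr]
  · simp [ctr]; ring

theorem aFun_congr {δ κp κm : ℝ} {x y : ℝ²} (h₀ : dist x 0 < 1 ↔ dist y 0 < 1)
    (h₁ : dist x (ctr δ) < 1 ↔ dist y (ctr δ) < 1) : aFun δ κp κm x = aFun δ κp κm y := by
  simp only [aFun, Bp, Bm, Metric.mem_ball, h₀, h₁]

theorem isRotationalOffCircles_of_eq_aFun {Ω : Set ℝ²} {a : ℝ² → ℝ} {δ ε κp κm : ℝ}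
    (hΩ : IsOpen Ω) (ha : ContDiffOn ℝ 1 a Ω) (hε : 0 ≤ ε)
    (hout : ∀ x ∈ Ω, ε ≤ |‖x‖ - 1| → ε ≤ |dist x (ctr δ) - 1| → a x = aFun δ κp κm x)
    (hupper : ∃ g : ℝ → ℝ, ∀ x ∈ Ω, |‖x‖ - 1| < ε → a x = g ‖x‖)
    (hlower : ∃ g : ℝ → ℝ, ∀ x ∈ Ω, |dist x (ctr δ) - 1| < ε → a x = g (dist x (ctr δ))) :
    IsRotationalOffCircles a (1 + δ) ε Ω := by
  have hdiff x (hx : x ∈ Ω) : DifferentiableAt ℝ a x :=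
    (ha.contDiffAt (hΩ.mem_nhds hx)).differentiableAt one_ne_zero
  constructor <;> rw [← ctr_eq] <;> simp only [← dist_zero_right] at *
  · exact fun x hx hfar => fieldDeriv_rotField_eq_zero_of_eventually_eq (hdiff x hx)
      (eventually_eq_of_dist_eq (hΩ.mem_nhds hx) hε (fun _ _ => aFun_congr) hout hupper hfar)
  · exact fun x hx hfar => fieldDeriv_rotField_eq_zero_of_eventually_eq (hdiff x hx)
      (eventually_eq_of_dist_eq (hΩ.mem_nhds hx) hε (fun _ _ h₁ h₀ => aFun_congr h₀ h₁)
        (fun y hy h₁ h₀ => hout y hy h₀ h₁) hlower hfar)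

theorem abs_le_bdryNorm {Ω : Set ℝ²} {u φ : ℝ² → ℝ} (hΩb : Bornology.IsBounded Ω)
    (huc : ContinuousOn u (closure Ω)) (huφ : EqOn u φ (frontier Ω)) {y : ℝ²}
    (hy : y ∈ frontier Ω) : |u y| ≤ bdryNorm Ω φ := by
  have hcompact : IsCompact (frontier Ω) :=
    hΩb.isCompact_closure.of_isClosed_subset isClosed_frontier frontier_subset_closure
  have hcont : ContinuousOn (fun y => |φ y|) (frontier Ω) :=
    ((huc.mono frontier_subset_closure).congr huφ.symm).abs
  rw [huφ hy]
  exact le_csSup (hcompact.bddAbove_image hcont) (mem_image_of_mem _ hy)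

theorem stmt1_general {μ κp κm : ℝ} (hμ : 0 < μ) (hκp : 0 < κp) (hκm : 0 < κm) :
    ∃ C > 0, ∀ Ω : Set ℝ², IsOpen Ω → Bornology.IsBounded Ω →
      ∀ δ : ℝ, ∀ ε ∈ Ioo 0 (δ / 2), ∀ φ aε uε : ℝ² → ℝ, ContDiffOn ℝ 2 aε Ω →
        (∀ x ∈ Ω, min 1 (min κp κm) ≤ aε x ∧ aε x ≤ max 1 (max κp κm)) →
        (∀ x ∈ Ω, ε ≤ |‖x‖ - 1| → ε ≤ |dist x (ctr δ) - 1| → aε x = aFun δ κp κm x) →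
        (∃ g : ℝ → ℝ, ∀ x ∈ Ω, |‖x‖ - 1| < ε → aε x = g ‖x‖) →
        (∃ g : ℝ → ℝ, ∀ x ∈ Ω, |dist x (ctr δ) - 1| < ε → aε x = g (dist x (ctr δ))) →
        ContDiffOn ℝ 3 uε Ω → ContinuousOn uε (closure Ω) → EqOn uε φ (frontier Ω) →
        (∀ x ∈ Ω, aε x * (pd 0 (pd 0 uε) x + pd 1 (pd 1 uε) x)
          + (pd 0 aε x * pd 0 uε x + pd 1 aε x * pd 1 uε x) = 0) →
        ∀ x ∈ innerReg Ω μ, ‖fderiv ℝ uε x‖ ≤ C * bdryNorm Ω φ := by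
  have hl : 0 < min 1 (min κp κm) := by positivity
  obtain ⟨C, hC, hgrad⟩ := exists_gradSq_le_mul_sq hl (min_le_left 1 _)
    (le_max_left 1 (max κp κm)) (half_pos hμ)
  refine ⟨√C, Real.sqrt_pos.2 hC, ?_⟩
  intro Ω hΩ hΩb δ ε hε φ aε uε ha hbound hout hupper hlower hu huc huφ hdiv x ⟨hxΩ, hxμ⟩
  have ha1 : ContDiffOn ℝ 1 aε Ω := ha.of_le one_le_two
  have hsol : IsConductivitySolutionOn aε uε _ _ Ω :=
    ⟨fun y hy => (hbound y hy).1, fun y hy => (hbound y hy).2, hdiv⟩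
  have hrot : IsRotationalOffCircles aε (1 + δ) ε Ω :=
    isRotationalOffCircles_of_eq_aFun hΩ ha1 hε.1.le hout hupper hlower
  have hmax y (hy : y ∈ Ω) : |uε y| ≤ bdryNorm Ω φ :=
    hsol.abs_le_of_forall_frontier hl hΩ hΩb (hu.of_le (by norm_num)) huc ha1
      (fun z hz => abs_le_bdryNorm hΩb huc huφ hz) hy
  have hball : Metric.closedBall x (μ / 2) ⊆ Ω :=
    closedBall_subset_of_lt_infDist_frontier hΩ hxΩ (half_pos hμ).le (by linarith)
  have hN : 0 ≤ bdryNorm Ω φ := (abs_nonneg _).trans (hmax x hxΩ)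
  refine abs_le_of_sq_le_sq' ?_ (by positivity) |>.2
  calc ‖fderiv ℝ uε x‖ ^ 2 ≤ gradSq uε x := norm_fderiv_sq_le_gradSq uε x
    _ ≤ C * bdryNorm Ω φ ^ 2 :=
        hgrad hΩ hu ha (by linarith [hε.1, hε.2]) (by linarith [hε.2]) hsol hrot hmax hball
    _ = (√C * bdryNorm Ω φ) ^ 2 := by rw [mul_pow, Real.sq_sqrt hC.le]

/-- Gradient bound for the smooth approximation: there is a constant `C` depending only
on `Ω, μ, δ₀, κ⁺, κ⁻` (independent of `δ ∈ (0,δ₀)` and `ε ∈ (0,δ/2)`) such that the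
smooth solution `u_ε` of `div(a_ε ∇u_ε)=0` with boundary value `φ` satisfies
`sup_{Ω^μ} |∇u_ε| ≤ C ‖φ‖_{L^∞(∂Ω)}`. -/
theorem stmt1 (Ω : Set (EuclideanSpace ℝ (Fin 2)))
    (hΩo : IsOpen Ω) (hΩb : Bornology.IsBounded Ω) (hΩs : SmoothBoundary Ω)
    (μ δ₀ κp κm : ℝ) (hμ : μ ∈ Ioo (0:ℝ) 1) (hδ₀ : 0 < δ₀)
    (hκp : 0 < κp) (hκm : 0 < κm) :
    ∃ C > 0, ∀ δ ∈ Ioo 0 δ₀, ∀ ε ∈ Ioo 0 (δ / 2),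
      closure Bp ∪ closure (Bm δ) ⊆ innerReg Ω (2 * μ) →
      ∀ φ : EuclideanSpace ℝ (Fin 2) → ℝ, ContDiff ℝ (⊤ : ℕ∞) φ →
      ∀ aε : EuclideanSpace ℝ (Fin 2) → ℝ,
        ContDiffOn ℝ (⊤ : ℕ∞) aε Ω →
        (∀ x ∈ Ω, min 1 (min κp κm) ≤ aε x ∧ aε x ≤ max 1 (max κp κm)) →
        -- `aε = a` outside the `ε`-neighborhoods of `∂B⁺` and `∂B⁻`
        (∀ x ∈ Ω, ε ≤ |‖x‖ - 1| → ε ≤ |dist x (ctr δ) - 1| → aε x = aFun δ κp κm x) →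
        -- near `∂B⁺`, `aε` is radial, nonincreasing if `κ⁺ > 1`, nondecreasing if `κ⁺ < 1`
        (∃ g : ℝ → ℝ, (1 < κp → Antitone g) ∧ (κp < 1 → Monotone g) ∧
          ∀ x ∈ Ω, |‖x‖ - 1| < ε → aε x = g ‖x‖) →
        -- similarly near `∂B⁻`
        (∃ g : ℝ → ℝ, (1 < κm → Antitone g) ∧ (κm < 1 → Monotone g) ∧
          ∀ x ∈ Ω, |dist x (ctr δ) - 1| < ε → aε x = g (dist x (ctr δ))) →
      ∀ uε : EuclideanSpace ℝ (Fin 2) → ℝ,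
        ContDiffOn ℝ (⊤ : ℕ∞) uε Ω →
        ContinuousOn uε (closure Ω) →
        EqOn uε φ (frontier Ω) →
        (∀ x ∈ Ω, aε x * (pd 0 (pd 0 uε) x + pd 1 (pd 1 uε) x)
          + (pd 0 aε x * pd 0 uε x + pd 1 aε x * pd 1 uε x) = 0) →
        ∀ x ∈ innerReg Ω μ, ‖fderiv ℝ uε x‖ ≤ C * bdryNorm Ω φ := by
  obtain ⟨C, hC, h⟩ := stmt1_general hμ.1 hκp hκm
  exact ⟨C, hC, fun δ _ ε hε _ φ _ a ha hbound hout ⟨g, _, _, hg⟩ ⟨g', _, _, hg'⟩ u hu =>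
    h Ω hΩo hΩb δ ε hε φ a u (contDiffOn_infty.1 ha 2) hbound hout ⟨g, hg⟩ ⟨g', hg'⟩
      (contDiffOn_infty.1 hu 3)⟩
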